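/- arXiv:2106.14044 — 2 statements merged into one kernel-verified Lean document; each statement's English description precedes it below -/
import Mathlib

section
/- Let p_i, p_j, p_k be distinct odd primes and M = p_i^2 p_j^2 p_k^2. Suppose A, B ⊆ ℤ_M satisfy A ⊕ B = ℤ_M and |A| = |B| = p_i p_j p_k. Then both A and B satisfy the Coven–Meyerowitz condition (T2). -/
open Polynomial

/-- The mask polynomial `A(X) = Σ_{a ∈ A} X^a` of a finite subset of `ZMod M`,
using the representatives in `{0, …, M-1}`. -/
noncomputable def maskPoly (M : ℕ) (A : Finset (ZMod M)) : Polynomial ℤ :=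
  ∑ a ∈ A, X ^ a.val

/-- `Φ_s | A` : the `s`-th cyclotomic polynomial divides the mask polynomial of `A` in `ℤ[X]`. -/
def cycDvd (M s : ℕ) (A : Finset (ZMod M)) : Prop :=
  cyclotomic s ℤ ∣ maskPoly M A

/-- `A ⊕ B = ℤ_M` : every element of `ℤ_M` has a unique representation `a + b`
with `a ∈ A` and `b ∈ B`. -/
def IsTiling (M : ℕ) (A B : Set (ZMod M)) : Prop :=
  ∀ z : ZMod M, ∃! ab : ZMod M × ZMod M, ab.1 ∈ A ∧ ab.2 ∈ B ∧ ab.1 + ab.2 = z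

/-- The Coven–Meyerowitz property (T2): whenever `s_1, …, s_m` are prime powers dividing `M`,
powers of pairwise distinct primes, with `Φ_{s_t} | A` for each `t`, then `Φ_{s_1 ⋯ s_m} | A`. -/
def SatisfiesT2 (M : ℕ) (A : Finset (ZMod M)) : Prop :=
  ∀ (P : Finset ℕ) (e : ℕ → ℕ), P.Nonempty →
    (∀ p ∈ P, p.Prime ∧ 1 ≤ e p ∧ p ^ e p ∣ M ∧ cycDvd M (p ^ e p) A) →
    cycDvd M (∏ p ∈ P, p ^ e p) A

/-- The `D`-grid through `x` in `ZMod M` : `Λ(x, D) = {y : D ∣ y - x}`. -/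
def gridSet (M : ℕ) (x : ZMod M) (D : ℕ) : Set (ZMod M) :=
  {y : ZMod M | (D : ZMod M) ∣ (y - x)}

/-- `S` is fibered in the `p` direction on scale `M`: every element of `S` has its whole
fiber `Λ(s, M/p)` contained in `S`. -/
def Fibered (M p : ℕ) (S : Set (ZMod M)) : Prop :=
  ∀ s ∈ S, gridSet M s (M / p) ⊆ S

/-- `Div_N(S)` : the set of values `(s - s', N) = gcd(s - s', N)` for `s, s' ∈ S`. -/
def DivSet (M N : ℕ) (S : Set (ZMod M)) : Set ℕ :=
  {m : ℕ | ∃ s ∈ S, ∃ s' ∈ S, Nat.gcd (s - s').val N = m}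

/-!
By Sands's theorem, differences with the same gcd with `M` cannot occur in both tiles. Hence in one
of the tiles, say `A`, any two elements agree modulo at least one of the three primes.

Write `M = p ^ 2 * N`. If the class of `a + b` modulo `N` determines `a` modulo `p`, or if together
with the class modulo `p` it determines `b` modulo `p ^ 2`, then the slabs of `A` (one class modulo
`p ^ 2` over each class modulo `p`) and the residue classes of `B` modulo `p` tile modulo `N`. The
two-prime case of the theorem applies to these smaller tilings, and (T2) lifts back to `A` and `B`.

If the first alternative fails for all three primes, `A` meets every residue class modulo each
prime and is contained in a cross: for some center `c`, each element of `A` agrees with `c` modulo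
at least two of the primes. Counting elements on the arms of the cross shows that `Φ_p`, `Φ_q` and
`Φ_r` divide `B` while `Φ_{p²}`, `Φ_{q²}` and `Φ_{r²}` divide `A`, and that at most one of
`Φ_{pq}`, `Φ_{pr}` and `Φ_{qr}` divides `A`. So two of them divide `B`, say `Φ_{pr}` and `Φ_{qr}`.
Then `B` is equidistributed modulo `p * r` and modulo `q * r`, while two arms of `A` contain a
difference divisible by `r` but not by `p`, `q` or `r ^ 2`. Such differences are excluded from
`B`, and counting gives that `b` modulo `r` determines `b` modulo `r ^ 2`, which is the second
alternative for `r`.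
-/

section GroupTilings

variable {α β G : Type*} [AddCommGroup G] {A : Finset α} {B : Finset β} {f : α → G} {g : β → G}

/-- The families `f` on `A` and `g` on `B` form a direct sum decomposition of `G`: each element
of `G` is `f a + g b` for exactly one pair `(a, b)`. The sets are indexed rather than taken inside
`G` so that the tiles can be multiplied by integers while the index sets stay fixed. -/
def Tiles (A : Finset α) (B : Finset β) (f : α → G) (g : β → G) : Prop :=
  Set.BijOn (fun x : α × β => f x.1 + g x.2) (A ×ˢ B) Set.univ

namespace Tiles

lemma card_mul_card (h : Tiles A B f g) : A.card * B.card = Nat.card G := by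
  rw [← Set.ncard_univ, ← h.image_eq, h.injOn.ncard_image, ← Finset.coe_product,
    Set.ncard_coe_finset, Finset.card_product]

lemma finite (h : Tiles A B f g) : Finite G :=
  Set.finite_univ_iff.1 (h.image_eq ▸ (A.finite_toSet.prod B.finite_toSet).image _)

lemma of_injOn [Finite G] (hinj : Set.InjOn (fun x : α × β => f x.1 + g x.2) (A ×ˢ B))
    (hcard : Nat.card G ≤ A.card * B.card) : Tiles A B f g := by
  cases nonempty_fintype G
  refine ⟨Set.mapsTo_univ _ _, hinj, ?_⟩
  rw [← Finset.coe_product] at hinj ⊢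
  rw [← Finset.coe_univ]
  refine Finset.surjOn_of_injOn_of_card_le _ (by simp) hinj ?_
  rwa [Finset.card_product, Finset.card_univ, ← Nat.card_eq_fintype_card]

lemma of_exists [Finite G] (hsurj : ∀ z, ∃ a ∈ A, ∃ b ∈ B, f a + g b = z)
    (hcard : A.card * B.card ≤ Nat.card G) : Tiles A B f g := by
  cases nonempty_fintype G
  have hsurjOn : Set.SurjOn (fun x : α × β => f x.1 + g x.2) (A ×ˢ B) Set.univ := by
    intro z _
    obtain ⟨a, ha, b, hb, hab⟩ := hsurj z
    exact ⟨(a, b), ⟨ha, hb⟩, hab⟩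
  refine ⟨Set.mapsTo_univ _ _, ?_, hsurjOn⟩
  rw [← Finset.coe_product] at hsurjOn ⊢
  rw [← Finset.coe_univ] at hsurjOn
  refine Finset.injOn_of_surjOn_of_card_le _ (by simp) hsurjOn ?_
  rwa [Finset.card_product, Finset.card_univ, ← Nat.card_eq_fintype_card]

lemma exists_eq (h : Tiles A B f g) (z : G) : ∃ a ∈ A, ∃ b ∈ B, f a + g b = z := by
  obtain ⟨⟨a, b⟩, ⟨ha, hb⟩, hab⟩ := h.surjOn (Set.mem_univ z)
  exact ⟨a, ha, b, hb, hab⟩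

lemma eq_and_eq (h : Tiles A B f g) {a a' : α} {b b' : β} (ha : a ∈ A) (ha' : a' ∈ A)
    (hb : b ∈ B) (hb' : b' ∈ B) (hab : f a + g b = f a' + g b') : a = a' ∧ b = b' :=
  Prod.ext_iff.1 (Set.BijOn.injOn h (x₁ := (a, b)) (x₂ := (a', b')) ⟨ha, hb⟩ ⟨ha', hb'⟩ hab)

lemma symm (h : Tiles A B f g) : Tiles B A g f := by
  refine ⟨Set.mapsTo_univ _ _, fun x hx y hy hxy => ?_, fun z _ => ?_⟩
  · obtain ⟨h₂, h₁⟩ := h.eq_and_eq hx.2 hy.2 hx.1 hy.1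
      (by rw [add_comm, add_comm (f y.2)]; exact hxy)
    exact Prod.ext h₁ h₂
  · obtain ⟨a, ha, b, hb, hab⟩ := h.exists_eq z
    exact ⟨(b, a), ⟨hb, ha⟩, by rw [← hab, add_comm]⟩

end Tiles

/-- The element `∑ a ∈ A, [f a]` of the group algebra `R[G]`. -/
noncomputable def groupMask (R : Type*) [CommSemiring R] (A : Finset α) (f : α → G) :
    AddMonoidAlgebra R G :=
  ∑ a ∈ A, AddMonoidAlgebra.single (f a) 1

section GroupMask

variable {R : Type*} [CommSemiring R]

lemma groupMask_mul_groupMask (A : Finset α) (B : Finset β) (f : α → G) (g : β → G) :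
    groupMask R A f * groupMask R B g = groupMask R (A ×ˢ B) fun x => f x.1 + g x.2 := by
  simp only [groupMask, Finset.sum_mul_sum, AddMonoidAlgebra.single_mul_single, one_mul,
    Finset.sum_product]

lemma Tiles.groupMask_mul [Fintype G] (h : Tiles A B f g) :
    groupMask R A f * groupMask R B g = groupMask R Finset.univ (id : G → G) := by
  rw [groupMask_mul_groupMask]
  refine Finset.sum_nbij _ (fun _ _ => Finset.mem_univ _) ?_ ?_ fun _ _ => rfl
  · simpa only [Finset.coe_product] using h.injOn
  · simpa only [Finset.coe_product, Finset.coe_univ] using h.surjOn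

lemma groupMask_mul_univ [Fintype G] (A : Finset α) (f : α → G) :
    groupMask R A f * groupMask R Finset.univ (id : G → G) =
      A.card • groupMask R Finset.univ (id : G → G) := by
  rw [groupMask, Finset.sum_mul, ← Finset.sum_const]
  refine Finset.sum_congr rfl fun a _ => ?_
  simp only [groupMask, Finset.mul_sum, AddMonoidAlgebra.single_mul_single, one_mul]
  exact Fintype.sum_equiv (Equiv.addLeft (f a)) _ _ fun _ => rfl

lemma groupMask_pow_mul_univ [Fintype G] (A : Finset α) (f : α → G) (n : ℕ) :
    groupMask R A f ^ n * groupMask R Finset.univ (id : G → G) =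
      A.card ^ n • groupMask R Finset.univ (id : G → G) := by
  induction n with
  | zero => simp
  | succ n ih =>
    rw [pow_succ, mul_assoc, groupMask_mul_univ, mul_smul_comm, ih, smul_smul, pow_succ']

lemma groupMask_pow_prime {p : ℕ} [Fact p.Prime] (A : Finset α) (f : α → G) :
    groupMask (ZMod p) A f ^ p = groupMask (ZMod p) A fun a => p • f a := by
  have : CharP (AddMonoidAlgebra (ZMod p) G) p :=
    charP_of_injective_algebraMap (algebraMap (ZMod p) _).injective p
  simp only [groupMask, sum_pow_char, AddMonoidAlgebra.single_pow, one_pow]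

lemma coeff_groupMask {γ : Type*} [DecidableEq γ] (A : Finset α) (f : α → γ) (z : γ) :
    (groupMask R A f).coeff z = (A.filter (f · = z)).card := by
  simp [groupMask, Finsupp.single_apply, Finset.sum_boole]

end GroupMask

namespace Tiles

/-- In the group algebra over `ZMod p` the Frobenius gives
`[p • A] * [B] = [A] ^ (p - 1) * ([A] * [B]) = |A| ^ (p - 1) • [G]`,
all of whose coefficients are non-zero. -/
theorem nsmul_prime (h : Tiles A B f g) {p : ℕ} (hp : p.Prime) (hA : ¬p ∣ A.card) :
    Tiles A B (fun a => p • f a) g := by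
  classical
  have := h.finite
  cases nonempty_fintype G
  have : Fact p.Prime := ⟨hp⟩
  have hmask : groupMask (ZMod p) (A ×ˢ B) (fun x => p • f x.1 + g x.2) =
      A.card ^ (p - 1) • groupMask (ZMod p) Finset.univ (id : G → G) := by
    rw [← groupMask_mul_groupMask A B (fun a => p • f a) g, ← groupMask_pow_prime,
      ← groupMask_pow_mul_univ A f, ← h.groupMask_mul, ← mul_assoc, ← pow_succ,
      Nat.sub_add_cancel hp.one_le]
  refine of_exists (fun z => ?_) h.card_mul_card.le
  by_contra! hz
  have hcoeff := congrArg (fun m => m.coeff z) hmask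
  simp only [AddMonoidAlgebra.coeff_smul, Finsupp.smul_apply, coeff_groupMask] at hcoeff
  rw [Finset.filter_eq_empty_iff.2 (fun x hx => hz x.1 (Finset.mem_product.1 hx).1 x.2
    (Finset.mem_product.1 hx).2)] at hcoeff
  have hzero : ((A.card ^ (p - 1) : ℕ) : ZMod p) = 0 := by
    rw [Finset.card_eq_one.2 ⟨z, by ext; simp⟩] at hcoeff
    simpa only [nsmul_eq_mul, Nat.cast_one, mul_one, Finset.card_empty, Nat.cast_zero]
      using hcoeff.symm
  exact hA (hp.dvd_of_dvd_pow ((ZMod.natCast_eq_zero_iff _ _).1 hzero))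

theorem nsmul_coprime (h : Tiles A B f g) {n : ℕ} (hn : n ≠ 0)
    (hA : n.Coprime A.card) : Tiles A B (fun a => n • f a) g := by
  induction n using induction_on_primes with
  | zero => exact absurd rfl hn
  | one => simpa using h
  | prime_mul p n hp ih =>
    have hpA : ¬p ∣ A.card := hp.coprime_iff_not_dvd.1 hA.coprime_mul_right
    simpa [mul_smul] using
      (ih (right_ne_zero_of_mul hn) hA.coprime_mul_left).nsmul_prime hp hpA

end Tiles

/-- An averaging argument: no part can exceed its share, so each part has exactly its share. -/
lemma tiles_of_injOn_of_sum_card [Finite G] {p : ℕ} (A : Finset α) (B : ℕ → Finset β)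
    (f : α → G) (g : β → G)
    (hinj : ∀ j < p, Set.InjOn (fun x : α × β => f x.1 + g x.2) (A ×ˢ B j))
    (hcard : A.card * ∑ j ∈ Finset.range p, (B j).card = p * Nat.card G) :
    ∀ j < p, Tiles A (B j) f g := by
  cases nonempty_fintype G
  have hle : ∀ j ∈ Finset.range p, A.card * (B j).card ≤ Nat.card G := by
    intro j hj
    have hinj_j := hinj j (Finset.mem_range.1 hj)
    rw [← Finset.coe_product] at hinj_j
    rw [← Finset.card_product, Nat.card_eq_fintype_card]
    exact Finset.card_le_card_of_injOn _ (fun _ _ => Finset.mem_univ _) hinj_j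
  have heq := (Finset.sum_eq_sum_iff_of_le hle).1
    (by rw [← Finset.mul_sum, hcard, Finset.sum_const, Finset.card_range, smul_eq_mul])
  exact fun j hj => Tiles.of_injOn (hinj j hj) (heq j (Finset.mem_range.2 hj)).ge

end GroupTilings

section IntegerTilings

variable {M N p : ℕ} {A B : Finset ℤ} {a a' b b' : ℤ}

/-- Two finite sets of integers form a tiling `A ⊕ B` of `ℤ` modulo `M`. Integers have residues
to several moduli at once, which is what the argument below is about. -/
def TilesMod (M : ℕ) (A B : Finset ℤ) : Prop :=
  Tiles A B (Int.cast : ℤ → ZMod M) (Int.cast : ℤ → ZMod M)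

lemma Tiles.neZero {α β : Type*} {A : Finset α} {B : Finset β} {f : α → ZMod M}
    {g : β → ZMod M} (h : Tiles A B f g) : NeZero M := by
  have := h.finite
  exact ⟨by rw [← Nat.card_zmod M]; exact Nat.card_pos.ne'⟩

lemma intCast_add_eq_iff_modEq :
    (a : ZMod M) + b = a' + b' ↔ a + b ≡ a' + b' [ZMOD M] := by
  rw [← Int.cast_add, ← Int.cast_add, ZMod.intCast_eq_intCast_iff]

namespace TilesMod

lemma symm (h : TilesMod M A B) : TilesMod M B A := Tiles.symm h

lemma card_mul_card (h : TilesMod M A B) : A.card * B.card = M := by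
  rw [Tiles.card_mul_card h, Nat.card_zmod]

lemma neZero (h : TilesMod M A B) : NeZero M := Tiles.neZero h

lemma eq_of_modEq (h : TilesMod M A B) (ha : a ∈ A) (ha' : a' ∈ A) (hb : b ∈ B) (hb' : b' ∈ B)
    (hab : a + b ≡ a' + b' [ZMOD M]) : a = a' ∧ b = b' :=
  Tiles.eq_and_eq h ha ha' hb hb' (intCast_add_eq_iff_modEq.2 hab)

lemma exists_modEq (h : TilesMod M A B) (z : ℤ) : ∃ a ∈ A, ∃ b ∈ B, a + b ≡ z [ZMOD M] := by
  obtain ⟨a, ha, b, hb, hab⟩ := Tiles.exists_eq h (z : ZMod M)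
  exact ⟨a, ha, b, hb, by rwa [← ZMod.intCast_eq_intCast_iff, Int.cast_add]⟩

end TilesMod

lemma Tiles.unit_mul {α β : Type*} {A : Finset α} {B : Finset β} {f : α → ZMod M}
    {g : β → ZMod M} (h : Tiles A B f g) (u : (ZMod M)ˣ) : Tiles A B (fun a => u * f a) g := by
  have hM : A.card * B.card = M := by rw [h.card_mul_card, Nat.card_zmod]
  have := h.neZero
  -- Adding `M` keeps the representative of the unit non-zero when `M = 1`.
  have hu : ((u : ZMod M).val + M).Coprime A.card := by
    refine Nat.Coprime.coprime_dvd_right ⟨_, hM.symm⟩ ?_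
    rw [Nat.coprime_add_self_left]
    exact ZMod.val_coe_unit_coprime u
  simpa using h.nsmul_coprime (by have := NeZero.ne M; omega) hu

lemma natCast_dvd_intCast_iff {d : ℕ} (hd : d ∣ M) (x : ℤ) :
    (d : ZMod M) ∣ x ↔ (d : ℤ) ∣ x := by
  refine ⟨?_, fun h => by simpa using map_dvd (Int.castRingHom (ZMod M)) h⟩
  rintro ⟨y, hy⟩
  obtain ⟨z, rfl⟩ := ZMod.intCast_surjective y
  have hxz : x ≡ d * z [ZMOD M] := by rw [← ZMod.intCast_eq_intCast_iff]; simpa using hy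
  exact Int.modEq_zero_iff_dvd.1 <| (hxz.of_dvd (Int.natCast_dvd_natCast.2 hd)).trans <|
    Int.modEq_zero_iff_dvd.2 (dvd_mul_right _ _)

lemma exists_unit_mul_eq_of_gcd_eq {x y : ℤ} (h : Int.gcd x M = Int.gcd y M) :
    ∃ u : (ZMod M)ˣ, (u : ZMod M) * x = y := by
  have gcd_eq {x : ℤ} {d : ℕ} {u : ZMod M} (hd : d ∣ M) (hu : IsUnit u)
      (hx : (x : ZMod M) = u * d) : Int.gcd x M = d := by
    have hgM : Int.gcd x M ∣ M := by exact_mod_cast Int.gcd_dvd_right x M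
    refine Nat.dvd_antisymm ?_ ?_
    · have hgx := (natCast_dvd_intCast_iff hgM x).2 (Int.gcd_dvd_left x M)
      rw [hx, hu.dvd_mul_left, ← Int.cast_natCast d, natCast_dvd_intCast_iff hgM] at hgx
      exact_mod_cast hgx
    · have hdx : (d : ℤ) ∣ x := by
        rw [← natCast_dvd_intCast_iff hd, hx]
        exact dvd_mul_left _ _
      exact_mod_cast Int.dvd_coe_gcd hdx (by exact_mod_cast hd)
  obtain ⟨d, hd, u, hu, hx⟩ := ZMod.eq_unit_mul_divisor (x : ZMod M)
  obtain ⟨e, he, v, hv, hy⟩ := ZMod.eq_unit_mul_divisor (y : ZMod M)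
  obtain rfl : d = e := by rw [← gcd_eq hd hu hx, ← gcd_eq he hv hy, h]
  refine ⟨hv.unit * hu.unit⁻¹, ?_⟩
  rw [hx, hy, Units.val_mul, IsUnit.unit_spec, mul_assoc, ← mul_assoc _ u, IsUnit.val_inv_mul,
    one_mul]

/-- Sands: after multiplication by a unit the two differences would be opposite, while
multiplication by units preserves tilings. -/
theorem TilesMod.eq_of_gcd_eq (h : TilesMod M A B) (ha : a ∈ A) (ha' : a' ∈ A) (hb : b ∈ B)
    (hb' : b' ∈ B) (hgcd : Int.gcd (a - a') M = Int.gcd (b - b') M) : a = a' ∧ b = b' := by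
  obtain ⟨u, hu⟩ := exists_unit_mul_eq_of_gcd_eq (x := a - a') (y := b' - b)
    (by rw [hgcd, ← neg_sub b b', Int.neg_gcd])
  refine (Tiles.unit_mul h u).eq_and_eq ha ha' hb hb' ?_
  push_cast at hu
  linear_combination hu

lemma gcd_prime_pow_eq_of_dvd_iff (hp : p.Prime) {n : ℕ} {x y : ℤ}
    (h : ∀ k ≤ n, (p : ℤ) ^ k ∣ x ↔ (p : ℤ) ^ k ∣ y) :
    Int.gcd x (p ^ n : ℕ) = Int.gcd y (p ^ n : ℕ) := by
  have gcd_dvd {x y : ℤ} (h : ∀ k ≤ n, (p : ℤ) ^ k ∣ x → (p : ℤ) ^ k ∣ y) :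
      Int.gcd x (p ^ n : ℕ) ∣ Int.gcd y (p ^ n : ℕ) := by
    obtain ⟨k, hk, hgcd⟩ := (Nat.dvd_prime_pow hp).1
      (by exact_mod_cast Int.gcd_dvd_right x (p ^ n : ℕ) : Int.gcd x (p ^ n : ℕ) ∣ p ^ n)
    have hx := Int.gcd_dvd_left x (p ^ n : ℕ)
    refine Int.dvd_gcd ?_ (Int.gcd_dvd_right x _)
    rw [hgcd] at hx ⊢
    exact_mod_cast h k hk (by exact_mod_cast hx)
  exact Nat.dvd_antisymm (gcd_dvd fun k hk => (h k hk).1) (gcd_dvd fun k hk => (h k hk).2)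

lemma gcd_mul_eq_of_coprime {m n : ℕ} (hmn : m.Coprime n) {x y : ℤ}
    (hm : Int.gcd x m = Int.gcd y m) (hn : Int.gcd x n = Int.gcd y n) :
    Int.gcd x (m * n : ℕ) = Int.gcd y (m * n : ℕ) := by
  simp only [Int.gcd, Int.natAbs_natCast] at *
  rw [Nat.Coprime.gcd_mul _ hmn, Nat.Coprime.gcd_mul _ hmn, hm, hn]

lemma TilesMod.eq_of_modEq_iff {n : ℕ} (hp : p.Prime) (hpN : p.Coprime N)
    (h : TilesMod (p ^ n * N) A B) (ha : a ∈ A) (ha' : a' ∈ A) (hb : b ∈ B) (hb' : b' ∈ B)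
    (hN : a + b ≡ a' + b' [ZMOD N])
    (hiff : ∀ k ≤ n, a ≡ a' [ZMOD p ^ k] ↔ b ≡ b' [ZMOD p ^ k]) : a = a' ∧ b = b' := by
  refine h.eq_of_gcd_eq ha ha' hb hb' (gcd_mul_eq_of_coprime (hpN.pow_left n) ?_ ?_)
  · refine gcd_prime_pow_eq_of_dvd_iff hp fun k hk => ?_
    rw [← Int.modEq_iff_dvd, ← Int.modEq_iff_dvd, Int.modEq_comm, hiff k hk, Int.modEq_comm]
  · obtain ⟨t, ht⟩ := hN.dvd
    rw [show a - a' = -(b - b') + -t * N by linear_combination -ht, Int.gcd_add_mul_right_left,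
      Int.neg_gcd]

lemma TilesMod.modEq_or_modEq (hp : p.Prime) (hpN : p.Coprime N) {n : ℕ}
    (h : TilesMod (p ^ n * N) A B) (ha : a ∈ A) (ha' : a' ∈ A) (hb : b ∈ B) (hb' : b' ∈ B)
    (hN : a + b ≡ a' + b' [ZMOD N]) : a ≡ a' [ZMOD p] ∨ b ≡ b' [ZMOD p] := by
  by_contra! hne
  have not_modEq_pow {x y : ℤ} (hxy : ¬x ≡ y [ZMOD p]) {k : ℕ} (hk : k ≠ 0) :
      ¬x ≡ y [ZMOD p ^ k] := fun hpow => hxy (hpow.of_dvd (dvd_pow_self _ hk))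
  obtain ⟨rfl, -⟩ := h.eq_of_modEq_iff hp hpN ha ha' hb hb' hN fun k _ => by
    rcases eq_or_ne k 0 with rfl | hk
    · simp [Int.modEq_one]
    · simp [not_modEq_pow hne.1 hk, not_modEq_pow hne.2 hk]
  exact hne.1 rfl

end IntegerTilings

section SlabReductions

variable {N p : ℕ} {A B : Finset ℤ} {s : ℤ → ℤ}

/-- The elements of `B` congruent to `x` modulo `p`. -/
def residueClass (p : ℕ) (x : ℤ) (B : Finset ℤ) : Finset ℤ :=
  B.filter (· ≡ x [ZMOD p])

/-- `s` chooses a lift modulo `p ^ 2` of every residue class modulo `p`. -/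
structure IsLift (p : ℕ) (s : ℤ → ℤ) : Prop where
  modEq : ∀ t, s t ≡ t [ZMOD p]
  eq_of_modEq : ∀ t t', t ≡ t' [ZMOD p] → s t = s t'

/-- The elements of `A` lying in the residue class modulo `p ^ 2` which `s` chooses in their
residue class modulo `p`. -/
def slab (p : ℕ) (s : ℤ → ℤ) (A : Finset ℤ) : Finset ℤ :=
  A.filter fun a => a ≡ s a [ZMOD p ^ 2]

lemma mem_residueClass {x b : ℤ} : b ∈ residueClass p x B ↔ b ∈ B ∧ b ≡ x [ZMOD p] :=
  Finset.mem_filter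

lemma mem_slab {a : ℤ} : a ∈ slab p s A ↔ a ∈ A ∧ a ≡ s a [ZMOD p ^ 2] :=
  Finset.mem_filter

lemma residueClass_congr {x y : ℤ} (h : x ≡ y [ZMOD p]) (B : Finset ℤ) :
    residueClass p x B = residueClass p y B :=
  Finset.filter_congr fun _ _ => ⟨fun hb => hb.trans h, fun hb => hb.trans h.symm⟩

lemma residueClass_of_forall_nat_lt (hp : p ≠ 0) {P : Finset ℤ → Prop}
    (h : ∀ j < p, P (residueClass p j B)) (x : ℤ) : P (residueClass p x B) := by
  obtain ⟨j, hj⟩ := Int.eq_ofNat_of_zero_le (Int.emod_nonneg x (Nat.cast_ne_zero.2 hp))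
  have hjp : (j : ℤ) < p := hj ▸ Int.emod_lt_of_pos x (by positivity)
  rw [← residueClass_congr (Int.mod_modEq x p), hj]
  exact h j (by exact_mod_cast hjp)

lemma IsLift.add_mul (hs : IsLift p s) (j : ℤ) : IsLift p fun t => s t + p * j where
  modEq t := by simpa [Int.ModEq] using hs.modEq t
  eq_of_modEq t t' h := by rw [hs.eq_of_modEq t t' h]

lemma add_mul_ediv_sub {x c : ℤ} (h : c ≡ x [ZMOD p]) : c + p * ((x - c) / p) = x := by
  rw [Int.mul_ediv_cancel' h.dvd, add_sub_cancel]

lemma IsLift.modEq_add_mul_iff (hs : IsLift p s) (hp : p ≠ 0) (a j : ℤ) :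
    a ≡ s a + p * j [ZMOD p ^ 2] ↔ (a - s a) / p ≡ j [ZMOD p] := by
  have hp' : (p : ℤ) ≠ 0 := by exact_mod_cast hp
  have hdiff : s a + p * j - a = p * (j - (a - s a) / p) := by
    linear_combination add_mul_ediv_sub (hs.modEq a)
  rw [Int.modEq_iff_dvd, Int.modEq_iff_dvd, hdiff, sq, mul_dvd_mul_iff_left hp']

lemma sum_filter_modEq {α E : Type*} [AddCommMonoid E] (hp : p ≠ 0) (S : Finset α) (d : α → ℤ)
    (F : α → E) :
    ∑ j ∈ Finset.range p, ∑ a ∈ S with d a ≡ j [ZMOD p], F a = ∑ a ∈ S, F a := by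
  have hp' : (0 : ℤ) < p := by positivity
  rw [← Finset.sum_fiberwise_of_maps_to (t := Finset.range p) (g := fun a => (d a % p).toNat)]
  · refine Finset.sum_congr rfl fun j hj => Finset.sum_congr (Finset.filter_congr fun a _ => ?_)
      fun _ _ => rfl
    have hj' : (j : ℤ) % p = j :=
      Int.emod_eq_of_lt (by positivity) (by exact_mod_cast Finset.mem_range.1 hj)
    have := Int.emod_nonneg (d a) hp'.ne'
    rw [Int.ModEq, hj']
    omega
  · intro a _
    have := Int.emod_nonneg (d a) hp'.ne'
    have := Int.emod_lt_of_pos (d a) hp'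
    rw [Finset.mem_range]
    omega

lemma sum_residueClass {E : Type*} [AddCommMonoid E] (hp : p ≠ 0) (B : Finset ℤ) (F : ℤ → E) :
    ∑ j ∈ Finset.range p, ∑ b ∈ residueClass p j B, F b = ∑ b ∈ B, F b :=
  sum_filter_modEq hp B id F

lemma IsLift.sum_slab {E : Type*} [AddCommMonoid E] (hs : IsLift p s) (hp : p ≠ 0) (A : Finset ℤ)
    (F : ℤ → E) :
    ∑ j ∈ Finset.range p, ∑ a ∈ slab p (fun t => s t + p * (j : ℤ)) A, F a = ∑ a ∈ A, F a := by
  rw [← sum_filter_modEq hp A (fun a => (a - s a) / p) F]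
  simp only [slab, hs.modEq_add_mul_iff hp]

lemma sum_card_residueClass (hp : p ≠ 0) (B : Finset ℤ) :
    ∑ j ∈ Finset.range p, (residueClass p j B).card = B.card := by
  simpa only [Finset.card_eq_sum_ones] using sum_residueClass hp B fun _ => 1

lemma IsLift.sum_card_slab (hs : IsLift p s) (hp : p ≠ 0) (A : Finset ℤ) :
    ∑ j ∈ Finset.range p, (slab p (fun t => s t + p * (j : ℤ)) A).card = A.card := by
  simpa only [Finset.card_eq_sum_ones] using hs.sum_slab hp A fun _ => 1

/-- Every slab of `A` and every residue class of `B` tile modulo `N`. -/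
def SlabReduction (p N : ℕ) (A B : Finset ℤ) : Prop :=
  ∀ s, IsLift p s → ∀ x, TilesMod N (slab p s A) (residueClass p x B)

/-- The class of `a + b` modulo `N` determines `a` modulo `p`. -/
def DeterminesLeft (p N : ℕ) (A B : Finset ℤ) : Prop :=
  ∀ a ∈ A, ∀ a' ∈ A, ∀ b ∈ B, ∀ b' ∈ B, a + b ≡ a' + b' [ZMOD N] → a ≡ a' [ZMOD p]

/-- The classes of `a + b` modulo `N` and modulo `p` determine `b` modulo `p ^ 2`. -/
def DeterminesRightSq (p N : ℕ) (A B : Finset ℤ) : Prop :=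
  ∀ a ∈ A, ∀ a' ∈ A, ∀ b ∈ B, ∀ b' ∈ B, a + b ≡ a' + b' [ZMOD N] → a + b ≡ a' + b' [ZMOD p] →
    b ≡ b' [ZMOD p ^ 2]

lemma not_dvd_of_mul_eq_mul_prime (hp : p.Prime) (hpN : p.Coprime N) {m n : ℕ} (hm : p ∣ m)
    (h : m * n = N * p) : ¬p ∣ n := by
  intro hn
  have hpp : p * p ∣ N * p := h ▸ mul_dvd_mul hm hn
  exact hp.coprime_iff_not_dvd.1 hpN ((Nat.mul_dvd_mul_iff_right hp.pos).1 hpp)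

/-- Multiplication of the second tile by `p` kills its component in `ZMod p`. -/
lemma Tiles.tilesMod_fiber (hp : p.Prime) (hpN : p.Coprime N) {φ ψ : ℤ → ZMod p}
    (h : Tiles A B (fun a => ((a : ZMod N), φ a)) (fun b => ((b : ZMod N), ψ b)))
    (hA : p ∣ A.card) (j : ZMod p) : TilesMod N (A.filter (φ · = j)) B := by
  have hcard : A.card * B.card = N * p := by
    rw [h.card_mul_card, Nat.card_prod, Nat.card_zmod, Nat.card_zmod]
  have hpB := h.symm.nsmul_prime hp (not_dvd_of_mul_eq_mul_prime hp hpN hA hcard)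
  have hfiber : Tiles B (A.filter (φ · = j)) (fun b => (p : ZMod N) * b) Int.cast := by
    refine ⟨Set.mapsTo_univ _ _, fun x hx y hy hxy => ?_, fun z _ => ?_⟩
    · obtain ⟨hx₁, hx₂, hφx⟩ : x.1 ∈ B ∧ x.2 ∈ A ∧ φ x.2 = j := by simpa using hx
      obtain ⟨hy₁, hy₂, hφy⟩ : y.1 ∈ B ∧ y.2 ∈ A ∧ φ y.2 = j := by simpa using hy
      obtain ⟨h₁, h₂⟩ := hpB.eq_and_eq hx₁ hy₁ hx₂ hy₂
        (Prod.ext (by simpa using hxy) (by simp [hφx, hφy]))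
      exact Prod.ext h₁ h₂
    · obtain ⟨b, hb, a, ha, hab⟩ := hpB.exists_eq (z, j)
      obtain ⟨hz, hφ⟩ : (p : ZMod N) * b + a = z ∧ φ a = j := by simpa using hab
      exact ⟨(b, a), ⟨hb, by simp [ha, hφ]⟩, hz⟩
  have hunit := hfiber.unit_mul (ZMod.unitOfCoprime p hpN)⁻¹
  simp only [← ZMod.coe_unitOfCoprime p hpN, Units.inv_mul_cancel_left] at hunit
  exact TilesMod.symm hunit

lemma modEq_sq_mul (hpN : p.Coprime N) {x y : ℤ} (hp : x ≡ y [ZMOD p ^ 2])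
    (hN : x ≡ y [ZMOD N]) : x ≡ y [ZMOD (p ^ 2 * N : ℕ)] := by
  push_cast
  exact (Int.modEq_and_modEq_iff_modEq_mul (by
    simpa [Int.natAbs_pow] using hpN.pow_left 2)).1 ⟨hp, hN⟩

lemma TilesMod.tiles_residueClass (hp : p.Prime) (hpN : p.Coprime N)
    (h : TilesMod (p ^ 2 * N) A B) (hdet : DeterminesLeft p N A B) (hs : IsLift p s) (x : ℤ) :
    Tiles A (residueClass p x B) (fun a => ((a : ZMod N), (((a - s a) / p : ℤ) : ZMod p)))
      (fun b => ((b : ZMod N), ((b / p : ℤ) : ZMod p))) := by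
  have := h.neZero
  have : NeZero N := ⟨right_ne_zero_of_mul (NeZero.ne (p ^ 2 * N))⟩
  have : NeZero p := ⟨hp.ne_zero⟩
  refine residueClass_of_forall_nat_lt hp.ne_zero (P := fun C => Tiles A C _ _)
    (tiles_of_injOn_of_sum_card A (fun j => residueClass p j B) _ _ (fun j _ => ?_) ?_) x
  · rintro ⟨a, b⟩ ⟨ha, hb⟩ ⟨a', b'⟩ ⟨ha', hb'⟩ hab
    obtain ⟨hbB, hbj⟩ := mem_residueClass.1 hb
    obtain ⟨hbB', hbj'⟩ := mem_residueClass.1 hb'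
    obtain ⟨hN, hdigit⟩ := Prod.ext_iff.1 hab
    replace hN : a + b ≡ a' + b' [ZMOD N] := intCast_add_eq_iff_modEq.1 hN
    replace hdigit := intCast_add_eq_iff_modEq.1 hdigit
    have haa' : s a = s a' := hs.eq_of_modEq _ _ (hdet a ha a' ha' b hbB b' hbB' hN)
    have hbb' : b % p = b' % p := hbj.trans hbj'.symm
    have hsum {a b : ℤ} : a + b = s a + b % p + p * ((a - s a) / p + b / p) := by
      linear_combination -add_mul_ediv_sub (hs.modEq a) - Int.emod_add_mul_ediv b p
    have hsq : a + b ≡ a' + b' [ZMOD p ^ 2] := by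
      rw [hsum (a := a), hsum (a := a'), haa', hbb', sq]
      rw [haa'] at hdigit
      exact hdigit.mul_left'.add_left _
    obtain ⟨rfl, rfl⟩ := h.eq_of_modEq ha ha' hbB hbB' (modEq_sq_mul hpN hsq hN)
    rfl
  · rw [sum_card_residueClass hp.ne_zero, h.card_mul_card, Nat.card_prod, Nat.card_zmod,
      Nat.card_zmod]
    ring

theorem TilesMod.slabReduction_of_determinesLeft (hp : p.Prime) (hpN : p.Coprime N)
    (h : TilesMod (p ^ 2 * N) A B) (hA : p ∣ A.card) (hdet : DeterminesLeft p N A B) :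
    SlabReduction p N A B := by
  intro s hs x
  have hslab : slab p s A = A.filter fun a => (((a - s a) / p : ℤ) : ZMod p) = 0 := by
    refine Finset.filter_congr fun a _ => ?_
    simpa [← ZMod.intCast_eq_intCast_iff] using hs.modEq_add_mul_iff hp.ne_zero a 0
  rw [hslab]
  exact (h.tiles_residueClass hp hpN hdet hs x).tilesMod_fiber hp hpN hA 0

lemma TilesMod.tiles_slab (hp : p.Prime) (hpN : p.Coprime N)
    (h : TilesMod (p ^ 2 * N) A B) (hdet : DeterminesRightSq p N A B) (hs : IsLift p s) :
    Tiles B (slab p s A) (fun b => ((b : ZMod N), (b : ZMod p)))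
      (fun a => ((a : ZMod N), (a : ZMod p))) := by
  have := h.neZero
  have : NeZero N := ⟨right_ne_zero_of_mul (NeZero.ne (p ^ 2 * N))⟩
  have : NeZero p := ⟨hp.ne_zero⟩
  have htiles := tiles_of_injOn_of_sum_card B (fun j => slab p (fun t => s t + p * (j : ℤ)) A)
    (fun b => ((b : ZMod N), (b : ZMod p))) (fun a => ((a : ZMod N), (a : ZMod p)))
    (p := p) (fun j _ => ?_) ?_ 0 hp.pos
  · simpa using htiles
  · have hs_j := hs.add_mul j
    rintro ⟨b, a⟩ ⟨hb, ha⟩ ⟨b', a'⟩ ⟨hb', ha'⟩ hab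
    obtain ⟨haA, has⟩ := mem_slab.1 ha
    obtain ⟨haA', has'⟩ := mem_slab.1 ha'
    obtain ⟨hN, hmod⟩ := Prod.ext_iff.1 hab
    replace hN : a + b ≡ a' + b' [ZMOD N] := by
      simpa only [add_comm] using intCast_add_eq_iff_modEq.1 hN
    replace hmod : a + b ≡ a' + b' [ZMOD p] := by
      simpa only [add_comm] using intCast_add_eq_iff_modEq.1 hmod
    have hbsq := hdet a haA a' haA' b hb b' hb' hN hmod
    have haa' : a ≡ a' [ZMOD p] :=
      (hbsq.of_dvd (dvd_pow_self _ two_ne_zero)).add_right_cancel hmod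
    rw [← hs_j.eq_of_modEq _ _ haa'] at has'
    obtain ⟨rfl, rfl⟩ := h.eq_of_modEq haA haA' hb hb'
      (modEq_sq_mul hpN ((has.trans has'.symm).add hbsq) hN)
    rfl
  · rw [hs.sum_card_slab hp.ne_zero, mul_comm, h.card_mul_card, Nat.card_prod, Nat.card_zmod,
      Nat.card_zmod]
    ring

theorem TilesMod.slabReduction_of_determinesRightSq (hp : p.Prime) (hpN : p.Coprime N)
    (h : TilesMod (p ^ 2 * N) A B) (hB : p ∣ B.card) (hdet : DeterminesRightSq p N A B) :
    SlabReduction p N A B := by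
  intro s hs x
  have hclass : residueClass p x B = B.filter fun b : ℤ => (b : ZMod p) = x :=
    Finset.filter_congr fun b _ => (ZMod.intCast_eq_intCast_iff b x p).symm
  rw [hclass]
  exact ((h.tiles_slab hp hpN hdet hs).tilesMod_fiber hp hpN hB x).symm

end SlabReductions

section ExponentialSums

variable {M n s d l : ℕ} {A B : Finset ℤ} {ζ : ℂ}

lemma zmodChar_intCast [NeZero n] (hζ : ζ ^ n = 1) (a : ℤ) :
    AddChar.zmodChar n hζ (a : ZMod n) = ζ ^ a := by
  have hone : AddChar.zmodChar n hζ 1 = ζ := by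
    simpa using AddChar.zmodChar_apply' hζ 1
  rw [← zsmul_one, AddChar.map_zsmul_eq_zpow, hone]

lemma zpow_eq_zpow_of_modEq (hn : n ≠ 0) (hζ : ζ ^ n = 1) {a b : ℤ} (h : a ≡ b [ZMOD n]) :
    ζ ^ a = ζ ^ b := by
  have : NeZero n := ⟨hn⟩
  rw [← zmodChar_intCast hζ, ← zmodChar_intCast hζ, (ZMod.intCast_eq_intCast_iff a b n).2 h]

/-- The exponential sum of `A` vanishes at the primitive `s`-th roots of unity: the form in which
`Φ_s | A` is used for sets of integers. -/
def Vanishes (s : ℕ) (A : Finset ℤ) : Prop :=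
  ∀ ζ : ℂ, IsPrimitiveRoot ζ s → ∑ a ∈ A, ζ ^ a = 0

/-- The mask polynomial of `A`, with exponents reduced modulo `s`. -/
noncomputable def intMask (s : ℕ) (A : Finset ℤ) : ℤ[X] :=
  ∑ a ∈ A, X ^ (a % s).toNat

lemma eval_one_intMask : (intMask s A).eval 1 = A.card := by
  simp [intMask, eval_finsetSum]

lemma aeval_intMask (hs : s ≠ 0) (hζ : ζ ^ s = 1) : aeval ζ (intMask s A) = ∑ a ∈ A, ζ ^ a := by
  rw [intMask, map_sum]
  refine Finset.sum_congr rfl fun a _ => ?_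
  rw [map_pow, aeval_X, ← zpow_natCast,
    Int.toNat_of_nonneg (Int.emod_nonneg a (by exact_mod_cast hs))]
  exact zpow_eq_zpow_of_modEq hs hζ (Int.mod_modEq a s)

lemma cyclotomic_dvd_intMask_iff_sum_eq_zero (hs : s ≠ 0) (hd : d ∣ s) (hζ : IsPrimitiveRoot ζ d) :
    cyclotomic d ℤ ∣ intMask s A ↔ ∑ a ∈ A, ζ ^ a = 0 := by
  have hd₀ := Nat.pos_of_dvd_of_pos hd (Nat.pos_of_ne_zero hs)
  rw [cyclotomic_eq_minpoly hζ hd₀, ← minpoly.isIntegrallyClosed_dvd_iff (hζ.isIntegral hd₀),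
    aeval_intMask hs ((hζ.pow_eq_one_iff_dvd s).2 hd)]

lemma cyclotomic_dvd_intMask_iff (hs : s ≠ 0) (hd : d ∣ s) :
    cyclotomic d ℤ ∣ intMask s A ↔ Vanishes d A := by
  have hd₀ : d ≠ 0 := ne_zero_of_dvd_ne_zero hs hd
  refine ⟨fun h ζ hζ => (cyclotomic_dvd_intMask_iff_sum_eq_zero hs hd hζ).1 h, fun h => ?_⟩
  have hζ := Complex.isPrimitiveRoot_exp d hd₀
  exact (cyclotomic_dvd_intMask_iff_sum_eq_zero hs hd hζ).2 (h _ hζ)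

lemma vanishes_of_sum_eq_zero (hs : s ≠ 0) (hζ : IsPrimitiveRoot ζ s) (h : ∑ a ∈ A, ζ ^ a = 0) :
    Vanishes s A :=
  (cyclotomic_dvd_intMask_iff hs dvd_rfl).1
    ((cyclotomic_dvd_intMask_iff_sum_eq_zero hs dvd_rfl hζ).2 h)

lemma Tiles.sum_addChar_mul_sum_addChar {α β G R : Type*} [AddCommGroup G] [Fintype G]
    [CommSemiring R] {A : Finset α} {B : Finset β} {f : α → G} {g : β → G} (h : Tiles A B f g)
    (ψ : AddChar G R) : (∑ a ∈ A, ψ (f a)) * ∑ b ∈ B, ψ (g b) = ∑ z, ψ z := by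
  rw [Finset.sum_mul_sum, ← Finset.sum_product']
  exact Finset.sum_nbij (fun x => f x.1 + g x.2) (fun _ _ => Finset.mem_univ _)
    (by simpa using h.injOn) (by simpa using h.surjOn) fun x _ => (ψ.map_add_eq_mul _ _).symm

lemma TilesMod.vanishes_or (h : TilesMod M A B) (hs : s ∣ M) (hs₁ : s ≠ 1) :
    Vanishes s A ∨ Vanishes s B := by
  have := h.neZero
  have hs₀ : s ≠ 0 := ne_zero_of_dvd_ne_zero (NeZero.ne M) hs
  have hζ := Complex.isPrimitiveRoot_exp s hs₀
  generalize Complex.exp _ = ζ at hζ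
  have hζM : ζ ^ M = 1 := (hζ.pow_eq_one_iff_dvd M).2 hs
  have hψ : AddChar.zmodChar M hζM ≠ 1 := by
    rw [AddChar.zmod_char_ne_one_iff, ← Int.cast_one, zmodChar_intCast, zpow_one]
    rintro rfl
    exact hs₁ (hζ.unique IsPrimitiveRoot.one)
  have hmul := Tiles.sum_addChar_mul_sum_addChar h (AddChar.zmodChar M hζM)
  simp only [zmodChar_intCast, AddChar.sum_eq_zero_of_ne_one hψ] at hmul
  exact (mul_eq_zero.1 hmul).imp (vanishes_of_sum_eq_zero hs₀ hζ) (vanishes_of_sum_eq_zero hs₀ hζ)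

lemma prime_pow_card_dvd_card_of_vanishes (hl : l.Prime) {E : Finset ℕ} (hE : ∀ k ∈ E, k ≠ 0)
    (h : ∀ k ∈ E, Vanishes (l ^ k) A) : l ^ E.card ∣ A.card := by
  have hs : l ^ E.sup id ≠ 0 := pow_ne_zero _ hl.ne_zero
  have hprod : ∏ k ∈ E, cyclotomic (l ^ k) ℤ ∣ intMask (l ^ E.sup id) A := by
    refine Finset.prod_dvd_of_isRelPrime (fun j _ k _ hjk => ?_) fun k hk =>
      (cyclotomic_dvd_intMask_iff hs (pow_dvd_pow l (Finset.le_sup (f := id) hk))).2 (h k hk)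
    have hne : cyclotomic (l ^ j) ℤ ≠ cyclotomic (l ^ k) ℤ := fun heq =>
      hjk (Nat.pow_right_injective hl.two_le (cyclotomic_injective heq))
    refine (cyclotomic.irreducible (pow_pos hl.pos j)).isRelPrime_iff_not_dvd.2 fun hdvd => hne ?_
    exact eq_of_monic_of_associated (cyclotomic.monic _ _) (cyclotomic.monic _ _)
      ((cyclotomic.irreducible (pow_pos hl.pos j)).associated_of_dvd
        (cyclotomic.irreducible (pow_pos hl.pos k)) hdvd)
  have heval (k) (hk : k ∈ E) : (cyclotomic (l ^ k) ℤ).eval 1 = l := by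
    have := Fact.mk hl
    obtain ⟨j, rfl⟩ := Nat.exists_eq_succ_of_ne_zero (hE k hk)
    exact eval_one_cyclotomic_prime_pow j
  have := eval_dvd hprod (x := 1)
  rw [eval_prod, Finset.prod_congr rfl heval, Finset.prod_const, eval_one_intMask] at this
  exact_mod_cast this

lemma TilesMod.not_vanishes_of_vanishes (h : TilesMod M A B) (hl : l.Prime) {e : ℕ} (he : e ≠ 0)
    (heM : l ^ e ∣ M) (hA : Vanishes (l ^ e) A) : ¬Vanishes (l ^ e) B := by
  classical
  intro hB
  have := h.neZero
  let E (C : Finset ℤ) := (Finset.Icc 1 (M.factorization l)).filter fun k => Vanishes (l ^ k) C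
  have hE (C : Finset ℤ) : l ^ (E C).card ∣ C.card :=
    prime_pow_card_dvd_card_of_vanishes hl (fun k hk => Nat.one_le_iff_ne_zero.1
      (Finset.mem_Icc.1 (Finset.mem_filter.1 hk).1).1)
      fun k hk => (Finset.mem_filter.1 hk).2
  have hunion : E A ∪ E B = Finset.Icc 1 (M.factorization l) := by
    rw [← Finset.filter_or, Finset.filter_eq_self]
    intro k hk
    obtain ⟨hk₁, hkM⟩ := Finset.mem_Icc.1 hk
    exact h.vanishes_or ((hl.pow_dvd_iff_le_factorization (NeZero.ne M)).2 hkM)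
      (Nat.one_lt_pow (by omega) hl.one_lt).ne'
  have hinter : 0 < (E A ∩ E B).card := Finset.card_pos.2 ⟨e, by
    have := (hl.pow_dvd_iff_le_factorization (NeZero.ne M)).1 heM
    have heIcc := Finset.mem_Icc.2 ⟨Nat.one_le_iff_ne_zero.2 he, this⟩
    exact Finset.mem_inter.2 ⟨Finset.mem_filter.2 ⟨heIcc, hA⟩, Finset.mem_filter.2 ⟨heIcc, hB⟩⟩⟩
  have hle : (E A).card + (E B).card ≤ M.factorization l := by
    rw [← hl.pow_dvd_iff_le_factorization (NeZero.ne M), pow_add, ← h.card_mul_card]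
    exact mul_dvd_mul (hE A) (hE B)
  rw [← Finset.card_union_add_card_inter, hunion, Nat.card_Icc] at hle
  omega

end ExponentialSums

section ResidueClassCounts

variable {n m s s' : ℕ} {A : Finset ℤ}

lemma sum_nthRootsFinset_zpow (hs : s ≠ 0) (k : ℤ) :
    ∑ ζ ∈ nthRootsFinset s (1 : ℂ), ζ ^ k = if (s : ℤ) ∣ k then (s : ℂ) else 0 := by
  have hs' := Nat.pos_of_ne_zero hs
  have hω := Complex.isPrimitiveRoot_exp s hs
  generalize Complex.exp _ = ω at hω
  split_ifs with hk
  · rw [Finset.sum_congr rfl (g := fun _ => 1), Finset.sum_const, hω.card_nthRootsFinset,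
      nsmul_one]
    intro ζ hζ
    simpa using zpow_eq_zpow_of_modEq hs ((mem_nthRootsFinset hs' 1).1 hζ)
      (Int.modEq_zero_iff_dvd.2 hk)
  · have htranslate : ∑ ζ ∈ nthRootsFinset s (1 : ℂ), (ω * ζ) ^ k
        = ∑ ζ ∈ nthRootsFinset s (1 : ℂ), ζ ^ k := by
      have hω₀ := hω.ne_zero hs
      refine Finset.sum_nbij' (ω * ·) (ω⁻¹ * ·) ?_ ?_ ?_ ?_ fun _ _ => rfl
      · exact fun ζ hζ => by simpa using mul_mem_nthRootsFinset (hω.mem_nthRootsFinset hs') hζ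
      · exact fun ζ hζ => by simpa using mul_mem_nthRootsFinset (hω.inv.mem_nthRootsFinset hs') hζ
      all_goals intro ζ _; field_simp
    simp only [mul_zpow, ← Finset.mul_sum] at htranslate
    have hωk : ω ^ k ≠ 1 := fun h => hk ((hω.zpow_eq_one_iff_dvd k).1 h)
    exact (by_contra fun hsum => hωk ((mul_eq_right₀ hsum).1 htranslate))

/-- The contribution of the primitive `d`-th roots of unity to the Fourier expansion at `t` of the
indicator function of `A`. -/
noncomputable def fourierPart (A : Finset ℤ) (t : ℤ) (d : ℕ) : ℂ :=
  ∑ ζ ∈ primitiveRoots d ℂ, ∑ a ∈ A, ζ ^ (a - t)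

lemma Vanishes.fourierPart_eq_zero (h : Vanishes n A) (hn : n ≠ 0) (t : ℤ) :
    fourierPart A t n = 0 := by
  refine Finset.sum_eq_zero fun ζ hζ => ?_
  rw [mem_primitiveRoots (Nat.pos_of_ne_zero hn)] at hζ
  simp only [zpow_sub₀ (hζ.ne_zero hn), ← Finset.sum_div, h ζ hζ, zero_div]

lemma sum_divisors_fourierPart (hs : s ≠ 0) (A : Finset ℤ) (t : ℤ) :
    ∑ d ∈ s.divisors, fourierPart A t d = s * (residueClass s t A).card := by
  classical
  calc ∑ d ∈ s.divisors, fourierPart A t d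
      = ∑ ζ ∈ nthRootsFinset s (1 : ℂ), ∑ a ∈ A, ζ ^ (a - t) := by
        rw [IsPrimitiveRoot.nthRoots_one_eq_biUnion_primitiveRoots, Finset.sum_biUnion
          fun _ _ _ _ hij => IsPrimitiveRoot.disjoint hij]
        rfl
    _ = ∑ a ∈ A, if a ≡ t [ZMOD s] then (s : ℂ) else 0 := by
        rw [Finset.sum_comm]
        simp only [sum_nthRootsFinset_zpow hs, Int.modEq_comm (b := t), Int.modEq_iff_dvd]
    _ = s * (residueClass s t A).card := by
        rw [← Finset.sum_filter, Finset.sum_const, residueClass, nsmul_eq_mul, mul_comm]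

lemma residueClass_one (t : ℤ) (A : Finset ℤ) : residueClass 1 t A = A :=
  Finset.filter_true_of_mem fun _ _ => by simp [Int.modEq_one]

lemma mul_card_residueClass_of_vanishes (hs : s ≠ 0) (hs' : s' ∣ s)
    (h : ∀ d, d ∣ s → ¬d ∣ s' → Vanishes d A) (t : ℤ) :
    s * (residueClass s t A).card = s' * (residueClass s' t A).card := by
  have hs'₀ : s' ≠ 0 := ne_zero_of_dvd_ne_zero hs hs'
  have := Finset.sum_subset (f := fourierPart A t) (Nat.divisors_subset_of_dvd hs hs')
    fun d hd hd' => (h d (Nat.dvd_of_mem_divisors hd) fun hds =>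
      hd' (Nat.mem_divisors.2 ⟨hds, hs'₀⟩)).fourierPart_eq_zero (Nat.pos_of_mem_divisors hd).ne' t
  rw [sum_divisors_fourierPart hs'₀, sum_divisors_fourierPart hs] at this
  exact_mod_cast this.symm

lemma mul_card_residueClass_add_card_of_vanishes (hm : m ≠ 0) (hn : n ≠ 0) (hmn : m.Coprime n)
    (h : ∀ d, d ∣ m * n → ¬d ∣ m → ¬d ∣ n → Vanishes d A) (t : ℤ) :
    m * n * (residueClass (m * n) t A).card + A.card =
      m * (residueClass m t A).card + n * (residueClass n t A).card := by
  have hunion : ∑ d ∈ m.divisors ∪ n.divisors, fourierPart A t d =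
      ∑ d ∈ (m * n).divisors, fourierPart A t d := by
    refine Finset.sum_subset (Finset.union_subset
      (Nat.divisors_subset_of_dvd (mul_ne_zero hm hn) (dvd_mul_right m n))
      (Nat.divisors_subset_of_dvd (mul_ne_zero hm hn) (dvd_mul_left n m))) fun d hd hd' => ?_
    rw [Finset.mem_union, Nat.mem_divisors, Nat.mem_divisors, not_or] at hd'
    exact (h d (Nat.dvd_of_mem_divisors hd) (fun hdm => hd'.1 ⟨hdm, hm⟩)
      fun hdn => hd'.2 ⟨hdn, hn⟩).fourierPart_eq_zero (Nat.pos_of_mem_divisors hd).ne' t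
  have hinter : m.divisors ∩ n.divisors = Nat.divisors 1 := by
    ext d
    simp [hm, hn, ← Nat.dvd_gcd_iff, hmn.gcd_eq_one]
  have := Finset.sum_union_inter (s₁ := m.divisors) (s₂ := n.divisors) (f := fourierPart A t)
  rw [hunion, hinter, sum_divisors_fourierPart (mul_ne_zero hm hn),
    sum_divisors_fourierPart one_ne_zero, sum_divisors_fourierPart hm,
    sum_divisors_fourierPart hn, residueClass_one] at this
  push_cast [one_mul] at this
  exact_mod_cast this

end ResidueClassCounts

section ConstantSums

variable {n m p c : ℕ} {A B : Finset ℤ} {s : ℤ → ℤ}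

lemma sum_zpow_mul_eq_zero_of_periodic (hn : n ≠ 0) {κ : ℂ} (hκ : κ ^ n = 1) {h : ℤ}
    (hκh : κ ^ h ≠ 1) {F : ℤ → ℂ}
    (hF : ∀ t, ∑ a ∈ residueClass n (t + h) A, F a = ∑ a ∈ residueClass n t A, F a) :
    ∑ a ∈ A, κ ^ a * F a = 0 := by
  have : NeZero n := ⟨hn⟩
  set ψ := AddChar.zmodChar n hκ
  let H (j : ZMod n) := ∑ a ∈ A with ((a : ℤ) : ZMod n) = j, F a
  have hH (j : ZMod n) : H (j + h) = H j := by
    obtain ⟨t, rfl⟩ := ZMod.intCast_surjective j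
    simpa only [H, residueClass, ← Int.cast_add, ZMod.intCast_eq_intCast_iff] using hF t
  have hsum : ∑ a ∈ A, κ ^ a * F a = ∑ j, ψ j * H j := by
    rw [← Finset.sum_fiberwise A (fun a : ℤ => (a : ZMod n))]
    refine Finset.sum_congr rfl fun j _ => ?_
    rw [Finset.mul_sum]
    refine Finset.sum_congr rfl fun a ha => ?_
    rw [← (Finset.mem_filter.1 ha).2, zmodChar_intCast]
  have hshift : κ ^ h * ∑ j, ψ j * H j = ∑ j, ψ j * H j := by
    rw [Finset.mul_sum]
    refine Fintype.sum_equiv (Equiv.addRight (h : ZMod n)) _ _ fun j => ?_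
    rw [Equiv.coe_addRight, hH, AddChar.map_add_eq_mul, zmodChar_intCast]
    ring
  rw [hsum]
  exact by_contra fun hne => hκh ((mul_eq_right₀ hne).1 hshift)

lemma isPrimitiveRoot_mul_of_coprime {κ ρ : ℂ} (hκ : IsPrimitiveRoot κ n)
    (hρ : IsPrimitiveRoot ρ m) (hnm : n.Coprime m) : IsPrimitiveRoot (κ * ρ) (n * m) := by
  rw [hκ.eq_orderOf, hρ.eq_orderOf] at hnm ⊢
  rw [← (Commute.all κ ρ).orderOf_mul_eq_mul_orderOf_of_coprime hnm]
  exact IsPrimitiveRoot.orderOf _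

lemma vanishes_mul_of_periodic (hn : n ≠ 0) (hm : m ≠ 0) (hnm : n.Coprime m) {h : ℕ} (hh : ¬n ∣ h)
    (hF : ∀ ρ : ℂ, IsPrimitiveRoot ρ m → ∀ t,
      ∑ a ∈ residueClass n (t + h) A, ρ ^ a = ∑ a ∈ residueClass n t A, ρ ^ a) :
    Vanishes (n * m) A := by
  have hκ := Complex.isPrimitiveRoot_exp n hn
  have hρ := Complex.isPrimitiveRoot_exp m hm
  refine vanishes_of_sum_eq_zero (mul_ne_zero hn hm) (isPrimitiveRoot_mul_of_coprime hκ hρ hnm) ?_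
  simp only [mul_zpow]
  refine sum_zpow_mul_eq_zero_of_periodic hn hκ.pow_eq_one (h := h) ?_ (hF _ hρ)
  rwa [zpow_natCast, ne_eq, hκ.pow_eq_one_iff_dvd]

lemma vanishes_mul_of_residueClass (hp : 1 < p) (hm : m ≠ 0) (hpm : p.Coprime m)
    (h : ∀ ρ : ℂ, IsPrimitiveRoot ρ m → ∃ C, ∀ x, ∑ b ∈ residueClass p x B, ρ ^ b = C) :
    Vanishes (p * m) B := by
  refine vanishes_mul_of_periodic (by omega) hm hpm (Nat.dvd_one.not.2 hp.ne') fun ρ hρ t => ?_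
  obtain ⟨C, hC⟩ := h ρ hρ
  rw [hC, hC]

lemma isLift_emod (p : ℕ) : IsLift p (· % p) where
  modEq t := Int.mod_modEq t p
  eq_of_modEq _ _ h := h

lemma IsLift.ite (hs : IsLift p s) {t t' : ℤ} (ht : t' ≡ t [ZMOD p]) :
    IsLift p fun u => if u ≡ t [ZMOD p] then t' else s u where
  modEq u := by
    split_ifs with hu
    · exact ht.trans hu.symm
    · exact hs.modEq u
  eq_of_modEq u u' huu' := by
    have hiff : u ≡ t [ZMOD p] ↔ u' ≡ t [ZMOD p] := ⟨huu'.symm.trans, huu'.trans⟩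
    simp only [hiff, hs.eq_of_modEq u u' huu']

/-- Slabs whose lifts differ only above the class of `t` isolate the classes modulo `p ^ 2` above
`t`. -/
lemma sum_residueClass_sq_add_of_slab {E : Type*} [AddCommGroup E] {F : ℤ → E} {C : E}
    (h : ∀ s, IsLift p s → ∑ a ∈ slab p s A, F a = C) (t : ℤ) :
    ∑ a ∈ residueClass (p ^ 2) (t + p) A, F a = ∑ a ∈ residueClass (p ^ 2) t A, F a := by
  suffices key : ∀ t', t' ≡ t [ZMOD p] → ∑ a ∈ residueClass (p ^ 2) t' A, F a =
      C - ∑ a ∈ A with ¬a ≡ t [ZMOD p] ∧ a ≡ a % p [ZMOD p ^ 2], F a by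
    rw [key t rfl, key (t + p) (by simp [Int.ModEq])]
  intro t' ht
  rw [← h _ ((isLift_emod p).ite ht), eq_sub_iff_add_eq]
  simp only [slab, residueClass, Finset.sum_filter, ← Finset.sum_add_distrib, Nat.cast_pow]
  refine Finset.sum_congr rfl fun a _ => ?_
  by_cases ha : a ≡ t [ZMOD p]
  · simp [ha]
  · have : ¬a ≡ t' [ZMOD p ^ 2] := fun h' =>
      ha ((h'.of_dvd (dvd_pow_self _ two_ne_zero)).trans ht)
    simp [ha, this]

lemma vanishes_mul_of_slab (hp : 1 < p) (hm : m ≠ 0) (hpm : p.Coprime m)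
    (h : ∀ ρ : ℂ, IsPrimitiveRoot ρ m → ∃ C, ∀ s, IsLift p s → ∑ a ∈ slab p s A, ρ ^ a = C) :
    Vanishes (p ^ 2 * m) A := by
  have hp₀ : p ≠ 0 := by omega
  refine vanishes_mul_of_periodic (pow_ne_zero 2 hp₀) hm (hpm.pow_left 2) (h := p)
    (fun hdvd => ?_) fun ρ hρ t => ?_
  · exact (lt_self_pow₀ hp one_lt_two).not_ge (Nat.le_of_dvd (by omega) hdvd)
  · obtain ⟨C, hC⟩ := h ρ hρ
    exact sum_residueClass_sq_add_of_slab hC t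

lemma vanishes_of_card_residueClass (hp : 1 < p) (h : ∀ x, (residueClass p x B).card = c) :
    Vanishes p B := by
  simpa using vanishes_mul_of_residueClass hp one_ne_zero p.coprime_one_right
    fun ρ hρ => ⟨c, fun x => by simp [IsPrimitiveRoot.one_right_iff.1 hρ, h x]⟩

lemma vanishes_of_card_slab (hp : 1 < p) (h : ∀ s, IsLift p s → (slab p s A).card = c) :
    Vanishes (p ^ 2) A := by
  simpa using vanishes_mul_of_slab hp one_ne_zero p.coprime_one_right
    fun ρ hρ => ⟨c, fun s hs => by simp [IsPrimitiveRoot.one_right_iff.1 hρ, h s hs]⟩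

lemma vanishes_of_residueClass (hp : p ≠ 0) (h : ∀ x, Vanishes m (residueClass p x B)) :
    Vanishes m B := by
  intro ζ hζ
  rw [← sum_residueClass hp B]
  exact Finset.sum_eq_zero fun j _ => h j ζ hζ

lemma vanishes_of_slab (hp : p ≠ 0) (h : ∀ s, IsLift p s → Vanishes m (slab p s A)) :
    Vanishes m A := by
  intro ζ hζ
  rw [← (isLift_emod p).sum_slab hp A]
  exact Finset.sum_eq_zero fun j _ => h _ ((isLift_emod p).add_mul j) ζ hζ

end ConstantSums

section CovenMeyerowitz

variable {N p q r l e : ℕ} {A B : Finset ℤ} {s : ℤ → ℤ}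

/-- The condition (T2) for a set of integers and the modulus `M`, indexed by the product `m` of
the prime powers: if the exponential sum of `A` vanishes at the primitive roots of unity of order
each of the maximal prime powers dividing `m`, then it vanishes at those of order `m`. -/
def HasT2 (M : ℕ) (A : Finset ℤ) : Prop :=
  ∀ m, m ∣ M → m ≠ 1 →
    (∀ l : ℕ, l.Prime → l ∣ m → Vanishes (l ^ m.factorization l) A) → Vanishes m A

lemma hasT2_prime_pow (hr : r.Prime) (n : ℕ) (A : Finset ℤ) : HasT2 (r ^ n) A := by
  intro m hm hm₁ h
  obtain ⟨k, -, rfl⟩ := (Nat.dvd_prime_pow hr).1 hm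
  have hk : k ≠ 0 := by
    rintro rfl
    exact hm₁ (pow_zero r)
  simpa [hr.factorization_pow] using h r hr (dvd_pow_self r hk)

lemma hasT2_mul_of_forall (hp : p.Prime) (hN : N ≠ 0) {n : ℕ} (hpN : p.Coprime N)
    (h : ∀ i ≤ n, (i ≠ 0 → Vanishes (p ^ i) A) → ∀ m, m ∣ N → m ≠ 1 →
      (∀ l : ℕ, l.Prime → l ∣ m → Vanishes (l ^ m.factorization l) A) → Vanishes (p ^ i * m) A) :
    HasT2 (p ^ n * N) A := by
  intro m hm hm₁ hprime
  have hm₀ : m ≠ 0 := ne_zero_of_dvd_ne_zero (mul_ne_zero (pow_ne_zero _ hp.ne_zero) hN) hm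
  have hcop := Nat.coprime_ordCompl hp hm₀
  have hsplit := Nat.ordProj_mul_ordCompl_eq_self m p
  have hi : m.factorization p ≤ n := (Nat.pow_dvd_pow_iff_le_right hp.one_lt).1 <|
    (hpN.pow_left _).dvd_of_dvd_mul_right ((Nat.ordProj_dvd m p).trans hm)
  have hpi (hi₀ : m.factorization p ≠ 0) : Vanishes (p ^ m.factorization p) A :=
    hprime p hp (Nat.dvd_of_factorization_pos hi₀)
  have hmN : m / p ^ m.factorization p ∣ N :=
    (hcop.symm.pow_right n).dvd_of_dvd_mul_left ((Nat.ordCompl_dvd m p).trans hm)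
  by_cases hm' : m / p ^ m.factorization p = 1
  · rw [hm', mul_one] at hsplit
    rw [← hsplit]
    refine hpi fun hi₀ => hm₁ ?_
    rw [← hsplit, hi₀, pow_zero]
  · rw [← hsplit]
    refine h _ hi hpi _ hmN hm' fun l hl hlm => ?_
    have hlp : l ≠ p := by
      rintro rfl
      exact hl.coprime_iff_not_dvd.1 hcop hlm
    rw [Nat.factorization_ordCompl, Finsupp.erase_ne hlp]
    exact hprime l hl (hlm.trans (Nat.ordCompl_dvd m p))

namespace SlabReduction

lemma neZero (hR : SlabReduction p N A B) : NeZero N :=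
  (hR _ (isLift_emod p) 0).neZero

lemma card_slab_mul_card_residueClass (hR : SlabReduction p N A B) (hs : IsLift p s) (x : ℤ) :
    (slab p s A).card * (residueClass p x B).card = N :=
  (hR s hs x).card_mul_card

lemma mul_card_slab (hR : SlabReduction p N A B) (hp : p ≠ 0) (hs : IsLift p s) :
    p * (slab p s A).card = A.card := by
  have hcard (s') (hs' : IsLift p s') : (slab p s' A).card = (slab p s A).card := by
    have hB : 0 < (residueClass p 0 B).card := Nat.pos_of_mul_pos_left <|
      (hR.card_slab_mul_card_residueClass hs 0).symm ▸ Nat.pos_of_ne_zero hR.neZero.ne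
    refine Nat.eq_of_mul_eq_mul_right hB ?_
    rw [hR.card_slab_mul_card_residueClass hs', hR.card_slab_mul_card_residueClass hs]
  calc p * (slab p s A).card = ∑ _j ∈ Finset.range p, (slab p s A).card := by
        rw [Finset.sum_const, Finset.card_range, smul_eq_mul]
    _ = ∑ j ∈ Finset.range p, (slab p (fun t => s t + p * (j : ℤ)) A).card :=
        Finset.sum_congr rfl fun j _ => (hcard _ (hs.add_mul j)).symm
    _ = A.card := hs.sum_card_slab hp A

lemma mul_card_residueClass (hR : SlabReduction p N A B) (hp : p ≠ 0) (x : ℤ) :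
    p * (residueClass p x B).card = B.card := by
  have hcard (y) : (residueClass p y B).card = (residueClass p x B).card := by
    have hA : 0 < (slab p (· % p) A).card := Nat.pos_of_mul_pos_right <|
      (hR.card_slab_mul_card_residueClass (isLift_emod p) x).symm ▸
        Nat.pos_of_ne_zero hR.neZero.ne
    refine Nat.eq_of_mul_eq_mul_left hA ?_
    rw [hR.card_slab_mul_card_residueClass (isLift_emod p),
      hR.card_slab_mul_card_residueClass (isLift_emod p)]
  calc p * (residueClass p x B).card = ∑ _j ∈ Finset.range p, (residueClass p x B).card := by
        rw [Finset.sum_const, Finset.card_range, smul_eq_mul]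
    _ = ∑ j ∈ Finset.range p, (residueClass p j B).card :=
        Finset.sum_congr rfl fun j _ => (hcard j).symm
    _ = B.card := sum_card_residueClass hp B

lemma vanishes_sq (hR : SlabReduction p N A B) (hp : 1 < p) : Vanishes (p ^ 2) A :=
  vanishes_of_card_slab (c := A.card / p) hp fun s hs => by
    rw [← hR.mul_card_slab (by omega) hs, Nat.mul_div_cancel_left _ (by omega)]

lemma vanishes_self (hR : SlabReduction p N A B) (hp : 1 < p) : Vanishes p B :=
  vanishes_of_card_residueClass (c := B.card / p) hp fun x => by
    rw [← hR.mul_card_residueClass (by omega) x, Nat.mul_div_cancel_left _ (by omega)]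

lemma vanishes_slab (hR : SlabReduction p N A B) (h : TilesMod (p ^ 2 * N) A B) (hp : p ≠ 0)
    (hl : l.Prime) (he : e ≠ 0) (heN : l ^ e ∣ N) (hA : Vanishes (l ^ e) A) (hs : IsLift p s) :
    Vanishes (l ^ e) (slab p s A) := by
  by_contra hslab
  refine h.not_vanishes_of_vanishes hl he (heN.mul_left _) hA ?_
  exact vanishes_of_residueClass hp fun x =>
    ((hR s hs x).vanishes_or heN (Nat.one_lt_pow he hl.one_lt).ne').resolve_left hslab

lemma vanishes_residueClass (hR : SlabReduction p N A B) (h : TilesMod (p ^ 2 * N) A B)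
    (hp : p ≠ 0) (hl : l.Prime) (he : e ≠ 0) (heN : l ^ e ∣ N) (hB : Vanishes (l ^ e) B) (x : ℤ) :
    Vanishes (l ^ e) (residueClass p x B) := by
  by_contra hclass
  refine h.symm.not_vanishes_of_vanishes hl he (heN.mul_left _) hB ?_
  exact vanishes_of_slab hp fun s hs =>
    ((hR s hs x).vanishes_or heN (Nat.one_lt_pow he hl.one_lt).ne').resolve_right hclass

theorem hasT2_left (hR : SlabReduction p N A B) (h : TilesMod (p ^ 2 * N) A B) (hp : p.Prime)
    (hpN : p.Coprime N) (hT2 : ∀ s, IsLift p s → HasT2 N (slab p s A)) :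
    HasT2 (p ^ 2 * N) A := by
  have hN := hR.neZero.ne
  refine hasT2_mul_of_forall hp hN hpN fun i hi hpi m hm hm₁ hprime => ?_
  have hm₀ : m ≠ 0 := ne_zero_of_dvd_ne_zero hN hm
  have hslab (s) (hs : IsLift p s) : Vanishes m (slab p s A) :=
    hT2 s hs m hm hm₁ fun l hl hlm => hR.vanishes_slab h hp.ne_zero hl
      (hl.factorization_pos_of_dvd hm₀ hlm).ne' ((Nat.ordProj_dvd m l).trans hm)
      (hprime l hl hlm) hs
  interval_cases i
  · simpa using vanishes_of_slab hp.ne_zero hslab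
  · refine absurd (hpi one_ne_zero) (h.symm.not_vanishes_of_vanishes hp one_ne_zero ?_ ?_)
    · exact (pow_dvd_pow p one_le_two).mul_right N
    · simpa using hR.vanishes_self hp.one_lt
  · exact vanishes_mul_of_slab hp.one_lt hm₀ (hpN.coprime_dvd_right hm)
      fun ρ hρ => ⟨0, fun s hs => hslab s hs ρ hρ⟩

theorem hasT2_right (hR : SlabReduction p N A B) (h : TilesMod (p ^ 2 * N) A B) (hp : p.Prime)
    (hpN : p.Coprime N) (hT2 : ∀ x, HasT2 N (residueClass p x B)) : HasT2 (p ^ 2 * N) B := by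
  have hN := hR.neZero.ne
  refine hasT2_mul_of_forall hp hN hpN fun i hi hpi m hm hm₁ hprime => ?_
  have hm₀ : m ≠ 0 := ne_zero_of_dvd_ne_zero hN hm
  have hclass (x) : Vanishes m (residueClass p x B) :=
    hT2 x m hm hm₁ fun l hl hlm => hR.vanishes_residueClass h hp.ne_zero hl
      (hl.factorization_pos_of_dvd hm₀ hlm).ne' ((Nat.ordProj_dvd m l).trans hm)
      (hprime l hl hlm) x
  interval_cases i
  · simpa using vanishes_of_residueClass hp.ne_zero hclass
  · simpa using vanishes_mul_of_residueClass hp.one_lt hm₀ (hpN.coprime_dvd_right hm)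
      fun ρ hρ => ⟨0, fun x => hclass x ρ hρ⟩
  · exact absurd (hpi two_ne_zero) (h.not_vanishes_of_vanishes hp two_ne_zero
      (dvd_mul_right _ N) (hR.vanishes_sq hp.one_lt))

end SlabReduction

lemma TilesMod.hasT2_of_forall_modEq (h : TilesMod (q ^ 2 * r ^ 2) A B) (hq : q.Prime)
    (hr : r.Prime) (hqr : q ≠ r) (hA : q ∣ A.card) (hconst : ∀ a ∈ A, ∀ a' ∈ A, a ≡ a' [ZMOD q]) :
    HasT2 (q ^ 2 * r ^ 2) A ∧ HasT2 (q ^ 2 * r ^ 2) B := by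
  have hcop : q.Coprime (r ^ 2) := ((Nat.coprime_primes hq hr).2 hqr).pow_right 2
  have hR : SlabReduction q (r ^ 2) A B :=
    h.slabReduction_of_determinesLeft hq hcop hA fun a ha a' ha' _ _ _ _ _ => hconst a ha a' ha'
  exact ⟨hR.hasT2_left h hq hcop fun _ _ => hasT2_prime_pow hr 2 _,
    hR.hasT2_right h hq hcop fun _ => hasT2_prime_pow hr 2 _⟩

lemma exists_ne_and_ne {α β γ : Type*} {S : Finset α} {f : α → β} {g : α → γ}
    (hf : ∃ a ∈ S, ∃ a' ∈ S, f a ≠ f a') (hg : ∃ a ∈ S, ∃ a' ∈ S, g a ≠ g a') :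
    ∃ a ∈ S, ∃ a' ∈ S, f a ≠ f a' ∧ g a ≠ g a' := by
  grind

lemma gcd_sub_prime_pow_eq_one (hp : p.Prime) {a a' : ℤ} (h : ¬a ≡ a' [ZMOD p]) (n : ℕ) :
    Int.gcd (a - a') (p ^ n : ℕ) = 1 := by
  rw [Int.gcd, Int.natAbs_natCast]
  refine Nat.Coprime.pow_right n ((hp.coprime_iff_not_dvd.2 fun hdvd => h ?_).symm)
  exact (Int.modEq_iff_dvd.2 (Int.natCast_dvd.2 hdvd)).symm

theorem TilesMod.hasT2_of_two_primes (h : TilesMod (q ^ 2 * r ^ 2) A B) (hq : q.Prime)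
    (hr : r.Prime) (hqr : q ≠ r) (hA : q * r ∣ A.card) (hB : q * r ∣ B.card) :
    HasT2 (q ^ 2 * r ^ 2) A ∧ HasT2 (q ^ 2 * r ^ 2) B := by
  have h' : TilesMod (r ^ 2 * q ^ 2) A B := mul_comm (q ^ 2) _ ▸ h
  by_cases hAq : ∀ a ∈ A, ∀ a' ∈ A, a ≡ a' [ZMOD q]
  · exact h.hasT2_of_forall_modEq hq hr hqr (dvd_of_mul_right_dvd hA) hAq
  by_cases hAr : ∀ a ∈ A, ∀ a' ∈ A, a ≡ a' [ZMOD r]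
  · exact mul_comm (r ^ 2) _ ▸
      h'.hasT2_of_forall_modEq hr hq hqr.symm (dvd_of_mul_left_dvd hA) hAr
  by_cases hBq : ∀ b ∈ B, ∀ b' ∈ B, b ≡ b' [ZMOD q]
  · exact (h.symm.hasT2_of_forall_modEq hq hr hqr (dvd_of_mul_right_dvd hB) hBq).symm
  by_cases hBr : ∀ b ∈ B, ∀ b' ∈ B, b ≡ b' [ZMOD r]
  · exact mul_comm (r ^ 2) _ ▸
      (h'.symm.hasT2_of_forall_modEq hr hq hqr.symm (dvd_of_mul_left_dvd hB) hBr).symm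
  -- Otherwise `A` and `B` have pairs with both differences coprime to the modulus.
  exfalso
  push Not at hAq hAr hBq hBr
  obtain ⟨a, ha, a', ha', haq, har⟩ := exists_ne_and_ne (f := (· % (q : ℤ))) hAq hAr
  obtain ⟨b, hb, b', hb', hbq, hbr⟩ := exists_ne_and_ne (f := (· % (q : ℤ))) hBq hBr
  refine haq (congrArg (· % (q : ℤ)) (h.eq_of_gcd_eq ha ha' hb hb' ?_).1)
  refine gcd_mul_eq_of_coprime (((Nat.coprime_primes hq hr).2 hqr).pow 2 2) ?_ ?_
  · rw [gcd_sub_prime_pow_eq_one hq haq, gcd_sub_prime_pow_eq_one hq hbq]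
  · rw [gcd_sub_prime_pow_eq_one hr har, gcd_sub_prime_pow_eq_one hr hbr]

theorem SlabReduction.hasT2_of_three_primes (hR : SlabReduction p (q ^ 2 * r ^ 2) A B)
    (h : TilesMod (p ^ 2 * (q ^ 2 * r ^ 2)) A B) (hp : p.Prime) (hq : q.Prime) (hr : r.Prime)
    (hpq : p ≠ q) (hpr : p ≠ r) (hqr : q ≠ r) (hA : p * (q * r) ∣ A.card)
    (hB : p * (q * r) ∣ B.card) :
    HasT2 (p ^ 2 * (q ^ 2 * r ^ 2)) A ∧ HasT2 (p ^ 2 * (q ^ 2 * r ^ 2)) B := by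
  have hcop : p.Coprime (q ^ 2 * r ^ 2) :=
    (((Nat.coprime_primes hp hq).2 hpq).pow_right 2).mul_right
      (((Nat.coprime_primes hp hr).2 hpr).pow_right 2)
  have hslab (s) (hs : IsLift p s) : q * r ∣ (slab p s A).card := by
    rwa [← Nat.mul_dvd_mul_iff_left hp.pos, hR.mul_card_slab hp.ne_zero hs]
  have hclass (x) : q * r ∣ (residueClass p x B).card := by
    rwa [← Nat.mul_dvd_mul_iff_left hp.pos, hR.mul_card_residueClass hp.ne_zero x]
  have hT2 (s) (hs : IsLift p s) (x) := (hR s hs x).hasT2_of_two_primes hq hr hqr (hslab s hs)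
    (hclass x)
  exact ⟨hR.hasT2_left h hp hcop fun s hs => (hT2 s hs 0).1,
    hR.hasT2_right h hp hcop fun x => (hT2 _ (isLift_emod p) x).2⟩

end CovenMeyerowitz

section Center

variable {N p q r : ℕ} {A B : Finset ℤ}

lemma exists_modEq_and_modEq {m n : ℕ} (hmn : m.Coprime n) (u v : ℤ) :
    ∃ z : ℤ, z ≡ u [ZMOD m] ∧ z ≡ v [ZMOD n] := by
  obtain ⟨a, b, hab⟩ := Nat.isCoprime_iff_coprime.2 hmn
  refine ⟨v + b * n * (u - v), Int.modEq_iff_dvd.2 ⟨a * (u - v), ?_⟩,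
    Int.modEq_iff_dvd.2 ⟨b * (v - u), by ring⟩⟩
  linear_combination (v - u) * hab

lemma TilesMod.exists_modEq_of_not_determinesLeft (hp : p.Prime) (hpN : p.Coprime N)
    (h : TilesMod (p ^ 2 * N) A B) (hdet : ¬DeterminesLeft p N A B) (x : ℤ) :
    ∃ a ∈ A, a ≡ x [ZMOD p] := by
  unfold DeterminesLeft at hdet
  push Not at hdet
  obtain ⟨a, ha, a', ha', b, hb, b', hb', hN, haa'⟩ := hdet
  have hbb' : b ≡ b' [ZMOD p] := (h.modEq_or_modEq hp hpN ha ha' hb hb' hN).resolve_left haa'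
  obtain ⟨z, hzp, hzN⟩ := exists_modEq_and_modEq hpN (x + b) (a + b)
  obtain ⟨a₀, ha₀, b₀, hb₀, hz⟩ := h.exists_modEq z
  push_cast at hz
  have hzN' : a₀ + b₀ ≡ a + b [ZMOD N] := (hz.of_dvd (dvd_mul_left _ _)).trans hzN
  have hzp' : a₀ + b₀ ≡ x + b [ZMOD p] :=
    (hz.of_dvd ((dvd_pow_self _ two_ne_zero).mul_right _)).trans hzp
  have hb₀b : b₀ ≡ b [ZMOD p] := by
    rcases h.modEq_or_modEq hp hpN ha₀ ha hb₀ hb hzN' with hab | hab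
    · refine ((h.modEq_or_modEq hp hpN ha₀ ha' hb₀ hb' (hzN'.trans hN)).resolve_left
        fun hab' => haa' (hab.symm.trans hab')).trans hbb'.symm
    · exact hab
  exact ⟨a₀, ha₀, Int.ModEq.add_right_cancel hb₀b hzp'⟩

lemma forall_eq_or_forall_eq {ι β γ : Type*} {y : ι → β} {w : ι → γ}
    (h : ∀ i j, y i = y j ∨ w i = w j) : (∀ i j, y i = y j) ∨ ∀ i j, w i = w j := by
  by_contra! hne
  obtain ⟨⟨i, j, hij⟩, k, l, hkl⟩ := hne
  grind [h i j, h k l, h i k, h i l, h j k, h j l]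

lemma forall_eq_or_eq_of_section {ι α β γ : Type*} {S : Finset ι} {X : ι → α} {Y : ι → β}
    {W : ι → γ} (hagree : ∀ a ∈ S, ∀ a' ∈ S, X a = X a' ∨ Y a = Y a' ∨ W a = W a')
    (hα : 3 ≤ ENat.card α) {f : α → ι} (hf : ∀ x, f x ∈ S) (hfX : ∀ x, X (f x) = x)
    {y : β} (hfY : ∀ x, Y (f x) = y) {g : ι} (hg : g ∈ S) (hgY : Y g ≠ y) :
    ∀ a ∈ S, Y a = y ∨ W a = W g := by
  intro a ha
  obtain ⟨x, hxg, hxa⟩ := ENat.exists_ne_ne_of_three_le hα (X g) (X a)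
  grind [hagree (f x) (hf x) g hg, hagree (f x) (hf x) a ha]

/-- A section of `X` is constant in `Y` or in `W`; an element of `S` off that constant then fixes
the remaining coordinate. -/
lemma exists_center_of_agree {ι α β γ : Type*} {S : Finset ι} {X : ι → α} {Y : ι → β} {W : ι → γ}
    (hagree : ∀ a ∈ S, ∀ a' ∈ S, X a = X a' ∨ Y a = Y a' ∨ W a = W a') (hα : 3 ≤ ENat.card α)
    (hX : ∀ x, ∃ a ∈ S, X a = x) (hY : ∀ y, ∃ a ∈ S, Y a ≠ y) (hW : ∀ w, ∃ a ∈ S, W a ≠ w) :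
    ∃ x y w, ∀ a ∈ S, (X a = x ∨ Y a = y) ∧ (X a = x ∨ W a = w) ∧ (Y a = y ∨ W a = w) := by
  obtain ⟨x₀⟩ : Nonempty α :=
    (ENat.card_pos_iff_nonempty α).1 (lt_of_lt_of_le (by norm_num) hα)
  choose f hf hfX using hX
  have hagree_f (x x' : α) : Y (f x) = Y (f x') ∨ W (f x) = W (f x') := by
    grind [hagree (f x) (hf x) (f x') (hf x')]
  obtain ⟨y, w, hyw⟩ : ∃ y w, ∀ a ∈ S, Y a = y ∨ W a = w := by
    rcases forall_eq_or_forall_eq hagree_f with hfY | hfW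
    · obtain ⟨g, hg, hgY⟩ := hY (Y (f x₀))
      exact ⟨_, _, forall_eq_or_eq_of_section hagree hα hf hfX (hfY · x₀) hg hgY⟩
    · obtain ⟨g, hg, hgW⟩ := hW (W (f x₀))
      exact ⟨_, _, fun a ha => (forall_eq_or_eq_of_section
        (fun a ha a' ha' => (hagree a ha a' ha').imp_right Or.symm) hα hf hfX (hfW · x₀) hg hgW a
        ha).symm⟩
  obtain ⟨b, hb, hbY⟩ := hY y
  obtain ⟨d, hd, hdW⟩ := hW w
  refine ⟨X b, y, w, fun a ha => ?_⟩
  grind [hyw a ha, hyw b hb, hyw d hd, hagree a ha b hb, hagree a ha d hd, hagree b hb d hd]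

lemma exists_not_modEq (hp : 1 < p) (hA : ∀ x, ∃ a ∈ A, a ≡ x [ZMOD p]) (c : ℤ) :
    ∃ a ∈ A, ¬a ≡ c [ZMOD p] := by
  obtain ⟨a, ha, hac⟩ := hA (c + 1)
  refine ⟨a, ha, fun h => hp.ne' ?_⟩
  have hdvd := (h.symm.trans hac).dvd
  rw [add_sub_cancel_left] at hdvd
  exact Nat.dvd_one.1 (by exact_mod_cast hdvd)

lemma exists_center_modEq (hp : 3 ≤ p) (hq : 1 < q) (hr : 1 < r) (hpq : p.Coprime q)
    (hpr : p.Coprime r) (hqr : q.Coprime r)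
    (hagree : ∀ a ∈ A, ∀ a' ∈ A, a ≡ a' [ZMOD p] ∨ a ≡ a' [ZMOD q] ∨ a ≡ a' [ZMOD r])
    (hAp : ∀ x, ∃ a ∈ A, a ≡ x [ZMOD p]) (hAq : ∀ x, ∃ a ∈ A, a ≡ x [ZMOD q])
    (hAr : ∀ x, ∃ a ∈ A, a ≡ x [ZMOD r]) :
    ∃ c : ℤ, ∀ a ∈ A, (a ≡ c [ZMOD p] ∨ a ≡ c [ZMOD q]) ∧ (a ≡ c [ZMOD p] ∨ a ≡ c [ZMOD r]) ∧
      (a ≡ c [ZMOD q] ∨ a ≡ c [ZMOD r]) := by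
  have : NeZero p := ⟨by omega⟩
  obtain ⟨x, y, w, hxyw⟩ := exists_center_of_agree (S := A)
    (X := (Int.cast : ℤ → ZMod p)) (Y := (Int.cast : ℤ → ZMod q)) (W := (Int.cast : ℤ → ZMod r))
    (by simpa only [ZMod.intCast_eq_intCast_iff] using hagree)
    (by rw [ENat.card_eq_coe_fintype_card, ZMod.card]; exact_mod_cast hp)
    (by simpa only [ZMod.intCast_surjective.forall, ZMod.intCast_eq_intCast_iff] using hAp)
    (by simpa only [ZMod.intCast_surjective.forall, ne_eq, ZMod.intCast_eq_intCast_iff] using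
      exists_not_modEq hq hAq)
    (by simpa only [ZMod.intCast_surjective.forall, ne_eq, ZMod.intCast_eq_intCast_iff] using
      exists_not_modEq hr hAr)
  obtain ⟨x, rfl⟩ := ZMod.intCast_surjective x
  obtain ⟨y, rfl⟩ := ZMod.intCast_surjective y
  obtain ⟨w, rfl⟩ := ZMod.intCast_surjective w
  obtain ⟨z, hzx, hzy⟩ := exists_modEq_and_modEq hpq x y
  obtain ⟨c, hcz, hcw⟩ := exists_modEq_and_modEq (hpr.mul_left hqr) z w
  push_cast at hcz
  have hcx : c ≡ x [ZMOD p] := (hcz.of_dvd (dvd_mul_right _ _)).trans hzx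
  have hcy : c ≡ y [ZMOD q] := (hcz.of_dvd (dvd_mul_left _ _)).trans hzy
  refine ⟨c, fun a ha => ?_⟩
  simpa only [← ZMod.intCast_eq_intCast_iff, (ZMod.intCast_eq_intCast_iff ..).2 hcx,
    (ZMod.intCast_eq_intCast_iff ..).2 hcy, (ZMod.intCast_eq_intCast_iff ..).2 hcw] using
    hxyw a ha

end Center

section Arms

variable {p q r : ℕ} {A : Finset ℤ} {t : ℤ}

lemma mem_residueClass_mul (hpq : p.Coprime q) {a : ℤ} :
    a ∈ residueClass (p * q) t A ↔ a ∈ A ∧ a ≡ t [ZMOD p] ∧ a ≡ t [ZMOD q] := by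
  rw [mem_residueClass, Nat.cast_mul, Int.modEq_and_modEq_iff_modEq_mul (by simpa using hpq)]

namespace Vanishes

lemma mul_card_residueClass (h : Vanishes p A) (hp : p.Prime) (t : ℤ) :
    p * (residueClass p t A).card = A.card := by
  have := mul_card_residueClass_of_vanishes (A := A) hp.ne_zero (one_dvd p) (fun d hd hd₁ => ?_) t
  · rwa [one_mul, residueClass_one] at this
  · rwa [((Nat.dvd_prime hp).1 hd).resolve_left fun h₁ => hd₁ h₁.dvd]

lemma mul_card_residueClass_sq (h : Vanishes (p ^ 2) A) (hp : p.Prime) (t : ℤ) :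
    p * (residueClass (p ^ 2) t A).card = (residueClass p t A).card := by
  refine Nat.eq_of_mul_eq_mul_left hp.pos ?_
  rw [← mul_assoc, ← sq]
  refine mul_card_residueClass_of_vanishes (pow_ne_zero 2 hp.ne_zero)
    (dvd_pow_self p two_ne_zero) (fun d hd hdp => ?_) t
  obtain ⟨k, hk, rfl⟩ := (Nat.dvd_prime_pow hp).1 hd
  have hk₂ : k = 2 := hk.antisymm (not_lt.1 fun hlt => hdp
    ((pow_dvd_pow p (Nat.le_of_lt_succ hlt)).trans (pow_one p).dvd))
  rwa [hk₂]

lemma mul_card_residueClass_add_card (h : Vanishes (p * q) A) (hp : p.Prime) (hq : q.Prime)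
    (hpq : p ≠ q) (t : ℤ) : p * q * (residueClass (p * q) t A).card + A.card =
      p * (residueClass p t A).card + q * (residueClass q t A).card := by
  refine mul_card_residueClass_add_card_of_vanishes hp.ne_zero hq.ne_zero
    ((Nat.coprime_primes hp hq).2 hpq) (fun d hd hdp hdq => ?_) t
  obtain ⟨m, n, hm, hn, rfl⟩ := Nat.dvd_mul.1 hd
  rcases (Nat.dvd_prime hp).1 hm with rfl | rfl
  · exact absurd (by simpa using hn) hdq
  rcases (Nat.dvd_prime hq).1 hn with rfl | rfl
  · exact absurd (by simp) hdp
  · exact h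

lemma mul_card_residueClass_mul (h : Vanishes (p * q) A) (hp : p.Prime) (hq : q.Prime)
    (hpq : p ≠ q) (hAp : Vanishes p A) (hAq : Vanishes q A) (t : ℤ) :
    p * q * (residueClass (p * q) t A).card = A.card := by
  have := h.mul_card_residueClass_add_card hp hq hpq t
  rw [hAp.mul_card_residueClass hp, hAq.mul_card_residueClass hq] at this
  exact Nat.add_right_cancel this

end Vanishes

/-- The elements of `A` not congruent to `c` modulo `p`. If any element of `A` can differ from `c`
modulo at most one of three primes, this is an arm of a cross with center `c`. -/
def arm (p : ℕ) (c : ℤ) (A : Finset ℤ) : Finset ℤ :=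
  A.filter (¬· ≡ c [ZMOD p])

lemma mem_arm {a c : ℤ} : a ∈ arm p c A ↔ a ∈ A ∧ ¬a ≡ c [ZMOD p] :=
  Finset.mem_filter

lemma card_residueClass_add_card_arm (p : ℕ) (c : ℤ) (A : Finset ℤ) :
    (residueClass p c A).card + (arm p c A).card = A.card :=
  Finset.card_filter_add_card_filter_not _

lemma Vanishes.sub_one_mul_le_card_arm (h : Vanishes (p ^ 2) A) (hp : p.Prime)
    (hA : ∀ x, ∃ a ∈ A, a ≡ x [ZMOD p]) (c : ℤ) : (p - 1) * p ≤ (arm p c A).card := by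
  have : NeZero p := ⟨hp.ne_zero⟩
  have hmaps : Set.MapsTo (Int.cast : ℤ → ZMod p) (arm p c A)
      (Finset.univ.erase (c : ZMod p) : Finset (ZMod p)) := fun a ha => by
    simpa [ZMod.intCast_eq_intCast_iff] using (mem_arm.1 ha).2
  rw [Finset.card_eq_sum_card_fiberwise hmaps]
  refine le_trans (le_of_eq ?_) (Finset.card_nsmul_le_sum _ _ p fun x hx => ?_)
  · rw [Finset.card_erase_of_mem (Finset.mem_univ _), Finset.card_univ, ZMod.card, smul_eq_mul]
  obtain ⟨x, rfl⟩ := ZMod.intCast_surjective x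
  have hxc : ¬x ≡ c [ZMOD p] := by simpa [ZMod.intCast_eq_intCast_iff] using hx
  have hfiber : (arm p c A).filter (fun a : ℤ => (a : ZMod p) = x) = residueClass p x A := by
    ext a
    rw [Finset.mem_filter, mem_arm, mem_residueClass, ZMod.intCast_eq_intCast_iff]
    exact ⟨fun ⟨⟨ha, _⟩, hax⟩ => ⟨ha, hax⟩, fun ⟨ha, hax⟩ =>
      ⟨⟨ha, fun hac => hxc (hax.symm.trans hac)⟩, hax⟩⟩
  obtain ⟨a, ha, hax⟩ := hA x
  rw [hfiber]
  exact Nat.le_of_dvd (Finset.card_pos.2 ⟨a, mem_residueClass.2 ⟨ha, hax⟩⟩)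
    (h.mul_card_residueClass_sq hp x ▸ dvd_mul_right p _)

lemma card_le_of_forall_modEq {K L : ℕ} (hL : L ≠ 0)
    (hinj : ∀ a ∈ A, ∀ a' ∈ A, a ≡ a' [ZMOD K * L] → a = a')
    (hmod : ∀ a ∈ A, ∀ a' ∈ A, a ≡ a' [ZMOD K]) : A.card ≤ L := by
  rcases A.eq_empty_or_nonempty with rfl | ⟨x, hx⟩
  · exact Nat.zero_le L
  have : NeZero L := ⟨hL⟩
  rw [← ZMod.card L, ← Finset.card_univ]
  refine Finset.card_le_card_of_injOn (fun a => (((a - x) / K : ℤ) : ZMod L))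
    (fun _ _ => Finset.mem_univ _) fun a ha a' ha' h => hinj a ha a' ha' ?_
  rw [ZMod.intCast_eq_intCast_iff] at h
  rw [← add_mul_ediv_sub (hmod x hx a ha), ← add_mul_ediv_sub (hmod x hx a' ha')]
  exact (h.mul_left' (c := K)).add_left x

lemma mul_lt_sub_one_mul_add (hq : q.Prime) (hr : r.Prime) (hqr : q ≠ r) :
    q * r < (q - 1) * q + (r - 1) * r := by
  obtain ⟨m, rfl⟩ := Nat.exists_eq_add_of_le' hq.two_le
  obtain ⟨n, rfl⟩ := Nat.exists_eq_add_of_le' hr.two_le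
  simp only [Nat.add_succ_sub_one]
  rcases lt_or_gt_of_ne hqr with hlt | hlt <;> nlinarith

lemma add_lt_mul (hp : p.Prime) (hq : q.Prime) (hpq : p ≠ q) : p + q < p * q := by
  have := hp.two_le
  have := hq.two_le
  rcases lt_or_gt_of_ne hpq with hlt | hlt <;> nlinarith

end Arms

section ThreePrimes

variable {M p q r : ℕ} {A B : Finset ℤ} {a a' b b' b₁ b₂ c : ℤ}

/-- A tiling modulo `M` by two sets with `p * q * r` elements each, for distinct primes `p`, `q`
and `r`. Comparing cardinalities, `M = p ^ 2 * q ^ 2 * r ^ 2`. -/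
structure ThreePrimeTiling (M p q r : ℕ) (A B : Finset ℤ) : Prop where
  tiles : TilesMod M A B
  p_prime : p.Prime
  q_prime : q.Prime
  r_prime : r.Prime
  p_ne_q : p ≠ q
  p_ne_r : p ≠ r
  q_ne_r : q ≠ r
  card_left : A.card = p * (q * r)
  card_right : B.card = p * (q * r)

namespace ThreePrimeTiling

lemma swap₁₂ (k : ThreePrimeTiling M p q r A B) : ThreePrimeTiling M q p r A B :=
  ⟨k.tiles, k.q_prime, k.p_prime, k.r_prime, k.p_ne_q.symm, k.q_ne_r, k.p_ne_r,
    k.card_left.trans (by ring), k.card_right.trans (by ring)⟩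

lemma swap₂₃ (k : ThreePrimeTiling M p q r A B) : ThreePrimeTiling M p r q A B :=
  ⟨k.tiles, k.p_prime, k.r_prime, k.q_prime, k.p_ne_r, k.p_ne_q, k.q_ne_r.symm,
    k.card_left.trans (by ring), k.card_right.trans (by ring)⟩

lemma symm (k : ThreePrimeTiling M p q r A B) : ThreePrimeTiling M p q r B A :=
  { k with tiles := k.tiles.symm, card_left := k.card_right, card_right := k.card_left }

lemma modulus_eq (k : ThreePrimeTiling M p q r A B) : M = p ^ 2 * (q ^ 2 * r ^ 2) := by
  rw [← k.tiles.card_mul_card, k.card_left, k.card_right]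
  ring

lemma tilesMod (k : ThreePrimeTiling M p q r A B) : TilesMod (p ^ 2 * (q ^ 2 * r ^ 2)) A B :=
  k.modulus_eq ▸ k.tiles

lemma coprime_p_q (k : ThreePrimeTiling M p q r A B) : p.Coprime q :=
  (Nat.coprime_primes k.p_prime k.q_prime).2 k.p_ne_q

lemma coprime_sq_mul_sq (k : ThreePrimeTiling M p q r A B) : p.Coprime (q ^ 2 * r ^ 2) :=
  (k.coprime_p_q.pow_right 2).mul_right (k.swap₂₃.coprime_p_q.pow_right 2)

lemma gcd_eq (k : ThreePrimeTiling M p q r A B) {x y : ℤ}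
    (hp : Int.gcd x (p ^ 2 : ℕ) = Int.gcd y (p ^ 2 : ℕ))
    (hq : Int.gcd x (q ^ 2 : ℕ) = Int.gcd y (q ^ 2 : ℕ))
    (hr : Int.gcd x (r ^ 2 : ℕ) = Int.gcd y (r ^ 2 : ℕ)) : Int.gcd x M = Int.gcd y M := by
  rw [k.modulus_eq]
  exact gcd_mul_eq_of_coprime (k.coprime_sq_mul_sq.pow_left 2) hp
    (gcd_mul_eq_of_coprime (k.swap₁₂.swap₂₃.coprime_p_q.pow 2 2) hq hr)

theorem hasT2_of_slabReduction (k : ThreePrimeTiling M p q r A B)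
    (hR : SlabReduction p (q ^ 2 * r ^ 2) A B) : HasT2 M A ∧ HasT2 M B := by
  rw [k.modulus_eq]
  exact hR.hasT2_of_three_primes k.tilesMod k.p_prime k.q_prime k.r_prime k.p_ne_q k.p_ne_r
    k.q_ne_r k.card_left.symm.dvd k.card_right.symm.dvd

theorem hasT2_of_determinesLeft (k : ThreePrimeTiling M p q r A B)
    (hdet : DeterminesLeft p (q ^ 2 * r ^ 2) A B) : HasT2 M A ∧ HasT2 M B :=
  k.hasT2_of_slabReduction <| k.tilesMod.slabReduction_of_determinesLeft k.p_prime
    k.coprime_sq_mul_sq (k.card_left ▸ dvd_mul_right p _) hdet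

lemma vanishes_right_and_vanishes_sq_left (k : ThreePrimeTiling M p q r A B)
    (hA : ¬Vanishes p A) : Vanishes p B ∧ Vanishes (p ^ 2) A := by
  have hdvd : p ^ 2 ∣ M := k.modulus_eq ▸ dvd_mul_right _ _
  have hB : Vanishes p B := (k.tiles.vanishes_or ((dvd_pow_self p two_ne_zero).trans hdvd)
    k.p_prime.ne_one).resolve_left hA
  refine ⟨hB, (k.tiles.vanishes_or hdvd
    (Nat.one_lt_pow two_ne_zero k.p_prime.one_lt).ne').resolve_right fun hB₂ => ?_⟩
  have hcard : p ^ 2 * (residueClass (p ^ 2) 0 B).card = p * (q * r) := by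
    calc p ^ 2 * (residueClass (p ^ 2) 0 B).card = p * (p * (residueClass (p ^ 2) 0 B).card) := by
          ring
      _ = p * (q * r) := by
          rw [hB₂.mul_card_residueClass_sq k.p_prime, hB.mul_card_residueClass k.p_prime,
            k.card_right]
  rw [sq, mul_assoc] at hcard
  exact k.p_prime.coprime_iff_not_dvd.1 (k.coprime_p_q.mul_right k.swap₂₃.coprime_p_q)
    ⟨_, (Nat.eq_of_mul_eq_mul_left k.p_prime.pos hcard).symm⟩

lemma card_residueClass (k : ThreePrimeTiling M p q r A B) (h : Vanishes p A) (t : ℤ) :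
    (residueClass p t A).card = q * r :=
  Nat.eq_of_mul_eq_mul_left k.p_prime.pos
    ((h.mul_card_residueClass k.p_prime t).trans k.card_left)

lemma card_residueClass_mul (k : ThreePrimeTiling M p q r A B) (hp : Vanishes p A)
    (hq : Vanishes q A) (hpq : Vanishes (p * q) A) (t : ℤ) :
    (residueClass (p * q) t A).card = r := by
  refine Nat.eq_of_mul_eq_mul_left (Nat.mul_pos k.p_prime.pos k.q_prime.pos) ?_
  rw [hpq.mul_card_residueClass_mul k.p_prime k.q_prime k.p_ne_q hp hq, k.card_left, mul_assoc]

lemma vanishes_mul_or (k : ThreePrimeTiling M p q r A B) :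
    Vanishes (p * q) A ∨ Vanishes (p * q) B :=
  k.tiles.vanishes_or ⟨p * q * r ^ 2, by rw [k.modulus_eq]; ring⟩
    fun h => k.p_prime.ne_one (Nat.eq_one_of_mul_eq_one_right h)

lemma card_le_mul_of_forall_modEq (k : ThreePrimeTiling M p q r A B) {S : Finset ℤ} (hS : S ⊆ A)
    (hp : ∀ a ∈ S, ∀ a' ∈ S, a ≡ a' [ZMOD p]) (hq : ∀ a ∈ S, ∀ a' ∈ S, a ≡ a' [ZMOD q])
    (hr : ∀ a ∈ S, ∀ a' ∈ S, a ≡ a' [ZMOD r ^ 2]) : S.card ≤ p * q := by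
  have hpq := k.coprime_p_q
  have hpqr : (p * q).Coprime (r ^ 2) :=
    (k.swap₂₃.coprime_p_q.mul_left k.swap₁₂.swap₂₃.coprime_p_q).pow_right 2
  obtain ⟨b, hb⟩ : B.Nonempty := Finset.card_ne_zero.1 <| by
    simp [k.card_right, k.p_prime.ne_zero, k.q_prime.ne_zero, k.r_prime.ne_zero]
  refine card_le_of_forall_modEq (K := p * q * r ^ 2)
    (mul_ne_zero k.p_prime.ne_zero k.q_prime.ne_zero) (fun a ha a' ha' h => ?_)
    fun a ha a' ha' => ?_
  · refine (k.tiles.eq_of_modEq (hS ha) (hS ha') hb hb (Int.ModEq.add_right b ?_)).1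
    convert h using 1
    rw [k.modulus_eq]
    push_cast
    ring
  · push_cast
    refine (Int.modEq_and_modEq_iff_modEq_mul (by exact_mod_cast hpqr)).1 ⟨?_, hr a ha a' ha'⟩
    exact (Int.modEq_and_modEq_iff_modEq_mul (by exact_mod_cast hpq)).1
      ⟨hp a ha a' ha', hq a ha a' ha'⟩

end ThreePrimeTiling

/-- A tiling by sets of size `p * q * r` whose first tile meets every residue class modulo each of
the three primes, while each of its elements agrees with `c` modulo at least two of them. -/
structure CenteredTiling (M p q r : ℕ) (A B : Finset ℤ) (c : ℤ) : Prop
    extends ThreePrimeTiling M p q r A B where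
  surj_p : ∀ x, ∃ a ∈ A, a ≡ x [ZMOD p]
  surj_q : ∀ x, ∃ a ∈ A, a ≡ x [ZMOD q]
  surj_r : ∀ x, ∃ a ∈ A, a ≡ x [ZMOD r]
  center_pq : ∀ a ∈ A, a ≡ c [ZMOD p] ∨ a ≡ c [ZMOD q]
  center_pr : ∀ a ∈ A, a ≡ c [ZMOD p] ∨ a ≡ c [ZMOD r]
  center_qr : ∀ a ∈ A, a ≡ c [ZMOD q] ∨ a ≡ c [ZMOD r]

namespace CenteredTiling

lemma swap₁₂ (k : CenteredTiling M p q r A B c) : CenteredTiling M q p r A B c :=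
  ⟨k.toThreePrimeTiling.swap₁₂, k.surj_q, k.surj_p, k.surj_r, fun a ha => (k.center_pq a ha).symm,
    k.center_qr, k.center_pr⟩

lemma swap₂₃ (k : CenteredTiling M p q r A B c) : CenteredTiling M p r q A B c :=
  ⟨k.toThreePrimeTiling.swap₂₃, k.surj_p, k.surj_r, k.surj_q, k.center_pr, k.center_pq,
    fun a ha => (k.center_qr a ha).symm⟩

lemma disjoint_arm (k : CenteredTiling M p q r A B c) : Disjoint (arm p c A) (arm q c A) :=
  Finset.disjoint_left.2 fun a hp hq => (k.center_pq a (mem_arm.1 hp).1).elim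
    (mem_arm.1 hp).2 (mem_arm.1 hq).2

lemma arm_subset_residueClass (k : CenteredTiling M p q r A B c) :
    arm p c A ⊆ residueClass q c A := fun a ha =>
  have ⟨haA, hap⟩ := mem_arm.1 ha
  mem_residueClass.2 ⟨haA, (k.center_pq a haA).resolve_left hap⟩

lemma card_arm_add_card_arm_le (k : CenteredTiling M p q r A B c) :
    (arm q c A).card + (arm r c A).card ≤ (residueClass p c A).card := by
  rw [← Finset.card_union_of_disjoint k.swap₁₂.swap₂₃.disjoint_arm]
  exact Finset.card_le_card (Finset.union_subset k.swap₁₂.arm_subset_residueClass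
    k.swap₂₃.swap₁₂.arm_subset_residueClass)

lemma not_vanishes_and_vanishes (k : CenteredTiling M p q r A B c) :
    ¬(Vanishes p A ∧ Vanishes q A) := by
  rintro ⟨hp, hq⟩
  have harms := k.card_arm_add_card_arm_le
  have hsplit := card_residueClass_add_card_arm q c A
  rw [k.card_residueClass hp] at harms
  rw [k.swap₁₂.card_residueClass hq, k.card_left] at hsplit
  refine (add_lt_mul k.p_prime k.q_prime k.p_ne_q).not_ge
    (Nat.le_of_mul_le_mul_right ?_ k.r_prime.pos)
  rw [mul_assoc, add_mul]
  omega

lemma not_vanishes_left (k : CenteredTiling M p q r A B c) : ¬Vanishes p A := by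
  intro hp
  have hq := (k.toThreePrimeTiling.swap₁₂.vanishes_right_and_vanishes_sq_left fun hq =>
    k.not_vanishes_and_vanishes ⟨hp, hq⟩).2
  have hr := (k.toThreePrimeTiling.swap₂₃.swap₁₂.vanishes_right_and_vanishes_sq_left fun hr =>
    k.swap₂₃.not_vanishes_and_vanishes ⟨hp, hr⟩).2
  refine (mul_lt_sub_one_mul_add k.q_prime k.r_prime k.q_ne_r).not_ge ?_
  calc (q - 1) * q + (r - 1) * r ≤ (arm q c A).card + (arm r c A).card :=
        add_le_add (hq.sub_one_mul_le_card_arm k.q_prime k.surj_q c)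
          (hr.sub_one_mul_le_card_arm k.r_prime k.surj_r c)
    _ ≤ (residueClass p c A).card := k.card_arm_add_card_arm_le
    _ = q * r := k.card_residueClass hp c

lemma vanishes_right (k : CenteredTiling M p q r A B c) : Vanishes p B :=
  (k.vanishes_right_and_vanishes_sq_left k.not_vanishes_left).1

lemma vanishes_sq_left (k : CenteredTiling M p q r A B c) : Vanishes (p ^ 2) A :=
  (k.vanishes_right_and_vanishes_sq_left k.not_vanishes_left).2

lemma sub_one_mul_le_card_arm (k : CenteredTiling M p q r A B c) :
    (p - 1) * p ≤ (arm p c A).card :=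
  k.vanishes_sq_left.sub_one_mul_le_card_arm k.p_prime k.surj_p c

lemma modEq_of_mem_arm (k : CenteredTiling M p q r A B c) (ha : a ∈ arm p c A)
    (ha' : a' ∈ arm q c A) : ¬a ≡ a' [ZMOD p] ∧ ¬a ≡ a' [ZMOD q] ∧ a ≡ a' [ZMOD r] := by
  obtain ⟨haA, hap⟩ := mem_arm.1 ha
  obtain ⟨haA', haq'⟩ := mem_arm.1 ha'
  have haq : a ≡ c [ZMOD q] := (k.center_pq a haA).resolve_left hap
  have har : a ≡ c [ZMOD r] := (k.center_pr a haA).resolve_left hap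
  have hap' : a' ≡ c [ZMOD p] := (k.center_pq a' haA').resolve_right haq'
  have har' : a' ≡ c [ZMOD r] := (k.center_qr a' haA').resolve_left haq'
  exact ⟨fun h => hap (h.trans hap'), fun h => haq' (h.symm.trans haq), har.trans har'.symm⟩

/-- The class of `x + r` modulo `r ^ 2` is as large as that of `x`, but it avoids both arms, so its
elements all agree with `c` modulo `p * q`. -/
lemma card_arm_add_card_arm_le_mul (k : CenteredTiling M p q r A B c) {x : ℤ}
    (hx : ∀ a ∈ arm p c A ∪ arm q c A, a ≡ x [ZMOD r ^ 2]) :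
    (arm p c A).card + (arm q c A).card ≤ p * q := by
  have hshift : ¬x + r ≡ x [ZMOD r ^ 2] := fun h => by
    have hdvd := h.symm.dvd
    rw [add_sub_cancel_left] at hdvd
    exact Nat.not_dvd_of_pos_of_lt k.r_prime.pos (lt_self_pow₀ k.r_prime.one_lt one_lt_two)
      (by exact_mod_cast hdvd)
  have hcenter (a) (ha : a ∈ residueClass (r ^ 2) (x + r) A) : a ≡ c [ZMOD p] ∧ a ≡ c [ZMOD q] := by
    obtain ⟨haA, har⟩ := mem_residueClass.1 ha
    push_cast at har
    have harm (h : a ∈ arm p c A ∪ arm q c A) : False := hshift (har.symm.trans (hx a h))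
    constructor <;> by_contra hne
    · exact harm (Finset.mem_union_left _ (mem_arm.2 ⟨haA, hne⟩))
    · exact harm (Finset.mem_union_right _ (mem_arm.2 ⟨haA, hne⟩))
  have hr := k.swap₂₃.swap₁₂.vanishes_sq_left
  calc (arm p c A).card + (arm q c A).card = (arm p c A ∪ arm q c A).card :=
        (Finset.card_union_of_disjoint k.disjoint_arm).symm
    _ ≤ (residueClass (r ^ 2) x A).card := Finset.card_le_card fun a ha =>
        mem_residueClass.2 ⟨by
          rcases Finset.mem_union.1 ha with h | h <;> exact (mem_arm.1 h).1, by
          exact_mod_cast hx a ha⟩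
    _ = (residueClass (r ^ 2) (x + r) A).card := by
        refine Nat.eq_of_mul_eq_mul_left k.r_prime.pos ?_
        rw [hr.mul_card_residueClass_sq k.r_prime, hr.mul_card_residueClass_sq k.r_prime,
          residueClass_congr (show x ≡ x + r [ZMOD r] by simp)]
    _ ≤ p * q := by
        refine k.card_le_mul_of_forall_modEq (Finset.filter_subset _ _)
          (fun a ha a' ha' => (hcenter a ha).1.trans (hcenter a' ha').1.symm)
          (fun a ha a' ha' => (hcenter a ha).2.trans (hcenter a' ha').2.symm)
          fun a ha a' ha' => ?_
        exact_mod_cast (mem_residueClass.1 ha).2.trans (mem_residueClass.1 ha').2.symm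

lemma exists_modEq_and_not_modEq_sq (k : CenteredTiling M p q r A B c) :
    ∃ a ∈ A, ∃ a' ∈ A, ¬a ≡ a' [ZMOD p] ∧ ¬a ≡ a' [ZMOD q] ∧ a ≡ a' [ZMOD r] ∧
      ¬a ≡ a' [ZMOD r ^ 2] := by
  by_contra! hne
  have hcross (a) (ha : a ∈ arm p c A) (a') (ha' : a' ∈ arm q c A) : a ≡ a' [ZMOD r ^ 2] :=
    have ⟨hp, hq, hr⟩ := k.modEq_of_mem_arm ha ha'
    hne a (mem_arm.1 ha).1 a' (mem_arm.1 ha').1 hp hq hr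
  obtain ⟨x, hx⟩ : (arm p c A).Nonempty := by
    simpa only [Finset.Nonempty, mem_arm] using exists_not_modEq k.p_prime.one_lt k.surj_p c
  obtain ⟨y, hy⟩ : (arm q c A).Nonempty := by
    simpa only [Finset.Nonempty, mem_arm] using exists_not_modEq k.q_prime.one_lt k.surj_q c
  refine (mul_lt_sub_one_mul_add k.p_prime k.q_prime k.p_ne_q).not_ge ?_
  refine (add_le_add k.sub_one_mul_le_card_arm k.swap₁₂.sub_one_mul_le_card_arm).trans
    (k.card_arm_add_card_arm_le_mul (x := x) fun a ha => ?_)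
  rcases Finset.mem_union.1 ha with hap | haq
  · exact (hcross a hap y hy).trans (hcross x hx y hy).symm
  · exact (hcross x hx a haq).symm

lemma modEq_or_modEq_right (k : CenteredTiling M p q r A B c) (hb : b ∈ B) (hb' : b' ∈ B)
    (hr : b ≡ b' [ZMOD r]) (hr₂ : ¬b ≡ b' [ZMOD r ^ 2]) :
    b ≡ b' [ZMOD p] ∨ b ≡ b' [ZMOD q] := by
  by_contra! hne
  obtain ⟨a, ha, a', ha', hap, haq, har, har₂⟩ := k.exists_modEq_and_not_modEq_sq
  refine hap (congrArg (· % (p : ℤ)) (k.tiles.eq_of_gcd_eq ha ha' hb hb' (k.gcd_eq ?_ ?_ ?_)).1)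
  · rw [gcd_sub_prime_pow_eq_one k.p_prime hap, gcd_sub_prime_pow_eq_one k.p_prime hne.1]
  · rw [gcd_sub_prime_pow_eq_one k.q_prime haq, gcd_sub_prime_pow_eq_one k.q_prime hne.2]
  · refine gcd_prime_pow_eq_of_dvd_iff k.r_prime fun i hi => ?_
    rw [← Int.modEq_iff_dvd, ← Int.modEq_iff_dvd, Int.modEq_comm, Int.modEq_comm (a := b')]
    interval_cases i
    · simp [Int.modEq_one]
    · simp [har, hr]
    · simp [har₂, hr₂]

lemma residueClass_mul_eq_empty (k : CenteredTiling M p q r A B c) :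
    residueClass (p * q) (c + 1) A = ∅ := by
  have not_modEq {l : ℕ} (hl : l.Prime) : ¬c + 1 ≡ c [ZMOD l] := fun h => by
    have hdvd := h.symm.dvd
    rw [add_sub_cancel_left] at hdvd
    exact hl.ne_one (Nat.dvd_one.1 (by exact_mod_cast hdvd))
  refine Finset.eq_empty_of_forall_notMem fun a ha => ?_
  obtain ⟨haA, hap, haq⟩ := (mem_residueClass_mul k.coprime_p_q).1 ha
  exact (k.center_pq a haA).elim (fun h => not_modEq k.p_prime (hap.symm.trans h))
    fun h => not_modEq k.q_prime (haq.symm.trans h)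

lemma dvd_card_residueClass (k : CenteredTiling M p q r A B c) (h : Vanishes (p * q) A) :
    q ∣ (residueClass p (c + 1) A).card ∧ p * (residueClass p (c + 1) A).card ≤ A.card := by
  have hcard := h.mul_card_residueClass_add_card k.p_prime k.q_prime k.p_ne_q (c + 1)
  rw [k.residueClass_mul_eq_empty, Finset.card_empty, mul_zero, zero_add] at hcard
  refine ⟨k.coprime_p_q.symm.dvd_of_dvd_mul_left ?_, hcard ▸ Nat.le_add_right _ _⟩
  rw [← Nat.dvd_add_left (dvd_mul_right q _), ← hcard, k.card_left]
  exact (dvd_mul_right q r).mul_left p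

lemma not_vanishes_mul_and_vanishes_mul (k : CenteredTiling M p q r A B c) :
    ¬(Vanishes (p * q) A ∧ Vanishes (p * r) A) := by
  rintro ⟨hpq, hpr⟩
  obtain ⟨hq, hle⟩ := k.dvd_card_residueClass hpq
  have hr := (k.swap₂₃.dvd_card_residueClass hpr).1
  have hp : p ∣ (residueClass p (c + 1) A).card :=
    k.vanishes_sq_left.mul_card_residueClass_sq k.p_prime (c + 1) ▸ dvd_mul_right p _
  have hdvd : A.card ∣ (residueClass p (c + 1) A).card := by
    rw [k.card_left]
    exact (k.coprime_p_q.mul_right k.swap₂₃.coprime_p_q).mul_dvd_of_dvd_of_dvd hp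
      (k.swap₁₂.swap₂₃.coprime_p_q.mul_dvd_of_dvd_of_dvd hq hr)
  obtain ⟨a, ha, hac⟩ := k.surj_p (c + 1)
  have hpos : 0 < (residueClass p (c + 1) A).card :=
    Finset.card_pos.2 ⟨a, mem_residueClass.2 ⟨ha, hac⟩⟩
  exact ((lt_mul_of_one_lt_left hpos k.p_prime.one_lt).trans_le hle).not_ge
    (Nat.le_of_dvd hpos hdvd)

lemma card_residueClass_mul_right (k : CenteredTiling M p q r A B c) (hpr : Vanishes (p * r) B)
    (t : ℤ) : (residueClass (p * r) t B).card = q :=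
  k.symm.swap₂₃.card_residueClass_mul k.vanishes_right k.swap₂₃.swap₁₂.vanishes_right hpr t

lemma card_arm_residueClass (k : CenteredTiling M p q r A B c) (hpr : Vanishes (p * r) B) (t : ℤ) :
    (arm p t (residueClass r t B)).card = (p - 1) * q := by
  have hinter : residueClass p t (residueClass r t B) = residueClass (p * r) t B := by
    ext b
    rw [mem_residueClass, mem_residueClass, mem_residueClass_mul k.swap₂₃.coprime_p_q, and_assoc,
      and_comm (a := b ≡ t [ZMOD r])]
  have hsplit := card_residueClass_add_card_arm p t (residueClass r t B)
  rw [hinter, k.card_residueClass_mul_right hpr,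
    k.symm.swap₂₃.swap₁₂.card_residueClass k.swap₂₃.swap₁₂.vanishes_right] at hsplit
  rw [Nat.sub_mul, one_mul, ← hsplit, Nat.add_sub_cancel_left]

lemma arm_subset_union (k : CenteredTiling M p q r A B c) (hb₁ : b₁ ∈ B) (hb₂ : b₂ ∈ B)
    (hp : b₁ ≡ b₂ [ZMOD p]) (hr : b₁ ≡ b₂ [ZMOD r]) (hr₂ : ¬b₁ ≡ b₂ [ZMOD r ^ 2]) :
    arm p b₁ (residueClass r b₁ B) ⊆
      (residueClass (q * r) b₁ B).erase b₁ ∪ (residueClass (q * r) b₂ B).erase b₂ := by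
  intro b hb
  obtain ⟨hbR, hbp₁⟩ := mem_arm.1 hb
  obtain ⟨hbB, hbr₁⟩ := mem_residueClass.1 hbR
  have hbp₂ : ¬b ≡ b₂ [ZMOD p] := fun h => hbp₁ (h.trans hp.symm)
  have hbr₂ : b ≡ b₂ [ZMOD r] := hbr₁.trans hr
  have mem_erase {b' : ℤ} (hb' : b' ∈ B) (hbp : ¬b ≡ b' [ZMOD p]) (hbr : b ≡ b' [ZMOD r])
      (hbr₂ : ¬b ≡ b' [ZMOD r ^ 2]) : b ∈ (residueClass (q * r) b' B).erase b' :=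
    Finset.mem_erase.2 ⟨fun h => hbp (h ▸ rfl),
      (mem_residueClass_mul k.swap₁₂.swap₂₃.coprime_p_q).2
        ⟨hbB, (k.modEq_or_modEq_right hbB hb' hbr hbr₂).resolve_left hbp, hbr⟩⟩
  by_cases h : b ≡ b₁ [ZMOD r ^ 2]
  · exact Finset.mem_union_right _ (mem_erase hb₂ hbp₂ hbr₂ fun h' => hr₂ (h.symm.trans h'))
  · exact Finset.mem_union_left _ (mem_erase hb₁ hbp₁ hbr₁ h)

lemma not_modEq_of_not_modEq_sq (k : CenteredTiling M p q r A B c) (hq : 3 ≤ q)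
    (hpr : Vanishes (p * r) B) (hqr : Vanishes (q * r) B) (hb₁ : b₁ ∈ B) (hb₂ : b₂ ∈ B)
    (hr : b₁ ≡ b₂ [ZMOD r]) (hr₂ : ¬b₁ ≡ b₂ [ZMOD r ^ 2]) : ¬b₁ ≡ b₂ [ZMOD p] := by
  intro hp
  have hcard {b : ℤ} (hb : b ∈ B) : ((residueClass (q * r) b B).erase b).card = p - 1 := by
    rw [Finset.card_erase_of_mem (mem_residueClass.2 ⟨hb, rfl⟩),
      k.swap₁₂.card_residueClass_mul_right hqr]
  have hle : (p - 1) * q ≤ (p - 1) * 2 :=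
    calc (p - 1) * q = (arm p b₁ (residueClass r b₁ B)).card :=
          (k.card_arm_residueClass hpr b₁).symm
      _ ≤ _ := Finset.card_le_card (k.arm_subset_union hb₁ hb₂ hp hr hr₂)
      _ ≤ _ := Finset.card_union_le _ _
      _ = (p - 1) * 2 := by rw [hcard hb₁, hcard hb₂, mul_two]
  exact absurd (Nat.le_of_mul_le_mul_left hle (Nat.sub_pos_of_lt k.p_prime.one_lt)) (by omega)

lemma modEq_sq_right_of_three_le (k : CenteredTiling M p q r A B c) (hq : 3 ≤ q)
    (hpr : Vanishes (p * r) B) (hqr : Vanishes (q * r) B) (hb₁ : b₁ ∈ B) (hb₂ : b₂ ∈ B)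
    (hr : b₁ ≡ b₂ [ZMOD r]) : b₁ ≡ b₂ [ZMOD r ^ 2] := by
  by_contra hr₂
  have modEq_q {b b' : ℤ} (hb : b ∈ B) (hb' : b' ∈ B) (hr : b ≡ b' [ZMOD r])
      (hr₂ : ¬b ≡ b' [ZMOD r ^ 2]) : b ≡ b' [ZMOD q] :=
    (k.modEq_or_modEq_right hb hb' hr hr₂).resolve_left
      (k.not_modEq_of_not_modEq_sq hq hpr hqr hb hb' hr hr₂)
  have hq₁₂ := modEq_q hb₁ hb₂ hr hr₂
  obtain ⟨b, hb⟩ : (arm q b₁ (residueClass r b₁ B)).Nonempty := by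
    rw [← Finset.card_pos, k.swap₁₂.card_arm_residueClass hqr]
    exact Nat.mul_pos (Nat.sub_pos_of_lt k.q_prime.one_lt) k.p_prime.pos
  obtain ⟨hbR, hbq⟩ := mem_arm.1 hb
  obtain ⟨hbB, hbr⟩ := mem_residueClass.1 hbR
  have hb₁' : b ≡ b₁ [ZMOD r ^ 2] := by
    by_contra h
    exact hbq (modEq_q hbB hb₁ hbr h)
  have hb₂' : b ≡ b₂ [ZMOD r ^ 2] := by
    by_contra h
    exact hbq ((modEq_q hbB hb₂ (hbr.trans hr) h).trans hq₁₂.symm)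
  exact hr₂ (hb₁'.symm.trans hb₂')

lemma modEq_sq_right (k : CenteredTiling M p q r A B c) (hpr : Vanishes (p * r) B)
    (hqr : Vanishes (q * r) B) (hb₁ : b₁ ∈ B) (hb₂ : b₂ ∈ B) (hr : b₁ ≡ b₂ [ZMOD r]) :
    b₁ ≡ b₂ [ZMOD r ^ 2] := by
  rcases le_or_gt 3 q with hq | hq
  · exact k.modEq_sq_right_of_three_le hq hpr hqr hb₁ hb₂ hr
  · have hp : 3 ≤ p := by
      have := k.p_prime.two_le
      have := k.q_prime.two_le
      have := k.p_ne_q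
      omega
    exact k.swap₁₂.modEq_sq_right_of_three_le hp hqr hpr hb₁ hb₂ hr

theorem hasT2_of_vanishes (k : CenteredTiling M p q r A B c) (hpr : Vanishes (p * r) B)
    (hqr : Vanishes (q * r) B) : HasT2 M A ∧ HasT2 M B := by
  have k' := k.toThreePrimeTiling.swap₂₃.swap₁₂
  refine k'.hasT2_of_slabReduction <| k'.tilesMod.slabReduction_of_determinesRightSq k.r_prime
    k'.coprime_sq_mul_sq (k'.card_right ▸ dvd_mul_right r _) fun a ha a' ha' b hb b' hb' hN hr => ?_
  refine k.modEq_sq_right hpr hqr hb hb' ?_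
  rcases k'.tilesMod.modEq_or_modEq k.r_prime k'.coprime_sq_mul_sq ha ha' hb hb' hN with h | h
  · exact Int.ModEq.add_left_cancel h hr
  · exact h

/-- At most one of `p * q`, `p * r` and `q * r` is an order of vanishing of `A`, so at least two of
them are orders of vanishing of `B`. -/
theorem hasT2 (k : CenteredTiling M p q r A B c) : HasT2 M A ∧ HasT2 M B := by
  have hpq := k.vanishes_mul_or
  have hpr := k.swap₂₃.vanishes_mul_or
  have hqr := k.swap₁₂.swap₂₃.vanishes_mul_or
  have hp := k.not_vanishes_mul_and_vanishes_mul
  have hq := k.swap₁₂.not_vanishes_mul_and_vanishes_mul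
  have hr := k.swap₂₃.swap₁₂.not_vanishes_mul_and_vanishes_mul
  rw [mul_comm q p] at hq
  rw [mul_comm r p, mul_comm r q] at hr
  have htwo : (Vanishes (p * r) B ∧ Vanishes (q * r) B) ∨ (Vanishes (p * q) B ∧ Vanishes (r * q) B)
      ∨ (Vanishes (q * p) B ∧ Vanishes (r * p) B) := by
    rw [mul_comm r q, mul_comm q p, mul_comm r p]
    tauto
  rcases htwo with ⟨hpr, hqr⟩ | ⟨hpq, hrq⟩ | ⟨hqp, hrp⟩
  · exact k.hasT2_of_vanishes hpr hqr
  · exact k.swap₂₃.hasT2_of_vanishes hpq hrq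
  · exact k.swap₁₂.swap₂₃.hasT2_of_vanishes hqp hrp

end CenteredTiling

namespace ThreePrimeTiling

theorem hasT2_of_agree (k : ThreePrimeTiling M p q r A B)
    (hagree : ∀ a ∈ A, ∀ a' ∈ A, a ≡ a' [ZMOD p] ∨ a ≡ a' [ZMOD q] ∨ a ≡ a' [ZMOD r]) :
    HasT2 M A ∧ HasT2 M B := by
  wlog hp₃ : 3 ≤ p generalizing p q
  · refine this k.swap₁₂ (fun a ha a' ha' => or_left_comm.1 (hagree a ha a' ha')) ?_
    have := k.p_prime.two_le
    have := k.q_prime.two_le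
    have := k.p_ne_q
    omega
  by_cases hp : DeterminesLeft p (q ^ 2 * r ^ 2) A B
  · exact k.hasT2_of_determinesLeft hp
  by_cases hq : DeterminesLeft q (p ^ 2 * r ^ 2) A B
  · exact k.swap₁₂.hasT2_of_determinesLeft hq
  by_cases hr : DeterminesLeft r (p ^ 2 * q ^ 2) A B
  · exact k.swap₂₃.swap₁₂.hasT2_of_determinesLeft hr
  have surj {p q r : ℕ} (k : ThreePrimeTiling M p q r A B)
      (h : ¬DeterminesLeft p (q ^ 2 * r ^ 2) A B) (x : ℤ) : ∃ a ∈ A, a ≡ x [ZMOD p] :=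
    k.tilesMod.exists_modEq_of_not_determinesLeft k.p_prime k.coprime_sq_mul_sq h x
  have hAp := surj k hp
  have hAq := surj k.swap₁₂ hq
  have hAr := surj k.swap₂₃.swap₁₂ hr
  obtain ⟨c, hc⟩ := exists_center_modEq hp₃ k.q_prime.one_lt k.r_prime.one_lt k.coprime_p_q
    k.swap₂₃.coprime_p_q k.swap₁₂.swap₂₃.coprime_p_q hagree hAp hAq hAr
  exact CenteredTiling.hasT2 ⟨k, hAp, hAq, hAr, fun a ha => (hc a ha).1,
    fun a ha => (hc a ha).2.1, fun a ha => (hc a ha).2.2⟩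

/-- By Sands's theorem, differences coprime to `M` cannot occur in both tiles. -/
theorem hasT2 (k : ThreePrimeTiling M p q r A B) : HasT2 M A ∧ HasT2 M B := by
  by_cases hA : ∀ a ∈ A, ∀ a' ∈ A, a ≡ a' [ZMOD p] ∨ a ≡ a' [ZMOD q] ∨ a ≡ a' [ZMOD r]
  · exact k.hasT2_of_agree hA
  refine (k.symm.hasT2_of_agree fun b hb b' hb' => ?_).symm
  by_contra! hbb'
  push Not at hA
  obtain ⟨a, ha, a', ha', hap, haq, har⟩ := hA
  refine hap (congrArg (· % (p : ℤ)) (k.tiles.eq_of_gcd_eq ha ha' hb hb' (k.gcd_eq ?_ ?_ ?_)).1)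
  · rw [gcd_sub_prime_pow_eq_one k.p_prime hap, gcd_sub_prime_pow_eq_one k.p_prime hbb'.1]
  · rw [gcd_sub_prime_pow_eq_one k.q_prime haq, gcd_sub_prime_pow_eq_one k.q_prime hbb'.2.1]
  · rw [gcd_sub_prime_pow_eq_one k.r_prime har, gcd_sub_prime_pow_eq_one k.r_prime hbb'.2.2]

end ThreePrimeTiling

end ThreePrimes

section Representatives

variable {M s : ℕ} {A B : Finset (ZMod M)}

/-- The representatives in `{0, …, M - 1}` of a set of residues modulo `M`. -/
def representatives (A : Finset (ZMod M)) : Finset ℤ :=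
  A.image fun a => (a.val : ℤ)

lemma mem_representatives {x : ℤ} : x ∈ representatives A ↔ ∃ a ∈ A, (a.val : ℤ) = x :=
  Finset.mem_image

variable [NeZero M]

lemma injective_natCast_val : Function.Injective fun a : ZMod M => (a.val : ℤ) :=
  Nat.cast_injective.comp (ZMod.val_injective M)

lemma card_representatives : (representatives A).card = A.card :=
  Finset.card_image_of_injective _ injective_natCast_val

lemma intMask_representatives : intMask M (representatives A) = maskPoly M A := by
  rw [intMask, representatives, Finset.sum_image injective_natCast_val.injOn, maskPoly]
  refine Finset.sum_congr rfl fun a _ => ?_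
  rw [Int.emod_eq_of_lt a.val.cast_nonneg (Int.ofNat_lt.2 a.val_lt), Int.toNat_natCast]

lemma cycDvd_iff_vanishes (hs : s ∣ M) : cycDvd M s A ↔ Vanishes s (representatives A) := by
  rw [cycDvd, ← intMask_representatives, cyclotomic_dvd_intMask_iff (NeZero.ne M) hs]

lemma factorization_prod_prime_pow {P : Finset ℕ} (hP : ∀ p ∈ P, p.Prime) (e : ℕ → ℕ) {l : ℕ}
    (hl : l ∈ P) : (∏ p ∈ P, p ^ e p).factorization l = e l := by
  rw [Nat.factorization_prod fun p hp => pow_ne_zero _ (hP p hp).ne_zero, Finsupp.finsetSum_apply,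
    Finset.sum_eq_single_of_mem l hl fun p hp hpl => ?_]
  · simp [(hP l hl).factorization_pow]
  · simp [(hP p hp).factorization_pow, hpl]

theorem HasT2.satisfiesT2 (h : HasT2 M (representatives A)) : SatisfiesT2 M A := by
  intro P e hP he
  have hprime : ∀ p ∈ P, p.Prime := fun p hp => (he p hp).1
  have hdvd : ∏ p ∈ P, p ^ e p ∣ M := by
    refine Finset.prod_dvd_of_isRelPrime (fun p hp q hq hpq => ?_) fun p hp => (he p hp).2.2.1
    exact Nat.coprime_iff_isRelPrime.1 <|
      Nat.Coprime.pow _ _ ((Nat.coprime_primes (hprime p hp) (hprime q hq)).2 hpq)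
  rw [cycDvd_iff_vanishes hdvd]
  refine h _ hdvd (fun hone => ?_) fun l hl hlP => ?_
  · obtain ⟨p, hp⟩ := hP
    have hpow : p ^ e p = 1 := Nat.dvd_one.1 (hone ▸ Finset.dvd_prod_of_mem _ hp)
    exact (Nat.one_lt_pow (Nat.one_le_iff_ne_zero.1 (he p hp).2.1) (hprime p hp).one_lt).ne' hpow
  · obtain ⟨p, hp, hlp⟩ := (Prime.dvd_finsetProd_iff hl.prime _).1 hlP
    obtain rfl : l = p :=
      (Nat.prime_dvd_prime_iff_eq hl (hprime p hp)).1 (hl.dvd_of_dvd_pow hlp)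
    rw [factorization_prod_prime_pow hprime e hp, ← cycDvd_iff_vanishes (he l hp).2.2.1]
    exact (he l hp).2.2.2

lemma IsTiling.tilesMod (h : IsTiling M (A : Set (ZMod M)) (B : Set (ZMod M))) :
    TilesMod M (representatives A) (representatives B) := by
  refine ⟨Set.mapsTo_univ _ _, ?_, fun z _ => ?_⟩
  · rintro ⟨_, _⟩ ⟨hx, hy⟩ ⟨_, _⟩ ⟨hx', hy'⟩ hsum
    obtain ⟨a, ha, rfl⟩ := mem_representatives.1 hx
    obtain ⟨b, hb, rfl⟩ := mem_representatives.1 hy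
    obtain ⟨a', ha', rfl⟩ := mem_representatives.1 hx'
    obtain ⟨b', hb', rfl⟩ := mem_representatives.1 hy'
    simp only [Int.cast_natCast, ZMod.natCast_zmod_val] at hsum
    obtain ⟨rfl, rfl⟩ := Prod.mk.inj <|
      (h (a' + b')).unique (y₁ := (a, b)) (y₂ := (a', b')) ⟨ha, hb, hsum⟩ ⟨ha', hb', rfl⟩
    rfl
  · obtain ⟨⟨a, b⟩, ⟨ha, hb, rfl⟩, -⟩ := h z
    refine ⟨(a.val, b.val), ⟨mem_representatives.2 ⟨a, ha, rfl⟩,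
      mem_representatives.2 ⟨b, hb, rfl⟩⟩, ?_⟩
    simp only [Int.cast_natCast, ZMod.natCast_zmod_val]

end Representatives

theorem statement0_general
    (p q r : ℕ) (hp : p.Prime) (hq : q.Prime) (hr : r.Prime)
    (hpq : p ≠ q) (hpr : p ≠ r) (hqr : q ≠ r)
    (M : ℕ) (hM : M = p ^ 2 * q ^ 2 * r ^ 2)
    (A B : Finset (ZMod M))
    (htile : IsTiling M (A : Set (ZMod M)) (B : Set (ZMod M)))
    (hcardA : A.card = p * q * r) (hcardB : B.card = p * q * r) :
    SatisfiesT2 M A ∧ SatisfiesT2 M B := by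
  have : NeZero M := ⟨by simp [hM, hp.ne_zero, hq.ne_zero, hr.ne_zero]⟩
  have k : ThreePrimeTiling M p q r (representatives A) (representatives B) :=
    ⟨htile.tilesMod, hp, hq, hr, hpq, hpr, hqr, by rw [card_representatives, hcardA, mul_assoc],
      by rw [card_representatives, hcardB, mul_assoc]⟩
  exact ⟨k.hasT2.1.satisfiesT2, k.hasT2.2.satisfiesT2⟩

/-- If `M = p_i² p_j² p_k²` with `p_i, p_j, p_k` distinct odd primes,
`A ⊕ B = ℤ_M` and `|A| = |B| = p_i p_j p_k`, then both `A` and `B` satisfy (T2). -/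
theorem statement0
    (pi pj pk : ℕ) (hpi : pi.Prime) (hpj : pj.Prime) (hpk : pk.Prime)
    (hoi : Odd pi) (hoj : Odd pj) (hok : Odd pk)
    (hij : pi ≠ pj) (hik : pi ≠ pk) (hjk : pj ≠ pk)
    (M : ℕ) (hM : M = pi ^ 2 * pj ^ 2 * pk ^ 2)
    (A B : Finset (ZMod M))
    (htile : IsTiling M (A : Set (ZMod M)) (B : Set (ZMod M)))
    (hcardA : A.card = pi * pj * pk) (hcardB : B.card = pi * pj * pk) :
    SatisfiesT2 M A ∧ SatisfiesT2 M B :=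
  statement0_general pi pj pk hpi hpj hpk hij hik hjk M hM A B htile hcardA hcardB
end

section
/- Let p_i, p_j, p_k be distinct odd primes and M = p_i^2 p_j^2 p_k^2. If A ⊆ ℤ_M tiles ℤ_M by translations, i.e., there exists B ⊆ ℤ_M with A ⊕ B = ℤ_M, then A is spectral in ℤ_M. -/
open Polynomial

/-- `A ⊆ ℤ_M` is spectral: there is `L ⊆ ℤ_M` with `|L| = |A|` whose characters are
pairwise orthogonal on `A`. -/
def IsSpectral (M : ℕ) (A : Finset (ZMod M)) : Prop :=
  ∃ L : Finset (ZMod M), L.card = A.card ∧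
    ∀ l ∈ L, ∀ l' ∈ L, l ≠ l' →
      (∑ a ∈ A,
        Complex.exp (2 * (Real.pi : ℂ) * Complex.I * (((l - l') * a).val : ℂ) / (M : ℂ))) = 0

/-!
Induct on the number of prime factors of `M`, passing from `M = p ^ (n + 1) * m` with `p ∤ m` to
`p ^ n * m`. Write `ZMod M` as `X × Y` with `X = ZMod (p ^ (n + 1))` and `Y = ZMod m`; the
projection of `X` to `X' = ZMod (p ^ n)` has fibres of size `p`. Call a fibre, taken at a fixed
value in `Y`, a line.

Replacing a tile `b` by `r • b`, with `r` coprime to the order of the group, preserves tilings: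
for a prime `q` this follows by taking `q`-th powers in `𝔽_q[G]`. Hence on each line one of the two
tiles contributes constantly and the other sweeps the line. In `𝔽_p[Y]` the mask of the set of
lines over `c` swept by the first tile and the mask of the set of lines over `c'` swept by the
second one multiply to zero, and taking `p`-th powers shows that one of the two sets is empty,
so that the same tile sweeps all the lines. Keeping only the part of that tile over a section of
`X → X'` gives a tiling of `X' × Y`, whose spectrum lifts to `X × Y`.

Which tile sweeps the lines is visible on `b` alone, so the spectrum of `a` obtained in this way
depends only on `b`.
-/

open Finset

section Tilings

variable {G H ι κ : Type*} [AddCommGroup G] [AddCommGroup H]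

/-- Two families `a` and `b` tile `G` if every element of `G` is `a i + b j` for exactly one pair
`(i, j)`. Families replace subsets because dilations and projections of the tiles are injective
only a posteriori. -/
def IsTilingPair (a : ι → G) (b : κ → G) : Prop :=
  Function.Bijective fun x : ι × κ ↦ a x.1 + b x.2

namespace IsTilingPair

variable {a : ι → G} {b : κ → G}

theorem symm (T : IsTilingPair a b) : IsTilingPair b a := by
  simpa only [IsTilingPair, Function.comp_def, Equiv.prodComm_apply, Prod.fst_swap, Prod.snd_swap,
    add_comm] using Function.Bijective.comp T (Equiv.prodComm κ ι).bijective

theorem map (T : IsTilingPair a b) (e : G ≃+ H) : IsTilingPair (e ∘ a) (e ∘ b) := by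
  simpa only [IsTilingPair, Function.comp_def, map_add] using e.bijective.comp T

theorem nonempty_left (T : IsTilingPair a b) : Nonempty ι :=
  let ⟨x, _⟩ := T.2 0
  ⟨x.1⟩

theorem finite_left [Finite G] (T : IsTilingPair a b) : Finite ι :=
  have := T.symm.nonempty_left
  have := Finite.of_injective _ T.1
  Finite.prod_left κ

theorem card_mul_card [Fintype G] [Fintype ι] [Fintype κ] (T : IsTilingPair a b) :
    Fintype.card ι * Fintype.card κ = Fintype.card G := by
  rw [← Fintype.card_prod, Fintype.card_of_bijective T]

end IsTilingPair

end Tilings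

section Masks

open AddMonoidAlgebra

variable {R G ι κ : Type*}

/-- The mask `∑ i ∈ s, [v i]` of a finite family in the group algebra `R[G]`, the analogue of the
mask polynomial for an arbitrary group `G` and coefficients `R`. -/
noncomputable def mask (R : Type*) [Semiring R] (s : Finset ι) (v : ι → G) :
    AddMonoidAlgebra R G :=
  ∑ i ∈ s, single (v i) 1

theorem coeff_mask [Semiring R] [DecidableEq G] (s : Finset ι) (v : ι → G) (z : G) :
    (mask R s v).coeff z = (#{i ∈ s | v i = z} : R) := by
  simp [mask, AddMonoidAlgebra.coeff_sum, Finsupp.finsetSum_apply, Finsupp.single_apply,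
    Finset.sum_boole]

theorem coeff_mask_id [Semiring R] [DecidableEq G] (s : Finset G) (z : G) :
    (mask R s id).coeff z = if z ∈ s then 1 else 0 := by
  rw [coeff_mask]
  split_ifs with hz <;> simp [Finset.filter_eq', hz]

theorem mask_mul_mask [Semiring R] [Add G] (s : Finset ι) (t : Finset κ) (v : ι → G)
    (w : κ → G) : mask R s v * mask R t w = mask R (s ×ˢ t) fun x ↦ v x.1 + w x.2 := by
  simp only [mask, Finset.sum_mul_sum, single_mul_single, one_mul, Finset.sum_product]

theorem mask_mul_mask_univ_id [Semiring R] [AddGroup G] [Fintype G] (s : Finset ι) (v : ι → G) :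
    mask R s v * mask R univ id = (#s : R) • mask R univ (id : G → G) := by
  have translate (g : G) :
      single g 1 * mask R univ id = mask R univ (id : G → G) := by
    simp only [mask, Finset.mul_sum, single_mul_single, one_mul, id]
    exact Equiv.sum_comp (Equiv.addLeft g) fun x ↦ single x (1 : R)
  rw [mask, Finset.sum_mul]
  simp only [translate, Finset.sum_const, Nat.cast_smul_eq_nsmul]

theorem mask_pow_mul_mask_univ_id [CommSemiring R] [AddCommGroup G] [Fintype G] (s : Finset ι)
    (v : ι → G) (n : ℕ) :
    mask R s v ^ n * mask R univ id = (#s : R) ^ n • mask R univ (id : G → G) := by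
  induction n with
  | zero => simp
  | succ n ih =>
    rw [pow_succ, mul_assoc, mask_mul_mask_univ_id, mul_smul_comm, ih, smul_smul, pow_succ']

theorem mask_pow_expChar [CommSemiring R] (p : ℕ) [ExpChar R p] [AddCommMonoid G]
    (s : Finset ι) (v : ι → G) : mask R s v ^ p = mask R s fun i ↦ p • v i := by
  have : ExpChar (AddMonoidAlgebra R G) p :=
    expChar_of_injective_algebraMap (FaithfulSMul.algebraMap_injective R _) p
  simp only [mask, sum_pow_char, single_pow, one_pow]

end Masks

section Dilation

variable {G ι κ : Type*} [AddCommGroup G] [Fintype G]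
  {a : ι → G} {b : κ → G}

theorem IsTilingPair.mask_mul_mask {R : Type*} [Semiring R] [Fintype ι] [Fintype κ]
    (T : IsTilingPair a b) :
    mask R univ a * mask R univ b = mask R univ (id : G → G) := by
  rw [_root_.mask_mul_mask, univ_product_univ]
  exact Function.Bijective.sum_comp T fun g ↦ AddMonoidAlgebra.single g (1 : R)

/-- In `𝔽_q[G]` the mask of `q • b` is the `q`-th power of the mask of `b`, so its product with the
mask of `a` is a nonzero multiple of the constant mask. -/
theorem IsTilingPair.nsmul_prime (T : IsTilingPair a b) {q : ℕ} (hq : q.Prime)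
    (hqG : ¬ q ∣ Fintype.card G) : IsTilingPair a fun j ↦ q • b j := by
  classical
  have : Fact q.Prime := ⟨hq⟩
  have := T.finite_left
  have := T.symm.finite_left
  let := Fintype.ofFinite ι
  let := Fintype.ofFinite κ
  have hκ : (Fintype.card κ : ZMod q) ≠ 0 := fun h ↦
    hqG (T.card_mul_card ▸ ((ZMod.natCast_eq_zero_iff _ _).1 h).mul_left _)
  have mask_eq : mask (ZMod q) univ (fun x : ι × κ ↦ a x.1 + q • b x.2) =
      (Fintype.card κ : ZMod q) ^ (q - 1) • mask (ZMod q) univ id := by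
    calc mask (ZMod q) univ (fun x : ι × κ ↦ a x.1 + q • b x.2)
        = mask (ZMod q) univ a * mask (ZMod q) univ b ^ q := by
          rw [mask_pow_expChar, _root_.mask_mul_mask, univ_product_univ]
      _ = mask (ZMod q) univ b ^ (q - 1) * mask (ZMod q) univ id := by
          rw [← T.mask_mul_mask, ← mul_pow_sub_one hq.ne_zero]; ring
      _ = _ := mask_pow_mul_mask_univ_id _ _ _
  refine (Fintype.bijective_iff_surjective_and_card _).2 ⟨fun z ↦ ?_, ?_⟩
  · have coeff_ne : (mask (ZMod q) univ (fun x : ι × κ ↦ a x.1 + q • b x.2)).coeff z ≠ 0 := by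
      simpa [mask_eq, coeff_mask_id] using pow_ne_zero (q - 1) hκ
    rw [coeff_mask] at coeff_ne
    obtain ⟨x, hx⟩ := card_ne_zero.1 fun h ↦ coeff_ne (by rw [h, Nat.cast_zero])
    exact ⟨x, (mem_filter.1 hx).2⟩
  · rw [Fintype.card_prod, T.card_mul_card]

theorem IsTilingPair.nsmul_coprime (T : IsTilingPair a b) {r : ℕ}
    (hr : r.Coprime (Fintype.card G)) : IsTilingPair a fun j ↦ r • b j := by
  induction r using Nat.recOnMul generalizing b with
  | zero =>
    have : Subsingleton G := Fintype.card_le_one_iff_subsingleton.1 (by simpa using hr.le)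
    rwa [Subsingleton.elim (fun j ↦ 0 • b j) b]
  | one => simpa using T
  | prime q hq => exact T.nsmul_prime hq ((Nat.Prime.coprime_iff_not_dvd hq).1 hr)
  | mul r s ihr ihs =>
    simpa only [mul_smul] using ihr (ihs T hr.coprime_mul_left) hr.coprime_mul_right

end Dilation

section UniformMask

variable {C Y : Type*} [AddCommGroup Y] [Fintype Y] [DecidableEq Y] {p : ℕ} [Fact p.Prime]

/-- The hypothesis says that the mask of `F` is idempotent up to the factor `#F`, so its `p`-th
power is constant; but that power is the indicator function of `p • F`. -/
theorem eq_empty_or_eq_univ_of_mask_mul_mask_compl (hY : ¬ p ∣ Fintype.card Y) {F : Finset Y}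
    (hF : mask (ZMod p) F id * mask (ZMod p) Fᶜ id = 0) : F = ∅ ∨ F = univ := by
  have hp : p.Prime := Fact.out
  have mask_add : mask (ZMod p) F id + mask (ZMod p) Fᶜ id = mask (ZMod p) univ id :=
    sum_add_sum_compl F _
  have mask_sq : mask (ZMod p) F id * mask (ZMod p) F id =
      mask (ZMod p) F id * mask (ZMod p) univ id := by
    rw [← mask_add, mul_add, hF, add_zero]
  have mask_pow (n : ℕ) : mask (ZMod p) F id ^ (n + 2) =
      (#F : ZMod p) ^ (n + 1) • mask (ZMod p) univ id := by
    rw [pow_succ, pow_succ, mul_assoc, mask_sq, ← mul_assoc, ← pow_succ, mask_pow_mul_mask_univ_id]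
  have smul_injective : Function.Injective fun y : Y ↦ p • y :=
    (nsmulCoprime (G := Y) (n := p) (by
      rw [Nat.card_eq_fintype_card]
      exact ((Nat.Prime.coprime_iff_not_dvd hp).2 hY).symm)).injective
  have indicator_eq (y : Y) : (if y ∈ F then 1 else 0 : ZMod p) = (#F : ZMod p) ^ (p - 1) := by
    obtain ⟨n, hn⟩ := Nat.exists_eq_add_of_le' hp.two_le
    have := congrArg (fun f ↦ f.coeff (p • y)) (mask_pow n)
    simp only [← hn, mask_pow_expChar, coeff_mask, AddMonoidAlgebra.coeff_smul_apply, id,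
      smul_injective.eq_iff, filter_eq', mem_univ, if_true, card_singleton] at this
    rw [show p - 1 = n + 1 by omega]
    split_ifs at this ⊢ <;> simpa using this
  rw [or_iff_not_imp_left, ← ne_eq, ← nonempty_iff_ne_empty]
  rintro ⟨y₀, h₀⟩
  refine eq_univ_of_forall fun y ↦ ?_
  by_contra hy
  have := (indicator_eq y).trans (indicator_eq y₀).symm
  simp [h₀, hy] at this

theorem forall_eq_empty_or_forall_eq_univ (hY : ¬ p ∣ Fintype.card Y) {F : C → Finset Y}
    (hF : ∀ c c', mask (ZMod p) (F c) id * mask (ZMod p) (F c')ᶜ id = 0) :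
    (∀ c, F c = ∅) ∨ ∀ c, F c = univ := by
  have dichotomy (c : C) := eq_empty_or_eq_univ_of_mask_mul_mask_compl hY (hF c c)
  by_contra! ⟨⟨c, hc⟩, c', hc'⟩
  have hmul := hF c c'
  rw [(dichotomy c).resolve_left hc.ne_empty, (dichotomy c').resolve_right hc', compl_empty,
    mask_mul_mask_univ_id] at hmul
  have hcard : (Fintype.card Y : ZMod p) = 0 := by
    simpa [coeff_mask_id] using congrArg (fun f ↦ f.coeff 0) hmul
  exact hY ((ZMod.natCast_eq_zero_iff _ _).1 hcard)

end UniformMask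

section SectionMasks

variable {X X' Y ι κ : Type*} [AddCommGroup X] [AddCommGroup X'] [AddCommGroup Y]
  [DecidableEq X'] [Fintype ι]

/-- The mask in `𝔽_p[Y]` of the `Y`-components of those `a i` whose `X`-component lies over
`u`. -/
noncomputable def classMask (p : ℕ) (h : X →+ X') (a : ι → X × Y) (u : X') :
    AddMonoidAlgebra (ZMod p) Y :=
  mask (ZMod p) {i | h (a i).1 = u} fun i ↦ (a i).2

variable [DecidableEq X] [Fintype κ]

/-- The mask in `𝔽_p[Y]` of the `Y`-components of the sums `a i + b j` over `c` for which the
`X`-component of `a i` is in the range of the section `σ` of `h`. It detects the lines over `c`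
swept by `a`, see `sectionMask_eq`. -/
noncomputable def sectionMask (p : ℕ) (h : X →+ X') (a : ι → X × Y)
    (b : κ → X × Y) (σ : X' → X) (c : X') : AddMonoidAlgebra (ZMod p) Y :=
  mask (ZMod p) {x : ι × κ | h (a x.1).1 + h (b x.2).1 = c ∧ σ (h (a x.1).1) = (a x.1).1}
    fun x ↦ (a x.1).2 + (b x.2).2

theorem sectionMask_eq_sum (p : ℕ) (h : X →+ X') (a : ι → X × Y) (b : κ → X × Y)
    (σ : X' → X) (c : X') : sectionMask p h a b σ c =
      ∑ i with σ (h (a i).1) = (a i).1,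
        AddMonoidAlgebra.single (a i).2 1 * classMask p h b (c - h (a i).1) := by
  simp only [sectionMask, classMask, mask, mul_sum, sum_filter, ← univ_product_univ, sum_product,
    ite_and, eq_sub_iff_add_eq']
  refine sum_congr rfl fun i _ ↦ ?_
  split_ifs <;> simp

end SectionMasks

section SplitTilings

theorem surjective_of_card_fiber_eq {α β : Type*} [Fintype α] [DecidableEq β] {f : α → β} {n : ℕ}
    (hn : 0 < n) (hf : ∀ b, #{x | f x = b} = n) : Function.Surjective f := fun b ↦
  let ⟨x, hx⟩ := card_pos.1 (hf b ▸ hn)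
  ⟨x, (mem_filter.1 hx).2⟩

theorem forall_eq_or_forall_eq_of_pairwise {T α β : Type*} {f : T → α} {g : T → β} {s : Set T}
    (H : ∀ x ∈ s, ∀ y ∈ s, f x = f y ∨ g x = g y) :
    (∀ x ∈ s, ∀ y ∈ s, f x = f y) ∨ ∀ x ∈ s, ∀ y ∈ s, g x = g y := by
  by_contra! ⟨⟨x, hx, y, hy, hf⟩, z, hz, w, hw, hg⟩
  have eq_of_ne : ∀ t ∈ s, g t = g x := by grind
  exact hg ((eq_of_ne z hz).trans (eq_of_ne w hw).symm)

variable {X X' Y ι κ : Type*} [AddCommGroup X] [AddCommGroup X'] [AddCommGroup Y]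
  [DecidableEq X'] [DecidableEq Y] [Fintype ι] [Fintype κ]
  {p : ℕ} {h : X →+ X'} {a : ι → X × Y} {b : κ → X × Y}

/-- The pairs `(i, j)` whose sum `a i + b j` lies on the line `h ⁻¹' {c} × {y}` of `X × Y`. -/
def linePairs (h : X →+ X') (a : ι → X × Y) (b : κ → X × Y) (c : X') (y : Y) : Finset (ι × κ) :=
  {x | h (a x.1).1 + h (b x.2).1 = c ∧ (a x.1).2 + (b x.2).2 = y}

theorem mem_linePairs {c : X'} {y : Y} {x : ι × κ} : x ∈ linePairs h a b c y ↔
    h (a x.1).1 + h (b x.2).1 = c ∧ (a x.1).2 + (b x.2).2 = y :=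
  mem_filter_univ x

theorem swap_mem_linePairs {c : X'} {y : Y} {x : ι × κ} :
    x.swap ∈ linePairs h b a c y ↔ x ∈ linePairs h a b c y := by
  simp only [mem_linePairs, Prod.fst_swap, Prod.snd_swap, add_comm]

/-- The line over `(c, y)` is swept by `a`: the `X`-component of the `b`-summand is constant
along it, so that it is a translate of part of `a`. -/
def SweptByLeft (h : X →+ X') (a : ι → X × Y) (b : κ → X × Y) (c : X') (y : Y) : Prop :=
  ∀ x ∈ linePairs h a b c y, ∀ x' ∈ linePairs h a b c y, (b x.2).1 = (b x'.2).1

theorem sweptByLeft_swap_iff {c : X'} {y : Y} : SweptByLeft h b a c y ↔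
    ∀ x ∈ linePairs h a b c y, ∀ x' ∈ linePairs h a b c y, (a x.1).1 = (a x'.1).1 :=
  ⟨fun H _ hx _ hx' ↦ H _ (swap_mem_linePairs.2 hx) _ (swap_mem_linePairs.2 hx'),
    fun H x hx x' hx' ↦ H x.swap (swap_mem_linePairs.2 hx) x'.swap (swap_mem_linePairs.2 hx')⟩

/-- A tiling of `X × Y` that splits along the fibers of `h : X → X'`, all of size `p`: two
representations on a common line share the `X`-component of one of their summands. -/
structure IsSplitTiling [Fintype X] (p : ℕ) (h : X →+ X') (a : ι → X × Y) (b : κ → X × Y) :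
    Prop where
  isTilingPair : IsTilingPair a b
  card_fiber : ∀ c, #{x | h x = c} = p
  split : ∀ c y, ∀ x ∈ linePairs h a b c y, ∀ x' ∈ linePairs h a b c y,
    (a x.1).1 = (a x'.1).1 ∨ (b x.2).1 = (b x'.2).1

namespace IsSplitTiling

variable [Fintype X] {c : X'} {y : Y} {x x' : ι × κ}

theorem symm (S : IsSplitTiling p h a b) : IsSplitTiling p h b a where
  isTilingPair := S.isTilingPair.symm
  card_fiber := S.card_fiber
  split c y _ hx _ hx' :=
    (S.split c y _ (swap_mem_linePairs.2 hx) _ (swap_mem_linePairs.2 hx')).symm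

theorem map_surjective (S : IsSplitTiling p h a b) (hp : p.Prime) : Function.Surjective h :=
  surjective_of_card_fiber_eq hp.pos S.card_fiber

theorem eq_of_fst_eq (S : IsSplitTiling p h a b) (hx : x ∈ linePairs h a b c y)
    (hx' : x' ∈ linePairs h a b c y) (ha : (a x.1).1 = (a x'.1).1)
    (hb : (b x.2).1 = (b x'.2).1) : x = x' :=
  S.isTilingPair.1 <| Prod.ext (congrArg₂ (· + ·) ha hb)
    ((mem_linePairs.1 hx).2.trans (mem_linePairs.1 hx').2.symm)

theorem card_linePairs (S : IsSplitTiling p h a b) (c : X') (y : Y) :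
    #(linePairs h a b c y) = p := by
  rw [← S.card_fiber c]
  refine card_bij (fun x _ ↦ (a x.1).1 + (b x.2).1) (fun x hx ↦ ?_) (fun x hx x' hx' e ↦ ?_)
    fun z hz ↦ ?_
  · simpa using (mem_linePairs.1 hx).1
  · exact S.isTilingPair.1
      (Prod.ext e ((mem_linePairs.1 hx).2.trans (mem_linePairs.1 hx').2.symm))
  · obtain ⟨x, hx⟩ := S.isTilingPair.2 (z, y)
    obtain ⟨hz', hy⟩ : (a x.1).1 + (b x.2).1 = z ∧ _ = y := Prod.ext_iff.1 hx
    exact ⟨x, mem_linePairs.2 ⟨by rw [← map_add, hz', (mem_filter.1 hz).2], hy⟩, hz'⟩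

theorem linePairs_nonempty (S : IsSplitTiling p h a b) (hp : p.Prime) (c : X') (y : Y) :
    (linePairs h a b c y).Nonempty :=
  card_pos.1 (S.card_linePairs c y ▸ hp.pos)

theorem sweptByLeft_or (S : IsSplitTiling p h a b) (c : X') (y : Y) :
    SweptByLeft h a b c y ∨ SweptByLeft h b a c y :=
  (forall_eq_or_forall_eq_of_pairwise (f := fun x : ι × κ ↦ (a x.1).1)
    (g := fun x ↦ (b x.2).1) (s := linePairs h a b c y) (S.split c y)).symm.imp_right
    sweptByLeft_swap_iff.2

theorem sweptByLeft_swap_iff_not (S : IsSplitTiling p h a b) (hp : p.Prime) :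
    SweptByLeft h b a c y ↔ ¬ SweptByLeft h a b c y := by
  refine ⟨fun hb ha ↦ ?_, (S.sweptByLeft_or c y).resolve_left⟩
  obtain ⟨x, hx, x', hx', hne⟩ := one_lt_card.1 (S.card_linePairs c y ▸ hp.one_lt)
  exact hne (S.eq_of_fst_eq hx hx' (sweptByLeft_swap_iff.1 hb x hx x' hx') (ha x hx x' hx'))

theorem map_fst_eq (S : IsSplitTiling p h a b) (hx : x ∈ linePairs h a b c y)
    (hx' : x' ∈ linePairs h a b c y) : h (a x.1).1 = h (a x'.1).1 := by
  rcases S.split c y x hx x' hx' with ha | hb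
  · rw [ha]
  · have := (mem_linePairs.1 hx).1.trans (mem_linePairs.1 hx').1.symm
    exact add_right_cancel (hb ▸ this)

theorem exists_mem_linePairs (S : IsSplitTiling p h a b) (H : SweptByLeft h a b c y)
    (hx : x ∈ linePairs h a b c y) {z : X} (hz : h z = h (a x.1).1) :
    ∃ x' ∈ linePairs h a b c y, (a x'.1).1 = z := by
  obtain ⟨x', hx'⟩ := S.isTilingPair.2 (z + (b x.2).1, y)
  obtain ⟨hz', hy⟩ : (a x'.1).1 + (b x'.2).1 = z + (b x.2).1 ∧ _ = y := Prod.ext_iff.1 hx'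
  have mem : x' ∈ linePairs h a b c y := mem_linePairs.2
    ⟨by rw [← (mem_linePairs.1 hx).1, ← hz, ← map_add, ← map_add, hz'], hy⟩
  refine ⟨x', mem, add_right_cancel (b := (b x.2).1) ?_⟩
  rw [← hz', H x hx x' mem]

theorem existsUnique_mem_linePairs (S : IsSplitTiling p h a b) (hp : p.Prime)
    {σ : X' → X} (hσ : Function.RightInverse σ h) (H : SweptByLeft h a b c y) :
    ∃! x, x ∈ linePairs h a b c y ∧ σ (h (a x.1).1) = (a x.1).1 := by
  obtain ⟨x, hx⟩ := S.linePairs_nonempty hp c y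
  obtain ⟨x', hx', hfst⟩ := S.exists_mem_linePairs H hx (hσ (h (a x.1).1))
  refine ⟨x', ⟨hx', by rw [hfst, hσ]⟩, fun w ⟨hw, hwσ⟩ ↦ ?_⟩
  exact S.eq_of_fst_eq hw hx' (by rw [hfst, ← hwσ, S.map_fst_eq hw hx]) (H w hw x' hx')

theorem dvd_card_filter_linePairs (S : IsSplitTiling p h a b) {P : ι × κ → Prop} [DecidablePred P]
    (hP : ∀ x ∈ linePairs h a b c y, ∀ x' ∈ linePairs h a b c y, P x → P x') :
    p ∣ #{x ∈ linePairs h a b c y | P x} := by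
  by_cases hex : ∃ x ∈ linePairs h a b c y, P x
  · obtain ⟨x, hx, hPx⟩ := hex
    rw [filter_true_of_mem fun x' hx' ↦ hP x hx x' hx' hPx, S.card_linePairs]
  · rw [filter_false_of_mem fun x hx hPx ↦ hex ⟨x, hx, hPx⟩, card_empty]
    exact dvd_zero p

theorem classMask_mul_classMask (S : IsSplitTiling p h a b) (u v : X') :
    classMask p h a u * classMask p h b v = 0 := by
  ext y
  rw [classMask, classMask, mask_mul_mask, coeff_mask, AddMonoidAlgebra.coeff_zero,
    Finsupp.zero_apply, ZMod.natCast_eq_zero_iff]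
  convert S.dvd_card_filter_linePairs (c := u + v) (y := y) (P := fun x ↦ h (a x.1).1 = u)
    fun x hx x' hx' hu ↦ (S.map_fst_eq hx' hx).trans hu using 2
  ext x
  simp only [mem_filter, mem_product, mem_univ, true_and, mem_linePairs]
  grind

theorem sectionMask_mul_sectionMask [DecidableEq X] (S : IsSplitTiling p h a b) (σ : X' → X)
    (c c' : X') :
    sectionMask p h a b σ c * sectionMask p h b a σ c' = 0 := by
  rw [sectionMask_eq_sum, sectionMask_eq_sum, sum_mul_sum]
  refine sum_eq_zero fun i _ ↦ sum_eq_zero fun j _ ↦ ?_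
  rw [mul_mul_mul_comm, S.symm.classMask_mul_classMask, mul_zero]

open scoped Classical in
theorem sectionMask_eq [DecidableEq X] [Fintype Y] (S : IsSplitTiling p h a b) (hp : p.Prime)
    {σ : X' → X} (hσ : Function.RightInverse σ h) (c : X') :
    sectionMask p h a b σ c = mask (ZMod p) {y | SweptByLeft h a b c y} id := by
  ext y
  have filter_eq : ({x ∈ {x : ι × κ | h (a x.1).1 + h (b x.2).1 = c ∧
      σ (h (a x.1).1) = (a x.1).1} | (a x.1).2 + (b x.2).2 = y} : Finset (ι × κ)) =
      {x ∈ linePairs h a b c y | σ (h (a x.1).1) = (a x.1).1} := by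
    simp only [linePairs, filter_filter, and_right_comm]
  rw [sectionMask, coeff_mask, coeff_mask_id, filter_eq]
  simp only [mem_filter_univ]
  split_ifs with H
  · rw [card_eq_one_iff_existsUnique.2, Nat.cast_one]
    simpa only [mem_filter] using S.existsUnique_mem_linePairs hp hσ H
  · rw [← S.sweptByLeft_swap_iff_not hp, sweptByLeft_swap_iff] at H
    rw [ZMod.natCast_eq_zero_iff]
    exact S.dvd_card_filter_linePairs fun x hx x' hx' e ↦ by rwa [← H x hx x' hx']

theorem forall_sweptByLeft_or [Fintype Y] (S : IsSplitTiling p h a b) (hp : p.Prime)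
    (hY : ¬ p ∣ Fintype.card Y) :
    (∀ c y, SweptByLeft h a b c y) ∨ ∀ c y, SweptByLeft h b a c y := by
  classical
  have : Fact p.Prime := ⟨hp⟩
  obtain ⟨σ, hσ⟩ := (S.map_surjective hp).hasRightInverse
  have compl_eq (c : X') : ({y | SweptByLeft h a b c y} : Finset Y)ᶜ =
      ({y | SweptByLeft h b a c y} : Finset Y) := by
    ext y; simp [S.sweptByLeft_swap_iff_not hp]
  rcases forall_eq_empty_or_forall_eq_univ hY
    (F := fun c ↦ ({y | SweptByLeft h a b c y} : Finset Y)) (fun c c' ↦ by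
      rw [compl_eq, ← S.sectionMask_eq hp hσ, ← S.symm.sectionMask_eq hp hσ,
        S.sectionMask_mul_sectionMask]) with H | H
  · refine .inr fun c y ↦ (S.sweptByLeft_swap_iff_not hp).2 ?_
    simpa using filter_eq_empty_iff.1 (H c) (mem_univ y)
  · exact .inl fun c y ↦ by simpa using eq_univ_iff_forall.1 (H c) y

/-- Keeping only the part of `a` over a section of `h` selects one point on each line. -/
theorem reduce (S : IsSplitTiling p h a b) (hp : p.Prime) {σ : X' → X}
    (hσ : Function.RightInverse σ h) (H : ∀ c y, SweptByLeft h a b c y) :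
    IsTilingPair (fun i : {i // σ (h (a i).1) = (a i).1} ↦ h.prodMap (.id Y) (a i))
      (fun j ↦ h.prodMap (.id Y) (b j)) := by
  refine (Function.bijective_iff_existsUnique _).2 fun (c, y) ↦ ?_
  obtain ⟨x, ⟨hx, hxσ⟩, unique⟩ := S.existsUnique_mem_linePairs hp hσ (H c y)
  refine ⟨(⟨x.1, hxσ⟩, x.2), Prod.ext_iff.2 (mem_linePairs.1 hx), fun w hw ↦ ?_⟩
  have eq_x : (w.1.1, w.2) = x :=
    unique _ ⟨mem_linePairs.2 (Prod.ext_iff.1 hw), w.1.2⟩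
  exact Prod.ext (Subtype.ext (congrArg Prod.fst eq_x :)) (congrArg Prod.snd eq_x :)

end IsSplitTiling

end SplitTilings

section Sections

variable {X X' ι : Type*}

section Maps

variable {E : Type*} [Fintype X'] {h : X → X'} {f : X → E} {C : E}

/-- Two sections of `h` differing only over `h x` give sums differing only in one summand. -/
theorem eq_of_forall_sum_section_eq [AddCancelCommMonoid E] (hh : Function.Surjective h)
    (hf : ∀ σ, Function.RightInverse σ h → ∑ c, f (σ c) = C) {x x' : X} (hx : h x = h x') :
    f x = f x' := by
  classical
  obtain ⟨σ, hσ⟩ := hh.hasRightInverse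
  have sum_eq (z : X) (hz : h z = h x') : f z + ∑ c ∈ {h x'}ᶜ, f (σ c) = C := by
    have update_section : Function.RightInverse (Function.update σ (h x') z) h := by
      intro c
      by_cases hc : c = h x'
      · rw [hc, Function.update_self, hz]
      · rw [Function.update_of_ne hc, hσ]
    rw [← hf _ update_section, Fintype.sum_eq_add_sum_compl (h x'), Function.update_self]
    exact congrArg _ (sum_congr rfl fun c hc ↦ by
      rw [Function.update_of_ne (by simpa using hc)])
  exact add_right_cancel ((sum_eq x hx).trans (sum_eq x' rfl).symm)

theorem sum_eq_nsmul_of_forall_sum_section_eq [Fintype X] [DecidableEq X'] {p : ℕ}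
    [AddCancelCommMonoid E] (hh : Function.Surjective h) (hp : ∀ c, #{x | h x = c} = p)
    (hf : ∀ σ, Function.RightInverse σ h → ∑ c, f (σ c) = C) : ∑ x, f x = p • C := by
  obtain ⟨σ, hσ⟩ := hh.hasRightInverse
  rw [← hf σ hσ, ← sum_nsmul, ← sum_fiberwise univ h f]
  refine sum_congr rfl fun c _ ↦ ?_
  rw [← hp c]
  exact sum_eq_card_nsmul fun x hx ↦
    eq_of_forall_sum_section_eq hh hf ((mem_filter.1 hx).2.trans (hσ c).symm)

theorem sum_filter_section [AddCommMonoid E] [DecidableEq X] [Fintype ι] {σ : X' → X}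
    (hσ : Function.RightInverse σ h) (v : ι → X) (F : ι → E) :
    ∑ i with σ (h (v i)) = v i, F i = ∑ c, ∑ i with v i = σ c, F i := by
  classical
  rw [← sum_fiberwise _ fun i ↦ h (v i)]
  refine sum_congr rfl fun c _ ↦ sum_congr ?_ fun _ _ ↦ rfl
  ext i
  simp only [mem_filter, mem_univ, true_and]
  exact ⟨fun ⟨h₁, h₂⟩ ↦ h₁ ▸ h₂ ▸ rfl, fun hi ↦ by rw [hi, hσ]; exact ⟨rfl, rfl⟩⟩

end Maps

theorem sum_mul_addChar_eq_zero {R : Type*} [CommRing R] [IsDomain R] [AddGroup X] [Fintype X]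
    {f : X → R} {k : X} (hf : ∀ x, f (x + k) = f x) {χ : AddChar X R} (hχ : χ k ≠ 1) :
    ∑ x, f x * χ x = 0 := by
  have shift : ∑ x, f x * χ x = (∑ x, f x * χ x) * χ k := by
    rw [sum_mul, ← Equiv.sum_comp (Equiv.addRight k)]
    refine sum_congr rfl fun x _ ↦ ?_
    rw [Equiv.coe_addRight, hf, AddChar.map_add_eq_mul, mul_assoc]
  by_contra hne
  exact hχ ((mul_eq_left₀ hne).1 shift.symm)

theorem sum_eq_nsmul_of_forall_sum_filter_eq {E : Type*} [AddCancelCommMonoid E] [Fintype X]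
    [DecidableEq X] [DecidableEq X'] [Fintype ι] {h : X → X'} {C : E} {p : ℕ}
    (hh : Function.Surjective h) (hp : ∀ c, #{x | h x = c} = p) (v : ι → X) {F : ι → E}
    (hF : ∀ σ, Function.RightInverse σ h → ∑ i with σ (h (v i)) = v i, F i = C) :
    ∑ i, F i = p • C := by
  have := Finite.of_surjective h hh
  let := Fintype.ofFinite X'
  rw [← sum_fiberwise univ v]
  exact sum_eq_nsmul_of_forall_sum_section_eq hh hp fun σ hσ ↦
    (sum_filter_section hσ v F).symm.trans (hF σ hσ)

theorem sum_mul_addChar_eq_zero_of_forall_sum_filter_eq {R : Type*} [CommRing R] [IsDomain R]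
    [AddCommGroup X] [AddCommGroup X'] [Finite X] [DecidableEq X] [Fintype ι] {h : X →+ X'}
    (hh : Function.Surjective h) (v : ι → X) {F : ι → R} {C : R}
    (hF : ∀ σ, Function.RightInverse σ h → ∑ i with σ (h (v i)) = v i, F i = C)
    {k : X} (hk : h k = 0) {χ : AddChar X R} (hχ : χ k ≠ 1) : ∑ i, F i * χ (v i) = 0 := by
  have := Finite.of_surjective h hh
  let := Fintype.ofFinite X
  let := Fintype.ofFinite X'
  have fiber_sum_add (x : X) : ∑ i with v i = x + k, F i = ∑ i with v i = x, F i :=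
    eq_of_forall_sum_section_eq (f := fun x ↦ ∑ i with v i = x, F i) hh
      (fun σ hσ ↦ (sum_filter_section hσ v F).symm.trans (hF σ hσ))
      (by rw [map_add, hk, add_zero])
  rw [← sum_fiberwise univ v, ← sum_mul_addChar_eq_zero (f := fun x ↦ ∑ i with v i = x, F i)
    fiber_sum_add hχ]
  refine sum_congr rfl fun x _ ↦ ?_
  rw [sum_mul]
  exact sum_congr rfl fun i hi ↦ by rw [(mem_filter.1 hi).2]

end Sections

section UniformSweep

variable {X X' Y ι κ : Type*} [AddCommGroup X] [AddCommGroup X'] [AddCommGroup Y]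
  [Fintype X] [Fintype ι] [Fintype κ] {p : ℕ} {h : X →+ X'} {a : ι → X × Y} {b : κ → X × Y}

theorem IsTilingPair.mask_fst_mul_mask_fst [Fintype Y] {R : Type*} [Semiring R]
    (T : IsTilingPair a b) : mask R univ (fun i ↦ (a i).1) * mask R univ (fun j ↦ (b j).1) =
      (Fintype.card Y : R) • mask R univ (id : X → X) := by
  rw [_root_.mask_mul_mask, univ_product_univ]
  refine (Function.Bijective.sum_comp T fun g ↦ AddMonoidAlgebra.single g.1 (1 : R)).trans ?_
  simp [Fintype.sum_prod_type, mask, Nat.cast_smul_eq_nsmul, smul_sum]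

variable [DecidableEq X'] [DecidableEq Y]

namespace IsSplitTiling

theorem sum_card_section [DecidableEq X] [Fintype X'] [Fintype Y] (S : IsSplitTiling p h a b)
    (hp : p.Prime) (H : ∀ c y, SweptByLeft h a b c y) (σ : X' → X)
    (hσ : Function.RightInverse σ h) :
    ∑ c, #{i | (a i).1 = σ c} = Fintype.card (X' × Y) / Fintype.card κ := by
  have := S.isTilingPair.symm.nonempty_left
  rw [← (S.reduce hp hσ H).card_mul_card, Nat.mul_div_cancel _ Fintype.card_pos,
    Fintype.card_subtype, card_eq_sum_ones, sum_filter_section hσ]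
  simp only [card_eq_sum_ones]

theorem dvd_card_of_forall_sweptByLeft [Finite Y] (S : IsSplitTiling p h a b) (hp : p.Prime)
    (H : ∀ c y, SweptByLeft h a b c y) (c : X') : p ∣ #{i | h (a i).1 = c} := by
  classical
  have := Finite.of_surjective h (S.map_surjective hp)
  let := Fintype.ofFinite X'
  let := Fintype.ofFinite Y
  obtain ⟨σ, hσ⟩ := (S.map_surjective hp).hasRightInverse
  have card_fiber_fst (x : X) (hx : h x = c) : #{i | (a i).1 = x} = #{i | (a i).1 = σ c} :=
    eq_of_forall_sum_section_eq (f := fun x ↦ #{i | (a i).1 = x}) (S.map_surjective hp)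
      (S.sum_card_section hp H) (hx.trans (hσ c).symm)
  have card_eq_sum : #{i | h (a i).1 = c} = ∑ x with h x = c, #{i | (a i).1 = x} := by
    rw [card_eq_sum_card_fiberwise (f := fun i ↦ (a i).1) (t := {x | h x = c})
      fun i hi ↦ by simpa using hi]
    refine sum_congr rfl fun x hx ↦ congrArg card ?_
    grind
  rw [card_eq_sum, sum_congr rfl fun x hx ↦ card_fiber_fst x (mem_filter.1 hx).2, sum_const,
    S.card_fiber, smul_eq_mul]
  exact dvd_mul_right _ _

theorem not_forall_dvd_card_of_forall_sweptByLeft [Fintype Y] (S : IsSplitTiling p h a b)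
    (hp : p.Prime) (hY : ¬ p ∣ Fintype.card Y) (H : ∀ c y, SweptByLeft h a b c y) :
    ¬ ∀ c, p ∣ #{j | h (b j).1 = c} := by
  classical
  intro hdvd
  have := Finite.of_surjective h (S.map_surjective hp)
  let := Fintype.ofFinite X'
  obtain ⟨σ, hσ⟩ := (S.map_surjective hp).hasRightInverse
  have mask_eq_zero : mask (ZMod p) univ (fun j ↦ (h.prodMap (.id Y) (b j)).1) = 0 := by
    ext c
    rw [coeff_mask]
    exact (ZMod.natCast_eq_zero_iff _ _).2 (hdvd c)
  have mask_mul := (S.reduce hp hσ H).mask_fst_mul_mask_fst (R := ZMod p)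
  rw [mask_eq_zero, mul_zero] at mask_mul
  refine hY ((ZMod.natCast_eq_zero_iff _ _).1 ?_)
  simpa [coeff_mask_id, AddMonoidAlgebra.coeff_smul_apply] using
    (congrArg (fun m ↦ m.coeff 0) mask_mul).symm

theorem forall_sweptByLeft_swap [Fintype Y] (S : IsSplitTiling p h a b) (hp : p.Prime)
    (hY : ¬ p ∣ Fintype.card Y) (hb : ∀ c, p ∣ #{j | h (b j).1 = c}) :
    ∀ c y, SweptByLeft h b a c y :=
  (S.forall_sweptByLeft_or hp hY).resolve_left fun H ↦
    S.not_forall_dvd_card_of_forall_sweptByLeft hp hY H hb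

theorem forall_sweptByLeft [Fintype Y] (S : IsSplitTiling p h a b) (hp : p.Prime)
    (hY : ¬ p ∣ Fintype.card Y) (hb : ¬ ∀ c, p ∣ #{j | h (b j).1 = c}) :
    ∀ c y, SweptByLeft h a b c y :=
  (S.forall_sweptByLeft_or hp hY).resolve_right fun H ↦
    hb (S.symm.dvd_card_of_forall_sweptByLeft hp H)

end IsSplitTiling

end UniformSweep

section Spectra

/-- `L` is a spectrum of the finite family `a`: as many characters of `G` as there are indices,
pairwise orthogonal on `a`. -/
def IsSpectrum {G ι : Type*} [AddCommGroup G] [Fintype ι] (a : ι → G)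
    (L : Finset (AddChar G ℂ)) : Prop :=
  #L = Fintype.card ι ∧ ∀ ψ ∈ L, ∀ ψ' ∈ L, ψ ≠ ψ' → ∑ i, (ψ / ψ') (a i) = 0

/-- Every family `b` has a universal spectrum: a set of characters that is a spectrum of every `a`
tiling `G` with `b`. This uniformity makes induction on `G` possible, because lifting a spectrum
involves all the reductions of `a` at once. -/
def UniversallySpectral (G : Type) [AddCommGroup G] : Prop :=
  ∀ (κ : Type) [Fintype κ] (b : κ → G), ∃ L : Finset (AddChar G ℂ),
    ∀ (ι : Type) [Fintype ι] (a : ι → G), IsTilingPair a b → IsSpectrum a L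

theorem IsSpectrum.map_compAddMonoidHom {G H ι : Type*} [AddCommGroup G] [AddCommGroup H]
    [Fintype ι] {a : ι → G} {π : G →+ H} {L : Finset (AddChar H ℂ)}
    (hL : IsSpectrum (π ∘ a) L) (hπ : Function.Surjective π) :
    IsSpectrum a (L.map ⟨_, AddChar.compAddMonoidHom_injective_left π hπ⟩) := by
  refine ⟨(card_map _).trans hL.1, ?_⟩
  simp only [mem_map, Function.Embedding.coeFn_mk]
  rintro _ ⟨ψ, hψ, rfl⟩ _ ⟨ψ', hψ', rfl⟩ hne
  simpa only [AddChar.div_apply', AddChar.compAddMonoidHom_apply, Function.comp_apply] using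
    hL.2 ψ hψ ψ' hψ' fun e ↦ hne (e ▸ rfl)

theorem universallySpectral_of_subsingleton (G : Type) [AddCommGroup G] [Subsingleton G] :
    UniversallySpectral G := by
  have : Fintype G := .ofSubsingleton 0
  refine fun κ _ b ↦ ⟨{1}, fun ι _ a T ↦ ⟨?_, fun ψ hψ ψ' hψ' hne ↦ ?_⟩⟩
  · have card_G : Fintype.card G = 1 := Fintype.card_eq_one_iff.2 ⟨0, fun _ ↦ Subsingleton.elim _ _⟩
    exact (Nat.eq_one_of_mul_eq_one_right (T.card_mul_card.trans card_G)).symm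
  · exact absurd ((mem_singleton.1 hψ).trans (mem_singleton.1 hψ').symm) hne

theorem UniversallySpectral.of_addEquiv {G H : Type} [AddCommGroup G] [AddCommGroup H]
    (hH : UniversallySpectral H) (e : G ≃+ H) : UniversallySpectral G := fun κ _ b ↦
  let ⟨_, hL⟩ := hH κ (e ∘ b)
  ⟨_, fun ι _ a T ↦ (hL ι (e ∘ a) (T.map e)).map_compAddMonoidHom (π := e.toAddMonoidHom)
    e.surjective⟩

end Spectra

section Lifting

variable {X X' Y ι κ : Type*} [AddCommGroup X] [AddCommGroup X'] [AddCommGroup Y]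
  {p : ℕ} {h : X →+ X'}

open scoped Classical in
/-- The characters of `X × Y` obtained from those in `L` by pulling back along `h` and multiplying
with the first `p` powers of the character `χ` of `X`. -/
noncomputable def liftedSpectrum (p : ℕ) (h : X →+ X') (χ : AddChar X ℂ)
    (L : Finset (AddChar (X' × Y) ℂ)) : Finset (AddChar (X × Y) ℂ) :=
  (L ×ˢ range p).image fun x ↦ x.1.compAddMonoidHom (h.prodMap (.id Y)) *
    (χ ^ x.2).compAddMonoidHom (.fst X Y)

variable {χ : AddChar X ℂ} {k : X}

theorem card_liftedSpectrum (hh : Function.Surjective h) (hk : h k = 0) (hχ : orderOf (χ k) = p)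
    (L : Finset (AddChar (X' × Y) ℂ)) : #(liftedSpectrum p h χ L) = #L * p := by
  rw [liftedSpectrum, card_image_of_injOn, card_product, card_range]
  rintro ⟨ψ, j⟩ hj ⟨ψ', j'⟩ hj' e
  simp only [coe_product, Set.mem_prod, coe_range, Set.mem_Iio] at hj hj'
  obtain rfl : j = j' := by
    refine pow_injOn_Iio_orderOf (x := χ k) (hχ ▸ hj.2) (hχ ▸ hj'.2) ?_
    simpa [AddChar.pow_apply, hk, ← Prod.zero_eq_mk] using DFunLike.congr_fun e (k, 0)
  obtain rfl := AddChar.compAddMonoidHom_injective_left (h.prodMap (.id Y))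
    (hh.prodMap Function.surjective_id) (mul_right_cancel e)
  rfl

theorem isSpectrum_liftedSpectrum [Fintype X] [DecidableEq X] [DecidableEq X'] [Fintype ι]
    (hh : Function.Surjective h) (hp : ∀ c, #{x | h x = c} = p)
    (hk : h k = 0) (hχ : orderOf (χ k) = p) {a : ι → X × Y} {L : Finset (AddChar (X' × Y) ℂ)}
    (hL : ∀ σ, Function.RightInverse σ h →
      IsSpectrum (fun i : {i // σ (h (a i).1) = (a i).1} ↦ h.prodMap (.id Y) (a i)) L) :
    IsSpectrum a (liftedSpectrum p h χ L) := by
  have sum_section (ψ) (hψ : ψ ∈ L) (ψ') (hψ' : ψ' ∈ L) (σ) (hσ : Function.RightInverse σ h) :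
      ∑ i with σ (h (a i).1) = (a i).1, (ψ / ψ') (h.prodMap (.id Y) (a i)) =
        if ψ = ψ' then (#L : ℂ) else 0 := by
    split_ifs with e
    · simp [e, (hL σ hσ).1, Fintype.card_subtype]
    · rw [← sum_subtype_eq_sum_filter, subtype_univ]
      exact (hL σ hσ).2 ψ hψ ψ' hψ' e
  refine ⟨?_, ?_⟩
  · rw [card_liftedSpectrum hh hk hχ, mul_comm, ← smul_eq_mul, Fintype.card, card_eq_sum_ones univ]
    refine (sum_eq_nsmul_of_forall_sum_filter_eq hh hp (fun i ↦ (a i).1) fun σ hσ ↦ ?_).symm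
    rw [(hL σ hσ).1, Fintype.card_subtype, card_eq_sum_ones]
  simp only [liftedSpectrum, mem_image, mem_product, mem_range, Prod.exists]
  rintro _ ⟨ψ, j, ⟨hψ, hj⟩, rfl⟩ _ ⟨ψ', j', ⟨hψ', hj'⟩, rfl⟩ hne
  simp only [mul_div_mul_comm, AddChar.mul_apply, AddChar.div_apply',
    AddChar.compAddMonoidHom_apply]
  by_cases hjj : j = j'
  · subst hjj
    have hψψ : ψ ≠ ψ' := fun e ↦ hne (e ▸ rfl)
    simpa only [AddChar.div_apply', div_self (AddChar.val_isUnit _ _).ne_zero, mul_one, smul_zero]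
      using sum_eq_nsmul_of_forall_sum_filter_eq hh hp (fun i ↦ (a i).1) fun σ hσ ↦
        (sum_section ψ hψ ψ' hψ' σ hσ).trans (if_neg hψψ)
  · have hχj : (χ ^ j / χ ^ j') k ≠ 1 := fun e ↦ hjj <| by
      rw [AddChar.div_apply', div_eq_one_iff_eq (AddChar.val_isUnit _ _).ne_zero, AddChar.pow_apply,
        AddChar.pow_apply] at e
      exact pow_injOn_Iio_orderOf (x := χ k) (hχ ▸ hj) (hχ ▸ hj') e
    simpa only [AddChar.div_apply', AddMonoidHom.coe_fst] using
      sum_mul_addChar_eq_zero_of_forall_sum_filter_eq hh (fun i ↦ (a i).1)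
        (sum_section ψ hψ ψ' hψ') hk hχj

theorem exists_orderOf_addChar_eq [Finite X] (hp : p.Prime) (hh : Nat.card h.ker = p) :
    ∃ k, h k = 0 ∧ ∃ χ : AddChar X ℂ, orderOf (χ k) = p := by
  have : Fact p.Prime := ⟨hp⟩
  have : Nontrivial h.ker := Finite.one_lt_card_iff_nontrivial.1 (hh ▸ hp.one_lt)
  obtain ⟨k, hk⟩ := exists_ne (0 : h.ker)
  obtain ⟨χ, hχ⟩ := AddChar.exists_apply_ne_zero.2 fun e ↦ hk (Subtype.ext e)
  refine ⟨k, k.2, χ, orderOf_eq_prime ?_ hχ⟩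
  have nsmul_eq_zero : p • k = 0 := hh ▸ card_nsmul_eq_zero'
  rw [← AddChar.map_nsmul_eq_pow, ← AddSubgroup.coe_nsmul, nsmul_eq_zero]
  exact AddChar.map_zero_eq_one χ

end Lifting

section ProductStep

theorem IsTilingPair.isSplitTiling {X X' Y ι κ : Type*} [AddCommGroup X] [AddCommGroup X']
    [AddCommGroup Y] [Fintype X] [Fintype Y] [DecidableEq X'] [DecidableEq Y] [Fintype ι]
    [Fintype κ] {p : ℕ} {h : X →+ X'} (hcard : ∀ c, #{x | h x = c} = p)
    (hXY : (Fintype.card X).Coprime (Fintype.card Y))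
    (hassoc : ∀ u v : X, u ≠ 0 → v ≠ 0 → h (u + v) = 0 →
      ∃ r : ℕ, r.Coprime (Fintype.card X) ∧ u + r • v = 0)
    {a : ι → X × Y} {b : κ → X × Y} (T : IsTilingPair a b) : IsSplitTiling p h a b := by
  refine ⟨T, hcard, fun c y x hx x' hx' ↦ ?_⟩
  by_contra! ⟨hu, hv⟩
  obtain ⟨hc, hy⟩ := mem_linePairs.1 hx
  obtain ⟨hc', hy'⟩ := mem_linePairs.1 hx'
  obtain ⟨r, hr, hruv⟩ := hassoc _ _ (sub_ne_zero.2 hu) (sub_ne_zero.2 hv) <| by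
    rw [sub_add_sub_comm, map_sub, map_add, map_add, hc, hc', sub_self]
  obtain ⟨s, hsX, hsY⟩ : ∃ s, s ≡ r [MOD Fintype.card X] ∧ s ≡ 1 [MOD Fintype.card Y] :=
    ⟨_, (Nat.chineseRemainder hXY r 1).2⟩
  have hs : s.Coprime (Fintype.card (X × Y)) := by
    rw [Fintype.card_prod]
    exact .mul_right (hsX.gcd_eq.trans hr) (hsY.gcd_eq.trans (Nat.gcd_one_left _))
  have nsmul_fst (z : X) : s • z = r • z := by
    rw [← mod_card_nsmul, hsX, mod_card_nsmul]
  have nsmul_snd (y : Y) : s • y = y := by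
    rw [← mod_card_nsmul, hsY, mod_card_nsmul, one_nsmul]
  have sum_eq : a x.1 + s • b x.2 = a x'.1 + s • b x'.2 := by
    refine Prod.ext ?_ ?_
    · rw [smul_sub, sub_add_sub_comm] at hruv
      simpa only [Prod.fst_add, Prod.smul_fst, nsmul_fst] using sub_eq_zero.1 hruv
    · simpa only [Prod.snd_add, Prod.smul_snd, nsmul_snd] using hy.trans hy'.symm
  exact hu (by rw [(T.nsmul_coprime hs).1 sum_eq])

theorem UniversallySpectral.prod {X X' Y : Type} [AddCommGroup X] [AddCommGroup X']
    [AddCommGroup Y] [Fintype X] [Fintype Y] [DecidableEq X']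
    (hU : UniversallySpectral (X' × Y)) {p : ℕ} (hp : p.Prime) {h : X →+ X'}
    (hcard : ∀ c, #{x | h x = c} = p) (hX : p ∣ Fintype.card X)
    (hXY : (Fintype.card X).Coprime (Fintype.card Y))
    (hassoc : ∀ u v : X, u ≠ 0 → v ≠ 0 → h (u + v) = 0 →
      ∃ r : ℕ, r.Coprime (Fintype.card X) ∧ u + r • v = 0) : UniversallySpectral (X × Y) := by
  classical
  intro κ _ b
  have hY : ¬ p ∣ Fintype.card Y := (Nat.Prime.coprime_iff_not_dvd hp).1 (hXY.coprime_dvd_left hX)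
  have hh : Function.Surjective h := surjective_of_card_fiber_eq hp.pos hcard
  by_cases hb : ∀ c, p ∣ #{j | h (b j).1 = c}
  · obtain ⟨σ, hσ⟩ := hh.hasRightInverse
    obtain ⟨L, hL⟩ := hU _ fun j : {j // σ (h (b j).1) = (b j).1} ↦ h.prodMap (.id Y) (b j)
    exact ⟨_, fun ι _ a T ↦
      have S := T.isSplitTiling hcard hXY hassoc
      (hL ι _ (S.symm.reduce hp hσ (S.forall_sweptByLeft_swap hp hY hb)).symm)
        |>.map_compAddMonoidHom (hh.prodMap Function.surjective_id)⟩
  · obtain ⟨L, hL⟩ := hU κ fun j ↦ h.prodMap (.id Y) (b j)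
    obtain ⟨k, hk, χ, hχ⟩ := exists_orderOf_addChar_eq (h := h) hp (by
      rw [← hcard 0, ← Fintype.card_subtype, ← Nat.card_eq_fintype_card]; rfl)
    refine ⟨liftedSpectrum p h χ L, fun ι _ a T ↦ ?_⟩
    have S := T.isSplitTiling hcard hXY hassoc
    exact isSpectrum_liftedSpectrum hh hcard hk hχ fun σ hσ ↦
      hL _ _ (S.reduce hp hσ (S.forall_sweptByLeft hp hY hb))

end ProductStep

section Cyclic

theorem card_fiber_eq_of_card_eq_mul {X X' : Type*} [AddGroup X] [AddGroup X'] [Fintype X]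
    [Fintype X'] [DecidableEq X'] {h : X →+ X'} (hh : Function.Surjective h) {p : ℕ}
    (hcard : Fintype.card X = Fintype.card X' * p) (c : X') : #{x | h x = c} = p := by
  have card_eq (c' : X') : #{x | h x = c'} = #{x | h x = c} :=
    AddMonoidHom.card_fiber_eq_of_mem_range h (hh c') (hh c)
  have sum_card : Fintype.card X = ∑ c', #{x | h x = c'} :=
    card_eq_sum_card_fiberwise fun x _ ↦ by simp
  rw [hcard, Fintype.sum_congr _ _ card_eq, sum_const, card_univ, smul_eq_mul] at sum_card
  exact (Nat.eq_of_mul_eq_mul_left Fintype.card_pos sum_card).symm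

variable {p : ℕ}

theorem isUnit_or_isNilpotent_zmod_prime_pow (hp : p.Prime) {n : ℕ} (x : ZMod (p ^ n)) :
    IsUnit x ∨ IsNilpotent x := by
  have : NeZero p := ⟨hp.ne_zero⟩
  rw [← ZMod.natCast_zmod_val x, ZMod.isUnit_iff_coprime]
  by_cases hx : p ∣ x.val
  · exact .inr ⟨n, by exact_mod_cast (ZMod.natCast_eq_zero_iff _ _).2 (pow_dvd_pow_of_dvd hx n)⟩
  · exact .inl (((Nat.Prime.coprime_iff_not_dvd hp).2 hx).symm.pow_right n)

theorem dvd_prime_pow_of_ne_zero (hp : p.Prime) {n : ℕ} {x : ZMod (p ^ (n + 1))} (hx : x ≠ 0) :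
    x ∣ (p : ZMod (p ^ (n + 1))) ^ n := by
  obtain ⟨d, hd, w, hw, rfl⟩ := ZMod.eq_unit_mul_divisor x
  obtain ⟨i, hi, rfl⟩ := (Nat.dvd_prime_pow hp).1 hd
  have hin : i ≠ n + 1 := by
    rintro rfl
    exact hx (by rw [ZMod.natCast_self, mul_zero])
  rw [hw.mul_left_dvd, Nat.cast_pow]
  exact pow_dvd_pow _ (by omega)

theorem natCast_dvd_of_castHom_eq_zero {d N : ℕ} [NeZero N] (hd : d ∣ N) {x : ZMod N}
    (hx : ZMod.castHom hd (ZMod d) x = 0) : (d : ZMod N) ∣ x := by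
  rw [← ZMod.natCast_zmod_val x] at hx ⊢
  rw [map_natCast, ZMod.natCast_eq_zero_iff] at hx
  exact Nat.cast_dvd_cast hx

theorem exists_coprime_add_nsmul_eq_zero (hp : p.Prime) {n : ℕ} {u v : ZMod (p ^ (n + 1))}
    (hu : u ≠ 0) (hv : v ≠ 0)
    (huv : ZMod.castHom (pow_dvd_pow p n.le_succ) (ZMod (p ^ n)) (u + v) = 0) :
    ∃ r : ℕ, r.Coprime (p ^ (n + 1)) ∧ u + r • v = 0 := by
  have : NeZero p := ⟨hp.ne_zero⟩
  have pow_dvd : (p : ZMod (p ^ (n + 1))) ^ n ∣ u + v := by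
    exact_mod_cast natCast_dvd_of_castHom_eq_zero _ huv
  obtain ⟨s, hs⟩ : v ∣ u :=
    (dvd_add_left dvd_rfl).1 ((dvd_prime_pow_of_ne_zero hp hv).trans pow_dvd)
  obtain ⟨t, ht⟩ : u ∣ v :=
    (dvd_add_right dvd_rfl).1 ((dvd_prime_pow_of_ne_zero hp hu).trans pow_dvd)
  have isUnit_s : IsUnit s := by
    refine (isUnit_or_isNilpotent_zmod_prime_pow hp s).resolve_right fun hnil ↦ hv ?_
    have isUnit_sub : IsUnit (1 - s * t) := (Commute.all s t).isNilpotent_mul_right hnil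
      |>.isUnit_one_sub
    refine isUnit_sub.mul_left_eq_zero.1 ?_
    rw [mul_sub, mul_one, ← mul_assoc, ← hs, ← ht, sub_self]
  refine ⟨(-s).val, (ZMod.isUnit_iff_coprime _ _).1 ?_, ?_⟩
  · rw [ZMod.natCast_zmod_val]
    exact isUnit_s.neg
  · rw [nsmul_eq_mul, ZMod.natCast_zmod_val, hs]
    ring

theorem universallySpectral_zmod_prime_pow_succ_mul (hp : p.Prime) {n m : ℕ} [NeZero m]
    (hm : ¬ p ∣ m) (hU : UniversallySpectral (ZMod (p ^ n * m))) :
    UniversallySpectral (ZMod (p ^ (n + 1) * m)) := by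
  have : NeZero p := ⟨hp.ne_zero⟩
  have hdvd : p ^ n ∣ p ^ (n + 1) := pow_dvd_pow p n.le_succ
  have coprime_pow (k : ℕ) : (p ^ k).Coprime m :=
    ((Nat.Prime.coprime_iff_not_dvd hp).2 hm).pow_left k
  refine UniversallySpectral.of_addEquiv ?_
    (ZMod.chineseRemainder (coprime_pow (n + 1))).toAddEquiv
  refine (hU.of_addEquiv (ZMod.chineseRemainder (coprime_pow n)).symm.toAddEquiv).prod hp
    (h := (ZMod.castHom hdvd (ZMod (p ^ n))).toAddMonoidHom)
    (card_fiber_eq_of_card_eq_mul (ZMod.castHom_surjective hdvd) ?_) ?_ ?_ fun u v hu hv huv ↦ ?_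
  · simp only [ZMod.card, pow_succ]
  · simp only [ZMod.card, dvd_pow_self p n.succ_ne_zero]
  · simpa only [ZMod.card] using coprime_pow (n + 1)
  · simpa only [ZMod.card] using exists_coprime_add_nsmul_eq_zero hp hu hv huv

theorem universallySpectral_zmod {M : ℕ} (hM : M ≠ 0) : UniversallySpectral (ZMod M) := by
  induction M using induction_on_primes with
  | zero => exact absurd rfl hM
  | one => exact universallySpectral_of_subsingleton _
  | prime_mul p a hp ih =>
    have ha : a ≠ 0 := right_ne_zero_of_mul hM
    obtain ⟨n, m, hm, rfl⟩ := Nat.exists_eq_pow_mul_and_not_dvd ha p hp.ne_one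
    have : NeZero m := ⟨right_ne_zero_of_mul ha⟩
    rw [← mul_assoc, ← pow_succ']
    exact universallySpectral_zmod_prime_pow_succ_mul hp hm (ih ha)

variable {M : ℕ} {A B : Finset (ZMod M)}

theorem IsTiling.isTilingPair (T : IsTiling M (A : Set (ZMod M)) (B : Set (ZMod M))) :
    IsTilingPair ((↑) : A → ZMod M) ((↑) : B → ZMod M) := by
  refine (Function.bijective_iff_existsUnique _).2 fun z ↦ ?_
  obtain ⟨⟨a, b⟩, ⟨ha, hb, hab⟩, unique⟩ := T z
  refine ⟨(⟨a, ha⟩, ⟨b, hb⟩), hab, fun x hx ↦ ?_⟩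
  have eq_ab := unique (x.1, x.2) ⟨x.1.2, x.2.2, hx⟩
  exact Prod.ext (Subtype.ext (congrArg Prod.fst eq_ab)) (Subtype.ext (congrArg Prod.snd eq_ab))

theorem IsSpectrum.isSpectral [NeZero M] {L : Finset (AddChar (ZMod M) ℂ)}
    (hL : IsSpectrum ((↑) : A → ZMod M) L) : IsSpectral M A := by
  refine ⟨L.map AddChar.zmodAddEquiv.symm.toEmbedding, ?_, ?_⟩
  · rw [card_map, hL.1, Fintype.card_coe]
  intro l hl l' hl' hne
  rw [mem_map_equiv] at hl hl'
  rw [← hL.2 _ hl _ hl' (AddChar.zmodAddEquiv.injective.ne hne), ← sum_coe_sort A]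
  refine sum_congr rfl fun a _ ↦ ?_
  rw [← ZMod.toCircle_apply]
  exact DFunLike.congr_fun (map_sub AddChar.zmodAddEquiv l l') (a : ZMod M)

end Cyclic

theorem statement1_general (M : ℕ) [NeZero M] (A : Finset (ZMod M))
    (htile : ∃ B : Finset (ZMod M), IsTiling M (A : Set (ZMod M)) (B : Set (ZMod M))) :
    IsSpectral M A := by
  obtain ⟨B, T⟩ := htile
  obtain ⟨L, hL⟩ := universallySpectral_zmod (NeZero.ne M) B (↑)
  exact (hL A (↑) T.isTilingPair).isSpectral

/-- If `M = p_i² p_j² p_k²` with `p_i, p_j, p_k` distinct odd primes and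
`A ⊆ ℤ_M` tiles `ℤ_M` by translations, then `A` is spectral in `ℤ_M`. -/
theorem statement1
    (pi pj pk : ℕ) (hpi : pi.Prime) (hpj : pj.Prime) (hpk : pk.Prime)
    (hoi : Odd pi) (hoj : Odd pj) (hok : Odd pk)
    (hij : pi ≠ pj) (hik : pi ≠ pk) (hjk : pj ≠ pk)
    (M : ℕ) (hM : M = pi ^ 2 * pj ^ 2 * pk ^ 2)
    (A : Finset (ZMod M))
    (htile : ∃ B : Finset (ZMod M), IsTiling M (A : Set (ZMod M)) (B : Set (ZMod M))) :
    IsSpectral M A := by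
  have : NeZero M := ⟨by simp [hM, hpi.ne_zero, hpj.ne_zero, hpk.ne_zero]⟩
  exact statement1_general M A htile
end
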